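/- Let R be a commutative Noetherian ring and 𝔞 a proper ideal of R with dim R/𝔞 = d ≥ 0. Then an 𝔞-torsion R-module M is 𝔞-cofinite if and only if the R-module Ext^i_R(R/𝔞, M) is finitely generated for every integer 0 ≤ i ≤ d. -/

import Mathlib

open CategoryTheory

universe u

/-- The `R`-module `Ext^i_R(N, M)` for two `R`-modules (objects of `ModuleCat R`). -/
noncomputable def extObj {R : Type u} [CommRing R] (N M : ModuleCat.{u} R) (i : ℕ) :
    ModuleCat.{u} R :=
  ((Ext R (ModuleCat.{u} R) i).obj (Opposite.op N)).obj M

/-- The `R`-module `Ext^i_R(R/𝔞, M)`. -/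
noncomputable def extIdeal {R : Type u} [CommRing R] (𝔞 : Ideal R) (i : ℕ)
    (M : ModuleCat.{u} R) : ModuleCat.{u} R :=
  extObj (ModuleCat.of R (R ⧸ 𝔞)) M i

/-- An `R`-module `M` is `𝔞`-cofinite if `Supp_R M ⊆ V(𝔞)` and `Ext^i_R(R/𝔞, M)` is a finitely
generated `R`-module for every `i ≥ 0`. -/
def IsCofinite {R : Type u} [CommRing R] (𝔞 : Ideal R) (M : ModuleCat.{u} R) : Prop :=
  Module.support R M ⊆ PrimeSpectrum.zeroLocus (𝔞 : Set R) ∧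
    ∀ i : ℕ, Module.Finite R (extIdeal 𝔞 i M)

/-- The Krull dimension `dim_R M` of an `R`-module `M`: the Krull dimension of its support,
i.e. the supremum of `dim R/𝔭` over primes `𝔭` in the support of `M`. -/
noncomputable def moduleDim (R : Type u) [CommRing R] (M : Type u) [AddCommGroup M]
    [Module R M] : WithBot ℕ∞ :=
  Order.krullDim (Module.support R M)

/-- An `R`-module `M` is in `FD_{≤n}` if there is a finitely generated submodule `N ⊆ M`
with `dim_R (M/N) ≤ n`. -/
def MemFD (R : Type u) [CommRing R] (n : ℕ) (M : Type u) [AddCommGroup M] [Module R M] : Prop :=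
  ∃ N : Submodule R M, N.FG ∧ moduleDim R (M ⧸ N) ≤ (n : WithBot ℕ∞)

/-- An `R`-module `M` is `𝔞`-torsion if every element is annihilated by some power of `𝔞`. -/
def IsTorsionIdeal {R : Type u} [CommRing R] (𝔞 : Ideal R) (M : Type u) [AddCommGroup M]
    [Module R M] : Prop :=
  ∀ m : M, ∃ n : ℕ, ∀ a ∈ 𝔞 ^ n, a • m = 0

/-- The arithmetic rank of an ideal `𝔞`: the least `n` such that there exist `a₁, …, aₙ ∈ R`
with `Rad (a₁, …, aₙ) = Rad 𝔞`. -/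
noncomputable def arithRank {R : Type u} [CommRing R] (𝔞 : Ideal R) : ℕ :=
  sInf {n : ℕ | ∃ f : Fin n → R, (Ideal.span (Set.range f)).radical = 𝔞.radical}

namespace ExtCofinite

/-- A short exact sequence `0 → A → B → C → 0` of modules. -/
structure IsSES {R : Type u} [CommRing R] {A B C : Type u} [AddCommGroup A] [Module R A]
    [AddCommGroup B] [Module R B] [AddCommGroup C] [Module R C]
    (f : A →ₗ[R] B) (g : B →ₗ[R] C) : Prop where
  inj : Function.Injective f
  surj : Function.Surjective g
  exact : Function.Exact f g

/-- `Ext^i_R(N, M)` for unbundled modules. -/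
abbrev E (R : Type u) [CommRing R] (N M : Type u) [AddCommGroup N] [Module R N]
    [AddCommGroup M] [Module R M] (i : ℕ) : Type u :=
  Abelian.Ext (ModuleCat.of R N) (ModuleCat.of R M) i

section

variable {R : Type u} [CommRing R]
variable {A B C N M : Type u} [AddCommGroup A] [Module R A] [AddCommGroup B] [Module R B]
  [AddCommGroup C] [Module R C] [AddCommGroup N] [Module R N] [AddCommGroup M] [Module R M]
variable {f : A →ₗ[R] B} {g : B →ₗ[R] C}

lemma IsSES.of_submodule (K : Submodule R M) : IsSES K.subtype K.mkQ :=
  ⟨K.injective_subtype, K.mkQ_surjective, LinearMap.exact_subtype_mkQ K⟩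

lemma IsSES.of_surjective {g : B →ₗ[R] C} (hg : Function.Surjective g) :
    IsSES (LinearMap.ker g).subtype g :=
  ⟨Submodule.injective_subtype _, hg, LinearMap.exact_subtype_ker_map g⟩

lemma IsSES.shortExact (h : IsSES f g) :
    (ShortComplex.moduleCatMk f g h.exact.linearMap_comp_eq_zero).ShortExact where
  exact := (ShortComplex.moduleCat_exact_iff _).2 fun x hx => (h.exact x).1 hx
  mono_f := (ModuleCat.mono_iff_injective _).2 h.inj
  epi_g := (ModuleCat.epi_iff_surjective _).2 h.surj

/-- Functoriality of `Ext` in the second variable. -/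
noncomputable def E.cov (N : Type u) [AddCommGroup N] [Module R N] (f : A →ₗ[R] B) (i : ℕ) :
    E R N A i →ₗ[R] E R N B i :=
  (Abelian.Ext.mk₀ (ModuleCat.ofHom f)).postcompOfLinear R _ (add_zero i)

/-- Functoriality of `Ext` in the first variable. -/
noncomputable def E.con (f : A →ₗ[R] B) (M : Type u) [AddCommGroup M] [Module R M] (i : ℕ) :
    E R B M i →ₗ[R] E R A M i :=
  (Abelian.Ext.mk₀ (ModuleCat.ofHom f)).precompOfLinear R _ (zero_add i)

/-- The connecting map of the covariant long exact sequence. -/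
noncomputable def E.covδ (h : IsSES f g) (N : Type u) [AddCommGroup N] [Module R N] (i : ℕ) :
    E R N C i →ₗ[R] E R N A (i + 1) :=
  h.shortExact.extClass.postcompOfLinear R _ rfl

/-- The connecting map of the contravariant long exact sequence. -/
noncomputable def E.conδ (h : IsSES f g) (M : Type u) [AddCommGroup M] [Module R M] (i : ℕ) :
    E R A M i →ₗ[R] E R C M (i + 1) :=
  h.shortExact.extClass.precompOfLinear R _ (add_comm 1 i)

lemma E.cov_comp (f : A →ₗ[R] B) (g : B →ₗ[R] C) (i : ℕ) (x : E R N A i) :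
    E.cov N g i (E.cov N f i x) = E.cov N (g ∘ₗ f) i x := by
  simp [E.cov]

lemma E.cov_id (i : ℕ) (x : E R N A i) : E.cov N (LinearMap.id : A →ₗ[R] A) i x = x := by
  simp [E.cov]

lemma E.cov_add (f f' : A →ₗ[R] B) (i : ℕ) (x : E R N A i) :
    E.cov N (f + f') i x = E.cov N f i x + E.cov N f' i x := by
  have : ModuleCat.ofHom (f + f') = ModuleCat.ofHom f + ModuleCat.ofHom f' := rfl
  simp only [E.cov, this, Abelian.Ext.mk₀_add]
  exact Abelian.Ext.comp_add _ _ _ (add_zero i)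

lemma E.cov_smul (r : R) (f : A →ₗ[R] B) (i : ℕ) (x : E R N A i) :
    E.cov N (r • f) i x = r • E.cov N f i x := by
  have : ModuleCat.ofHom (r • f) = r • ModuleCat.ofHom f := rfl
  simp only [E.cov, this, Abelian.Ext.mk₀_smul]
  exact Abelian.Ext.comp_smul _ _ (add_zero i) _

lemma E.cov_zero (i : ℕ) (x : E R N A i) : E.cov N (0 : A →ₗ[R] B) i x = 0 := by
  simp [E.cov]

lemma E.con_comp (f : A →ₗ[R] B) (g : B →ₗ[R] C) (i : ℕ) (x : E R C M i) :
    E.con f M i (E.con g M i x) = E.con (g ∘ₗ f) M i x := by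
  simp [E.con]

lemma E.con_id (i : ℕ) (x : E R A M i) : E.con (LinearMap.id : A →ₗ[R] A) M i x = x := by
  simp [E.con]

lemma E.con_smul (r : R) (f : A →ₗ[R] B) (i : ℕ) (x : E R B M i) :
    E.con (r • f) M i x = r • E.con f M i x := by
  have : ModuleCat.ofHom (r • f) = r • ModuleCat.ofHom f := rfl
  simp only [E.con, this, Abelian.Ext.mk₀_smul]
  exact Abelian.Ext.smul_comp _ _ (zero_add i) _

section

variable {S : ShortComplex (ModuleCat.{u} R)} (hS : S.ShortExact) {X : ModuleCat.{u} R} {n : ℕ}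

lemma extClass_comp_comp (y : Abelian.Ext X S.X₃ n) :
    (y.comp hS.extClass rfl).comp (Abelian.Ext.mk₀ S.f) (add_zero (n + 1)) = 0 := by
  rw [Abelian.Ext.comp_assoc_of_third_deg_zero, hS.extClass_comp, Abelian.Ext.comp_zero]

lemma comp_comp_extClass (y : Abelian.Ext X S.X₂ n) :
    (y.comp (Abelian.Ext.mk₀ S.g) (add_zero n)).comp hS.extClass rfl = 0 := by
  rw [Abelian.Ext.comp_assoc_of_second_deg_zero, hS.comp_extClass, Abelian.Ext.comp_zero]

lemma extClass_comp_mk₀_comp (y : Abelian.Ext S.X₂ X n) :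
    hS.extClass.comp ((Abelian.Ext.mk₀ S.f).comp y (zero_add n)) (add_comm 1 n) = 0 := by
  rw [← Abelian.Ext.comp_assoc_of_second_deg_zero, hS.extClass_comp, Abelian.Ext.zero_comp]

lemma mk₀_comp_extClass_comp (y : Abelian.Ext S.X₁ X n) :
    (Abelian.Ext.mk₀ S.g).comp (hS.extClass.comp y (add_comm 1 n)) (zero_add (n + 1)) = 0 := by
  rw [← Abelian.Ext.comp_assoc _ _ _ (zero_add 1) (add_comm 1 n) (by omega), hS.comp_extClass,
    Abelian.Ext.zero_comp]

end

lemma E.cov_exact₁ (h : IsSES f g) (N : Type u) [AddCommGroup N] [Module R N] (i : ℕ) :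
    Function.Exact (E.covδ h N i) (E.cov N f (i + 1)) := by
  intro x
  constructor
  · intro hx
    exact Abelian.Ext.covariant_sequence_exact₁ _ h.shortExact x hx rfl
  · rintro ⟨y, rfl⟩
    exact extClass_comp_comp h.shortExact y

lemma E.cov_exact₂ (h : IsSES f g) (N : Type u) [AddCommGroup N] [Module R N] (i : ℕ) :
    Function.Exact (E.cov N f i) (E.cov N g i) := by
  intro x
  constructor
  · intro hx
    exact Abelian.Ext.covariant_sequence_exact₂ _ h.shortExact x hx
  · rintro ⟨y, rfl⟩
    rw [E.cov_comp, h.exact.linearMap_comp_eq_zero, E.cov_zero]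

lemma E.cov_exact₃ (h : IsSES f g) (N : Type u) [AddCommGroup N] [Module R N] (i : ℕ) :
    Function.Exact (E.cov N g i) (E.covδ h N i) := by
  intro x
  constructor
  · intro hx
    exact Abelian.Ext.covariant_sequence_exact₃ _ h.shortExact x rfl hx
  · rintro ⟨y, rfl⟩
    exact comp_comp_extClass h.shortExact y

lemma E.con_exact₁ (h : IsSES f g) (M : Type u) [AddCommGroup M] [Module R M] (i : ℕ) :
    Function.Exact (E.con f M i) (E.conδ h M i) := by
  intro x
  constructor
  · intro hx
    exact Abelian.Ext.contravariant_sequence_exact₁ h.shortExact _ x (add_comm 1 i) hx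
  · rintro ⟨y, rfl⟩
    exact extClass_comp_mk₀_comp h.shortExact y

lemma E.con_exact₂ (h : IsSES f g) (M : Type u) [AddCommGroup M] [Module R M] (i : ℕ) :
    Function.Exact (E.con g M i) (E.con f M i) := by
  intro x
  constructor
  · intro hx
    exact Abelian.Ext.contravariant_sequence_exact₂ h.shortExact _ x hx
  · rintro ⟨y, rfl⟩
    rw [E.con_comp, h.exact.linearMap_comp_eq_zero]
    simp [E.con]

lemma E.con_exact₃ (h : IsSES f g) (M : Type u) [AddCommGroup M] [Module R M] (i : ℕ) :
    Function.Exact (E.conδ h M i) (E.con g M (i + 1)) := by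
  intro x
  constructor
  · intro hx
    exact Abelian.Ext.contravariant_sequence_exact₃ h.shortExact _ x hx (add_comm 1 i)
  · rintro ⟨y, rfl⟩
    exact mk₀_comp_extClass_comp h.shortExact y

/-- `Ext^0(N, M) = Hom(N, M)`. -/
noncomputable def E.zeroEquiv (N M : Type u) [AddCommGroup N] [Module R N]
    [AddCommGroup M] [Module R M] : E R N M 0 ≃ₗ[R] (N →ₗ[R] M) :=
  Abelian.Ext.linearEquiv₀.trans ModuleCat.homLinearEquiv

lemma E.zeroEquiv_cov (f : A →ₗ[R] B) (x : E R N A 0) :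
    E.zeroEquiv N B (E.cov N f 0 x) = f ∘ₗ E.zeroEquiv N A x := by
  obtain ⟨x, rfl⟩ := (E.zeroEquiv N A).symm.surjective x
  rw [LinearEquiv.apply_symm_apply, ← LinearEquiv.eq_symm_apply]
  simp only [E.zeroEquiv, E.cov, LinearEquiv.trans_symm, LinearEquiv.trans_apply,
    Abelian.Ext.linearEquiv₀_symm_apply]
  exact Abelian.Ext.mk₀_comp_mk₀ _ _

lemma E.zeroEquiv_con (f : A →ₗ[R] B) (x : E R B M 0) :
    E.zeroEquiv A M (E.con f M 0 x) = E.zeroEquiv B M x ∘ₗ f := by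
  obtain ⟨x, rfl⟩ := (E.zeroEquiv B M).symm.surjective x
  rw [LinearEquiv.apply_symm_apply, ← LinearEquiv.eq_symm_apply]
  simp only [E.zeroEquiv, E.con, LinearEquiv.trans_symm, LinearEquiv.trans_apply,
    Abelian.Ext.linearEquiv₀_symm_apply]
  exact Abelian.Ext.mk₀_comp_mk₀ _ _

lemma E.cov_zero_injective {f : A →ₗ[R] B} (hf : Function.Injective f) :
    Function.Injective (E.cov N f 0) := by
  intro x y hxy
  apply (E.zeroEquiv N A).injective
  have := congrArg (E.zeroEquiv N B) hxy
  rw [E.zeroEquiv_cov, E.zeroEquiv_cov] at this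
  exact LinearMap.ext fun n => hf (LinearMap.congr_fun this n)

lemma E.con_zero_injective {g : B →ₗ[R] C} (hg : Function.Surjective g) :
    Function.Injective (E.con g M 0) := by
  intro x y hxy
  apply (E.zeroEquiv C M).injective
  have := congrArg (E.zeroEquiv B M) hxy
  rw [E.zeroEquiv_con, E.zeroEquiv_con] at this
  exact LinearMap.ext fun n => by
    obtain ⟨b, rfl⟩ := hg n
    exact LinearMap.congr_fun this b

lemma E.subsingleton_of_projective [Module.Projective R N] (i : ℕ) :
    Subsingleton (E R N M (i + 1)) := by
  have : Projective (ModuleCat.of R N) := by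
    rw [← IsProjective.iff_projective]; infer_instance
  exact Abelian.Ext.subsingleton_of_projective _ _ _

end

end ExtCofinite

namespace ExtCofinite

/-- A Serre class of modules: it contains zero and is closed under the middle terms of exact
sequences. -/
structure SerreClass (R : Type u) [CommRing R] where
  mem : ∀ (V : Type u) [AddCommGroup V] [Module R V], Prop
  zero : mem PUnit.{u + 1}
  of_exact : ∀ {U V W : Type u} [AddCommGroup U] [Module R U] [AddCommGroup V] [Module R V]
    [AddCommGroup W] [Module R W] (f : U →ₗ[R] V) (g : V →ₗ[R] W),
    Function.Exact f g → mem U → mem W → mem V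

section

variable {R : Type u} [CommRing R] (S : SerreClass R)
variable {U V W : Type u} [AddCommGroup U] [Module R U] [AddCommGroup V] [Module R V]
  [AddCommGroup W] [Module R W]

lemma SerreClass.of_injective (f : V →ₗ[R] W) (hf : Function.Injective f) (h : S.mem W) :
    S.mem V :=
  S.of_exact (0 : PUnit.{u + 1} →ₗ[R] V) f
    (fun x => by simp [map_eq_zero_iff f hf, eq_comm]) S.zero h

lemma SerreClass.of_surjective (f : V →ₗ[R] W) (hf : Function.Surjective f) (h : S.mem V) :
    S.mem W :=
  S.of_exact f (0 : W →ₗ[R] PUnit.{u + 1}) (fun x => by simp [hf x]) h S.zero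

lemma SerreClass.of_equiv (e : V ≃ₗ[R] W) (h : S.mem V) : S.mem W :=
  S.of_surjective e.toLinearMap e.surjective h

lemma SerreClass.of_subsingleton [Subsingleton V] : S.mem V :=
  S.of_injective (0 : V →ₗ[R] PUnit.{u + 1}) (Function.injective_of_subsingleton _) S.zero

lemma SerreClass.of_ses {f : U →ₗ[R] V} {g : V →ₗ[R] W} (h : IsSES f g) (hU : S.mem U)
    (hW : S.mem W) : S.mem V :=
  S.of_exact f g h.exact hU hW

lemma SerreClass.prod (hU : S.mem U) (hW : S.mem W) : S.mem (U × W) :=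
  S.of_exact (LinearMap.inl R U W) (LinearMap.snd R U W) Function.Exact.inl_snd hU hW

lemma SerreClass.pi (h : S.mem V) (n : ℕ) : S.mem (Fin n → V) := by
  induction n with
  | zero => exact S.of_subsingleton
  | succ n ih => exact S.of_equiv (Fin.consLinearEquiv R fun _ : Fin (n + 1) => V) (S.prod h ih)

end

section

variable {R : Type u} [CommRing R] (S : SerreClass R)
variable {A B C N M : Type u} [AddCommGroup A] [Module R A] [AddCommGroup B] [Module R B]
  [AddCommGroup C] [Module R C] [AddCommGroup N] [Module R N] [AddCommGroup M] [Module R M]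
variable {f : A →ₗ[R] B} {g : B →ₗ[R] C}

namespace SerreClass

variable {S} in
lemma cov_mem₂ (h : IsSES f g) {i : ℕ} (hA : S.mem (E R N A i)) (hC : S.mem (E R N C i)) :
    S.mem (E R N B i) :=
  S.of_exact _ _ (E.cov_exact₂ h N i) hA hC

variable {S} in
lemma cov_mem₃ (h : IsSES f g) {i : ℕ} (hB : S.mem (E R N B i)) (hA : S.mem (E R N A (i + 1))) :
    S.mem (E R N C i) :=
  S.of_exact _ _ (E.cov_exact₃ h N i) hB hA

variable {S} in
lemma cov_mem₁ (h : IsSES f g) {i : ℕ} (hC : S.mem (E R N C i)) (hB : S.mem (E R N B (i + 1))) :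
    S.mem (E R N A (i + 1)) :=
  S.of_exact _ _ (E.cov_exact₁ h N i) hC hB

variable {S} in
lemma cov_mem_zero (hf : Function.Injective f) (hB : S.mem (E R N B 0)) :
    S.mem (E R N A 0) :=
  S.of_injective _ (E.cov_zero_injective hf) hB

variable {S} in
lemma con_mem₂ (h : IsSES f g) {i : ℕ} (hA : S.mem (E R A M i)) (hC : S.mem (E R C M i)) :
    S.mem (E R B M i) :=
  S.of_exact _ _ (E.con_exact₂ h M i) hC hA

variable {S} in
lemma con_mem₃ (h : IsSES f g) {i : ℕ} (hA : S.mem (E R A M i)) (hB : S.mem (E R B M (i + 1))) :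
    S.mem (E R C M (i + 1)) :=
  S.of_exact _ _ (E.con_exact₃ h M i) hA hB

variable {S} in
lemma con_mem_zero (hg : Function.Surjective g) (hB : S.mem (E R B M 0)) :
    S.mem (E R C M 0) :=
  S.of_injective _ (E.con_zero_injective hg) hB

variable {S} in
lemma cov_equiv (e : A ≃ₗ[R] B) {i : ℕ} (h : S.mem (E R N A i)) : S.mem (E R N B i) :=
  S.of_surjective (E.cov N e.toLinearMap i)
    (fun x => ⟨E.cov N e.symm.toLinearMap i x, by
      rw [E.cov_comp, LinearEquiv.comp_coe, LinearEquiv.symm_trans_self]; exact E.cov_id i x⟩) h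

variable {S} in
lemma con_equiv (e : A ≃ₗ[R] B) {i : ℕ} (h : S.mem (E R A M i)) : S.mem (E R B M i) :=
  S.of_surjective (E.con e.symm.toLinearMap M i)
    (fun x => ⟨E.con e.toLinearMap M i x, by
      rw [E.con_comp, LinearEquiv.comp_coe, LinearEquiv.symm_trans_self]; exact E.con_id i x⟩) h

/-- `Ext^i(N, M)` lies in a Serre class when `M` does and `N` is finitely generated. -/
lemma ext_mem [IsNoetherianRing R] [Module.Finite R N] (hM : S.mem M) (i : ℕ) :
    S.mem (E R N M i) := by
  induction i generalizing N with
  | zero =>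
    refine S.of_equiv (E.zeroEquiv N M).symm ?_
    obtain ⟨n, s, hs⟩ := Module.Finite.exists_fin (R := R) (M := N)
    let φ : (N →ₗ[R] M) →ₗ[R] (Fin n → M) := LinearMap.pi fun j => LinearMap.applyₗ (s j)
    refine S.of_injective φ (fun x y hxy => ?_) (S.pi hM n)
    refine LinearMap.ext_on_range hs fun j => congrFun hxy j
  | succ i ih =>
    obtain ⟨n, p, hp⟩ := Module.Finite.exists_fin' R N
    have := E.subsingleton_of_projective (R := R) (N := Fin n → R) (M := M) i
    exact con_mem₃ (IsSES.of_surjective hp) (ih (N := LinearMap.ker p)) S.of_subsingleton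

lemma con_pi {i : ℕ} (h : S.mem (E R N M i)) (n : ℕ) : S.mem (E R (Fin n → N) M i) := by
  induction n with
  | zero =>
    cases i with
    | zero => exact S.of_equiv (E.zeroEquiv _ M).symm S.of_subsingleton
    | succ i =>
      have := E.subsingleton_of_projective (R := R) (N := Fin 0 → N) (M := M) i
      exact S.of_subsingleton
  | succ n ih =>
    refine con_equiv (Fin.consLinearEquiv R fun _ : Fin (n + 1) => N) ?_
    exact con_mem₂ (f := LinearMap.inl R N (Fin n → N)) (g := LinearMap.snd R N (Fin n → N))
      ⟨LinearMap.inl_injective, LinearMap.snd_surjective, Function.Exact.inl_snd⟩ h ih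

end SerreClass

lemma exists_surjective_of_annihilated [Module.Finite R N] (b : Ideal R)
    (hN : ∀ a ∈ b, ∀ x : N, a • x = 0) :
    ∃ (n : ℕ) (p : (Fin n → R ⧸ b) →ₗ[R] N), Function.Surjective p := by
  obtain ⟨n, p, hp⟩ := Module.Finite.exists_fin' R N
  let q : (R ⧸ b) →ₗ[R] (N →ₗ[R] N) := Submodule.liftQ b (LinearMap.lsmul R N)
    (fun a ha => LinearMap.ext fun x => hN a ha x)
  have hq : ∀ r x, q (Ideal.Quotient.mk b r) x = r • x := fun r x => rfl
  refine ⟨n, ∑ j, (q.flip (p (Pi.single j 1))) ∘ₗ LinearMap.proj j, fun x => ?_⟩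
  obtain ⟨v, rfl⟩ := hp x
  refine ⟨fun j => Ideal.Quotient.mk b (v j), ?_⟩
  simp only [LinearMap.sum_apply, LinearMap.comp_apply, LinearMap.proj_apply, LinearMap.flip_apply,
    hq]
  conv_rhs => rw [LinearMap.pi_apply_eq_sum_univ p v]
  refine Finset.sum_congr rfl fun j _ => ?_
  congr 2
  ext k
  simp [Pi.single_apply, eq_comm]

/-- Finiteness conditions on `Ext^i(R/b, M)`, `i ≤ t`, pass to all finitely generated modules
annihilated by `b`. -/
lemma SerreClass.ext_mem_of_annihilated [IsNoetherianRing R] (b : Ideal R) (t : ℕ)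
    (h : ∀ i ≤ t, S.mem (E R (R ⧸ b) M i)) [Module.Finite R N]
    (hN : ∀ a ∈ b, ∀ x : N, a • x = 0) (i : ℕ) (hi : i ≤ t) : S.mem (E R N M i) := by
  induction i generalizing N with
  | zero =>
    obtain ⟨n, p, hp⟩ := exists_surjective_of_annihilated b hN
    exact con_mem_zero hp (S.con_pi (h 0 hi) n)
  | succ i ih =>
    obtain ⟨n, p, hp⟩ := exists_surjective_of_annihilated b hN
    refine con_mem₃ (IsSES.of_surjective hp) (ih (N := LinearMap.ker p) ?_ (by omega))
      (S.con_pi (h _ hi) n)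
    rintro a ha ⟨x, hx⟩
    ext j
    obtain ⟨r, hr⟩ := Ideal.Quotient.mk_surjective (x j)
    simp only [SetLike.val_smul, Pi.smul_apply, ZeroMemClass.coe_zero, Pi.zero_apply, ← hr]
    rw [Algebra.smul_def, Ideal.Quotient.algebraMap_eq, ← map_mul]
    exact Ideal.Quotient.eq_zero_iff_mem.2 (b.mul_mem_right _ ha)

/-- The submodule of `M` annihilated by the ideal `b`. -/
abbrev torsionByIdeal (b : Ideal R) (M : Type u) [AddCommGroup M] [Module R M] : Submodule R M :=
  Submodule.torsionBySet R M (b : Set R)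

lemma mem_torsionByIdeal {b : Ideal R} {m : M} :
    m ∈ torsionByIdeal b M ↔ ∀ a ∈ b, a • m = 0 := by
  simp [torsionByIdeal, Submodule.mem_torsionBySet_iff]

/-- `Hom(R/b, M)` is the submodule of `M` annihilated by `b`. -/
noncomputable def homQuotientEquiv (b : Ideal R) (M : Type u) [AddCommGroup M] [Module R M] :
    ((R ⧸ b) →ₗ[R] M) ≃ₗ[R] torsionByIdeal b M where
  toFun φ := ⟨φ 1, mem_torsionByIdeal.2 fun a ha => by
    have : a • (1 : R ⧸ b) = 0 := by
      rw [Algebra.smul_def, mul_one]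
      exact Ideal.Quotient.eq_zero_iff_mem.2 ha
    rw [← map_smul, this, map_zero]⟩
  map_add' _ _ := rfl
  map_smul' _ _ := rfl
  invFun m := Submodule.liftQ b (LinearMap.toSpanSingleton R M m)
    fun a ha => mem_torsionByIdeal.1 m.2 a ha
  left_inv φ := by
    ext
    change (1 : R) • φ 1 = φ 1
    simp
  right_inv m := by
    ext
    change (1 : R) • (m : M) = m
    simp

lemma SerreClass.ext_zero_iff (b : Ideal R) :
    S.mem (E R (R ⧸ b) M 0) ↔ S.mem (torsionByIdeal b M) :=
  let e := (E.zeroEquiv (R ⧸ b) M).trans (homQuotientEquiv b M)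
  ⟨S.of_equiv e, S.of_equiv e.symm⟩

lemma SerreClass.torsionByIdeal_pow_mem [IsNoetherianRing R] (b : Ideal R)
    (h : S.mem (torsionByIdeal b M)) (k : ℕ) :
    S.mem (torsionByIdeal (b ^ k) M) := by
  induction k with
  | zero =>
    have : Subsingleton (torsionByIdeal (b ^ 0) M) := by
      refine subsingleton_of_forall_eq 0 fun x => ?_
      have := mem_torsionByIdeal.1 x.2 1 (by simp)
      ext
      simpa using this
    exact S.of_subsingleton
  | succ k ih =>
    obtain ⟨n, x, hx⟩ := Submodule.fg_iff_exists_fin_generating_family.1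
      (IsNoetherian.noetherian b)
    have hxb : ∀ j, x j ∈ b := fun j => hx ▸ Submodule.subset_span ⟨j, rfl⟩
    let T (l : ℕ) := torsionByIdeal (b ^ l) M
    have hT : ∀ l m, m ∈ T l ↔ ∀ a ∈ b ^ l, a • m = 0 := fun l m =>
      mem_torsionByIdeal
    let φ : T (k + 1) →ₗ[R] (Fin n → T k) := LinearMap.pi fun j =>
      ((LinearMap.lsmul R M (x j)).comp (T (k + 1)).subtype).codRestrict (T k) fun m => by
        rw [hT]
        intro a ha
        simp only [LinearMap.comp_apply, LinearMap.lsmul_apply, Submodule.subtype_apply]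
        rw [← mul_smul]
        exact (hT _ _).1 m.2 _ (by rw [pow_succ]; exact Ideal.mul_mem_mul ha (hxb j))
    refine S.of_exact (Submodule.inclusion ?_) φ ?_ h (S.pi ih n)
    · intro m hm
      rw [hT]
      exact fun a ha => mem_torsionByIdeal.1 hm a (Ideal.pow_le_self k.succ_ne_zero ha)
    · intro m
      constructor
      · intro hm
        have key : ∀ a ∈ Submodule.span R (Set.range x), a • (m : M) = 0 := by
          intro a ha
          induction ha using Submodule.span_induction with
          | mem a ha =>
            obtain ⟨j, rfl⟩ := ha
            exact congrArg Subtype.val (congrFun hm j)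
          | zero => simp
          | add a c _ _ h1 h2 => rw [add_smul, h1, h2, add_zero]
          | smul r a _ h1 => rw [smul_assoc, h1, smul_zero]
        exact ⟨⟨m, mem_torsionByIdeal.2 fun a ha => key a (hx ▸ ha)⟩, rfl⟩
      · rintro ⟨m, rfl⟩
        ext j
        exact mem_torsionByIdeal.1 m.2 (x j) (hxb j)

end

end ExtCofinite

namespace ExtCofinite

section

variable {R : Type u} [CommRing R] {M : Type u} [AddCommGroup M] [Module R M]

/-- `b`-torsion modules. -/
def IsPowTorsion (b : Ideal R) (M : Type u) [AddCommGroup M] [Module R M] : Prop :=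
  ∀ m : M, ∃ n : ℕ, ∀ a ∈ b ^ n, a • m = 0

lemma IsPowTorsion.of_injective {b : Ideal R} {N : Type u} [AddCommGroup N] [Module R N]
    (h : IsPowTorsion b M) (f : N →ₗ[R] M) (hf : Function.Injective f) : IsPowTorsion b N := by
  intro m
  obtain ⟨n, hn⟩ := h (f m)
  exact ⟨n, fun a ha => hf (by rw [map_smul, hn a ha, map_zero])⟩

lemma IsPowTorsion.of_surjective {b : Ideal R} {N : Type u} [AddCommGroup N] [Module R N]
    (h : IsPowTorsion b M) (f : M →ₗ[R] N) (hf : Function.Surjective f) : IsPowTorsion b N := by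
  intro m
  obtain ⟨m, rfl⟩ := hf m
  obtain ⟨n, hn⟩ := h m
  exact ⟨n, fun a ha => by rw [← map_smul, hn a ha, map_zero]⟩

lemma isArtinian_of_ker_lsmul (x : R) (hx : ∀ m : M, ∃ n : ℕ, x ^ n • m = 0)
    (hK : IsArtinian R (LinearMap.ker (LinearMap.lsmul R M x))) : IsArtinian R M := by
  rw [← monotone_stabilizes_iff_artinian]
  intro N
  set K := LinearMap.ker (LinearMap.lsmul R M x) with hKdef
  have hanti : ∀ {n n' : ℕ}, n ≤ n' → (N n').ofDual ≤ (N n).ofDual := fun h => N.monotone h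
  let G : ℕ → ℕ → Submodule R K := fun n k =>
    ((N n).ofDual.map (LinearMap.lsmul R M (x ^ k))).comap K.subtype
  have mem_G : ∀ n k (y : K), y ∈ G n k ↔ ∃ m ∈ (N n).ofDual, x ^ k • m = (y : M) := by
    intro n k y; simp [G]
  have G_anti : ∀ n n' k k', n ≤ n' → k ≤ k' → G n' k' ≤ G n k := by
    intro n n' k k' hn hk y hy
    rw [mem_G] at hy ⊢
    obtain ⟨m, hm, hmy⟩ := hy
    refine ⟨x ^ (k' - k) • m, Submodule.smul_mem _ _ (hanti hn hm), ?_⟩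
    rw [smul_smul, ← pow_add, Nat.add_sub_cancel' hk, hmy]
  obtain ⟨n0, h0⟩ := IsArtinian.monotone_stabilizes
    (⟨fun n => OrderDual.toDual (G n n), fun a b h => G_anti _ _ _ _ h h⟩ : ℕ →o (Submodule R K)ᵒᵈ)
  have h0' : ∀ n, n0 ≤ n → G n0 n0 = G n n := fun n hn => congrArg OrderDual.ofDual (h0 n hn)
  have hst : ∀ k, ∃ n, ∀ m, n ≤ m → G n k = G m k := fun k => by
    obtain ⟨n, h⟩ := IsArtinian.monotone_stabilizes
      (⟨fun n => OrderDual.toDual (G n k), fun a b h => G_anti _ _ _ _ h le_rfl⟩ :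
        ℕ →o (Submodule R K)ᵒᵈ)
    exact ⟨n, fun m hm => congrArg OrderDual.ofDual (h m hm)⟩
  choose f hf using hst
  set n1 := max n0 ((Finset.range n0).sup f)
  have key : ∀ n, n1 ≤ n → ∀ k, G n1 k ≤ G n k := by
    intro n hn k
    by_cases hk : k < n0
    · have hfk : f k ≤ n1 := le_max_of_le_right (Finset.le_sup (Finset.mem_range.2 hk))
      rw [← hf k n1 hfk, ← hf k n (hfk.trans hn)]
    · push Not at hk
      have h1 : G n1 k ≤ G n0 n0 := G_anti _ _ _ _ (le_max_left _ _) hk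
      have h2 : n0 ≤ max n k := hk.trans (le_max_right _ _)
      rw [h0' _ h2] at h1
      exact h1.trans (G_anti _ _ _ _ (le_max_left _ _) (le_max_right _ _))
  refine ⟨n1, fun n hn => ?_⟩
  have : (N n1).ofDual ≤ (N n).ofDual := by
    have aux : ∀ j : ℕ, ∀ m ∈ (N n1).ofDual, x ^ j • m = 0 → m ∈ (N n).ofDual := by
      intro j
      induction j with
      | zero => intro m _ h; rw [pow_zero, one_smul] at h; rw [h]; exact zero_mem _
      | succ j ih =>
        intro m hm h
        have hmK : x ^ j • m ∈ K := by
          rw [hKdef, LinearMap.mem_ker, LinearMap.lsmul_apply, smul_smul, ← pow_succ', h]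
        have := key n hn j ((mem_G n1 j ⟨_, hmK⟩).2 ⟨m, hm, rfl⟩)
        obtain ⟨m', hm', he⟩ := (mem_G n j _).1 this
        have h3 := ih (m - m') (sub_mem hm (hanti hn hm')) (by rw [smul_sub, he, sub_self])
        simpa using add_mem h3 hm'
    intro m hm
    obtain ⟨j, hj⟩ := hx m
    exact aux j m hm hj
  exact congrArg OrderDual.toDual
    (le_antisymm this (hanti hn) : (N n1).ofDual = (N n).ofDual)

lemma isArtinian_of_torsionBySet (s : Finset R) : ∀ (M : Type u) [AddCommGroup M] [Module R M],
    (∀ x ∈ s, ∀ m : M, ∃ n : ℕ, x ^ n • m = 0) →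
    IsArtinian R (Submodule.torsionBySet R M (s : Set R)) → IsArtinian R M := by
  classical
  induction s using Finset.induction_on with
  | empty =>
    intro M _ _ _ h
    refine isArtinian_of_surjective _
      (Submodule.torsionBySet R M ((∅ : Finset R) : Set R)).subtype fun m => ?_
    exact ⟨⟨m, by simp [Submodule.mem_torsionBySet_iff]⟩, rfl⟩
  | insert x s _ ih =>
    intro M _ _ hM h
    refine isArtinian_of_ker_lsmul x (hM x (by simp)) ?_
    refine ih _ (fun y hy m => ?_) ?_
    · obtain ⟨n, hn⟩ := hM y (by simp [hy]) m
      exact ⟨n, Subtype.ext (by simpa using hn)⟩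
    · refine isArtinian_of_injective
        (((LinearMap.ker (LinearMap.lsmul R M x)).subtype ∘ₗ Submodule.subtype _).codRestrict
          (Submodule.torsionBySet R M ((insert x s : Finset R) : Set R)) ?_) ?_
      · intro m
        rw [Submodule.mem_torsionBySet_iff]
        rintro ⟨a, ha⟩
        rcases Finset.mem_insert.1 ha with rfl | ha
        · exact m.1.2
        · have := (Submodule.mem_torsionBySet_iff _ _).1 m.2 ⟨a, ha⟩
          exact congrArg Subtype.val this
      · intro m m' hm
        exact Subtype.ext (Subtype.ext
          (congrArg (fun z : Submodule.torsionBySet R M _ => (z : M)) hm :))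

lemma isArtinian_of_torsionByIdeal {b : Ideal R} (hb : b.FG) (hM : IsPowTorsion b M)
    (h : IsArtinian R (torsionByIdeal b M)) : IsArtinian R M := by
  obtain ⟨s, rfl⟩ := hb
  refine isArtinian_of_torsionBySet s M (fun x hx m => ?_) ?_
  · obtain ⟨n, hn⟩ := hM m
    exact ⟨n, hn _ (Ideal.pow_mem_pow (Ideal.subset_span hx) n)⟩
  · rw [torsionByIdeal, ← Submodule.torsionBySet_eq_torsionBySet_span] at h
    exact h

/-- In an Artinian module every `u ∈ b` outside finitely many primes is divisible up to
`b`-power torsion. -/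
lemma exists_smul_sup_torsion_eq_top [IsArtinian R M] {b : Ideal R} (hb : b.FG) :
    ∃ u ∈ b, ∃ k : ℕ, ∀ m : M, ∃ m' : M, m - u • m' ∈ torsionByIdeal (b ^ k) M := by
  classical
  obtain ⟨t, ht, hirr⟩ := exists_supIrred_decomposition (⊤ : Submodule R M)
  have dich : ∀ W ∈ t, ∀ x : R, (∀ w ∈ W, ∃ w' ∈ W, x • w' = w) ∨ x ∈ W.annihilator.radical := by
    intro W hW x
    have hirrW := (hirr hW).2
    obtain ⟨n, hn⟩ := IsArtinian.range_smul_pow_stabilizes (R := R) W x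
    have hn1 := hn (n + n) (by omega)
    have hsup : W.map (LinearMap.lsmul R M (x ^ n)) ⊔
        W ⊓ LinearMap.ker (LinearMap.lsmul R M (x ^ n)) = W := by
      apply le_antisymm
      · refine sup_le ?_ inf_le_left
        rw [Submodule.map_le_iff_le_comap]
        intro w hw; exact W.smul_mem _ hw
      · intro w hw
        have : x ^ n • (⟨w, hw⟩ : W) ∈ LinearMap.range (x ^ (n + n) • LinearMap.id : W →ₗ[R] W) := by
          rw [← hn1]; exact ⟨⟨w, hw⟩, rfl⟩
        obtain ⟨w', hw'⟩ := this
        have h2 : x ^ (n + n) • (w' : M) = x ^ n • w := congrArg Subtype.val hw'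
        have : w = x ^ n • (w' : M) + (w - x ^ n • (w' : M)) := by abel
        rw [this]
        refine Submodule.add_mem_sup ⟨w', w'.2, rfl⟩ ⟨sub_mem hw (W.smul_mem _ w'.2), ?_⟩
        change x ^ n • (w - x ^ n • (w' : M)) = 0
        rw [smul_sub, smul_smul, ← pow_add, h2, sub_self]
    rcases hirrW hsup with h | h
    · left
      intro w hw
      have : w ∈ W.map (LinearMap.lsmul R M (x ^ n)) := by rw [h]; exact hw
      rcases Nat.eq_zero_or_pos n with rfl | hpos
      · -- `x ^ 0`: then the stabilisation gives the claim with `x ^ 1`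
        have hn2 := hn 1 (by omega)
        have : (⟨w, hw⟩ : W) ∈ LinearMap.range (x ^ 1 • LinearMap.id : W →ₗ[R] W) := by
          rw [← hn2]; exact ⟨⟨w, hw⟩, by simp⟩
        obtain ⟨w', hw'⟩ := this
        exact ⟨w', w'.2, by simpa using congrArg Subtype.val hw'⟩
      · obtain ⟨w', hw', he⟩ := this
        refine ⟨x ^ (n - 1) • w', W.smul_mem _ hw', ?_⟩
        rw [smul_smul, ← pow_succ', Nat.sub_add_cancel hpos]
        exact he
    · right
      refine ⟨n, Submodule.mem_annihilator.2 fun w hw => ?_⟩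
      rw [← h] at hw
      exact hw.2
  have hprime : ∀ W ∈ t, W.annihilator.radical.IsPrime := by
    intro W hW
    refine ⟨fun htop => ?_, fun {x y} hxy => ?_⟩
    · have h1 : (1 : R) ∈ W.annihilator := by
        have : (1 : R) ∈ W.annihilator.radical := htop ▸ Submodule.mem_top
        obtain ⟨n, hn⟩ := this
        simpa using hn
      refine (hirr hW).1 ?_
      rw [isMin_iff_eq_bot, eq_bot_iff]
      intro w hw
      simpa using Submodule.mem_annihilator.1 h1 w hw
    · by_contra! hcon
      have hx := (dich W hW x).resolve_right hcon.1
      have hy := (dich W hW y).resolve_right hcon.2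
      obtain ⟨n, hn⟩ := hxy
      have hdiv : ∀ n : ℕ, ∀ w ∈ W, ∃ w' ∈ W, (x * y) ^ n • w' = w := by
        intro n
        induction n with
        | zero => intro w hw; exact ⟨w, hw, by simp⟩
        | succ n ih =>
          intro w hw
          obtain ⟨w1, h1, rfl⟩ := ih w hw
          obtain ⟨w2, h2, rfl⟩ := hx w1 h1
          obtain ⟨w3, h3, rfl⟩ := hy w2 h2
          exact ⟨w3, h3, by rw [pow_succ, mul_smul, mul_smul]⟩
      apply hcon.1
      refine ⟨1, Submodule.mem_annihilator.2 fun w hw => ?_⟩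
      obtain ⟨w', hw', rfl⟩ := hdiv n w hw
      rw [Submodule.mem_annihilator.1 hn w' hw', smul_zero]
  let t' := t.filter fun W => ¬ b ≤ W.annihilator.radical
  have hex : ∃ u ∈ b, ∀ W ∈ t', u ∉ W.annihilator.radical := by
    by_contra! hcon
    have hsub : (b : Set R) ⊆ ⋃ W ∈ (t' : Set (Submodule R M)), (W.annihilator.radical : Set R) := by
      intro u hu
      obtain ⟨W, hW, h⟩ := hcon u hu
      exact Set.mem_biUnion hW h
    obtain ⟨W, hW, h⟩ := (Ideal.subset_union_prime (s := t')
      (f := fun W : Submodule R M => W.annihilator.radical) ⊥ ⊥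
      (fun W hW _ _ => hprime W (Finset.mem_filter.1 hW).1)).1 hsub
    exact (Finset.mem_filter.1 hW).2 h
  obtain ⟨u, hu, hut⟩ := hex
  have hpow : ∀ W : Submodule R M, b ≤ W.annihilator.radical → ∃ k, b ^ k ≤ W.annihilator :=
    fun W h => Ideal.exists_pow_le_of_le_radical_of_fg h hb
  have : ∀ W : Submodule R M, ∃ k, b ≤ W.annihilator.radical → b ^ k ≤ W.annihilator := fun W => by
    by_cases h : b ≤ W.annihilator.radical
    · obtain ⟨k, hk⟩ := hpow W h; exact ⟨k, fun _ => hk⟩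
    · exact ⟨0, fun h' => absurd h' h⟩
  choose k hk using this
  refine ⟨u, hu, t.sup k, ?_⟩
  let Q : Submodule R M := (⊤ : Submodule R M).map (LinearMap.lsmul R M u) ⊔
    torsionByIdeal (b ^ (t.sup k)) M
  have hQ : (⊤ : Submodule R M) ≤ Q := by
    rw [← ht]
    refine Finset.sup_le fun W hW w hw => ?_
    by_cases h : b ≤ W.annihilator.radical
    · refine Submodule.mem_sup_right (mem_torsionByIdeal.2 fun a ha => ?_)
      exact Submodule.mem_annihilator.1
        (hk W h (Ideal.pow_le_pow_right (Finset.le_sup hW) ha)) w hw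
    · obtain ⟨w', -, rfl⟩ := (dich W hW u).resolve_right
        (hut W (Finset.mem_filter.2 ⟨hW, h⟩)) w hw
      exact Submodule.mem_sup_left ⟨w', trivial, rfl⟩
  intro m
  obtain ⟨_, ⟨m', -, rfl⟩, z, hz, rfl⟩ := Submodule.mem_sup.1 (hQ (x := m) trivial)
  exact ⟨m', by simpa using hz⟩

end

end ExtCofinite

namespace ExtCofinite

section

variable {R : Type u} [CommRing R]

lemma E.smul_eq_zero_of_left {N M : Type u} [AddCommGroup N] [Module R N] [AddCommGroup M]
    [Module R M] {a : R} (h : ∀ x : N, a • x = 0) {i : ℕ} (x : E R N M i) : a • x = 0 := by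
  have h0 : a • (LinearMap.id : N →ₗ[R] N) = 0 := LinearMap.ext h
  have h1 := E.con_smul (M := M) a (LinearMap.id : N →ₗ[R] N) i x
  rw [E.con_id, h0] at h1
  have h2 := E.con_smul (M := M) (0 : R) (LinearMap.id : N →ₗ[R] N) i x
  rw [zero_smul, zero_smul] at h2
  rw [← h1, h2]

lemma smul_quotient_eq_zero {b : Ideal R} {a : R} (ha : a ∈ b) (x : R ⧸ b) : a • x = 0 := by
  obtain ⟨x, rfl⟩ := Ideal.Quotient.mk_surjective x
  rw [Algebra.smul_def, Ideal.Quotient.algebraMap_eq, ← map_mul]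
  exact Ideal.Quotient.eq_zero_iff_mem.2 (b.mul_mem_right _ ha)

lemma E.cov_lsmul_eq_zero {b : Ideal R} {a : R} (ha : a ∈ b) {M : Type u} [AddCommGroup M]
    [Module R M] {i : ℕ} (x : E R (R ⧸ b) M i) :
    E.cov (R ⧸ b) (LinearMap.lsmul R M a) i x = 0 := by
  have : LinearMap.lsmul R M a = a • LinearMap.id := rfl
  rw [this, E.cov_smul]
  exact E.smul_eq_zero_of_left (fun y => smul_quotient_eq_zero ha y) _

lemma SerreClass.of_exact_comp (S : SerreClass R) {U V W X Y : Type u}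
    [AddCommGroup U] [Module R U] [AddCommGroup V] [Module R V]
    [AddCommGroup W] [Module R W] [AddCommGroup X] [Module R X] [AddCommGroup Y] [Module R Y]
    {f : U →ₗ[R] V} {g : V →ₗ[R] W} {k : X →ₗ[R] W} {l : W →ₗ[R] Y}
    (hfg : Function.Exact f g) (hkl : Function.Exact k l) (hlg : ∀ v, l (g v) = 0)
    (hU : S.mem U) (hX : S.mem X) : S.mem V := by
  refine S.of_exact f (g.codRestrict (LinearMap.range k) fun v => (hkl _).1 (hlg v))
    (fun v => ?_) hU (S.of_surjective k.rangeRestrict k.surjective_rangeRestrict hX)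
  rw [← hfg v]
  exact ⟨fun h => congrArg Subtype.val h, fun h => Subtype.ext h⟩

lemma IsSES.of_rangeRestrict {A B : Type u} [AddCommGroup A] [Module R A] [AddCommGroup B]
    [Module R B] (f : A →ₗ[R] B) : IsSES (LinearMap.ker f).subtype f.rangeRestrict where
  inj := Submodule.injective_subtype _
  surj := LinearMap.surjective_rangeRestrict _
  exact x := ⟨fun h => ⟨⟨x, congrArg Subtype.val h⟩, rfl⟩, by rintro ⟨y, rfl⟩; exact Subtype.ext y.2⟩

lemma lsmul_range_subtype_comp {M : Type u} [AddCommGroup M] [Module R M] (u : R) :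
    (LinearMap.range (LinearMap.lsmul R M u)).subtype ∘ₗ (LinearMap.lsmul R M u).rangeRestrict =
      LinearMap.lsmul R M u := rfl

/-- The connection between `Ext^{i+1}(R/b, M)` and the kernel and cokernel of `u ∈ b` on `M`. -/
lemma SerreClass.ext_succ_mem_of_lsmul (S : SerreClass R) {b : Ideal R} {u : R} (hu : u ∈ b)
    {M : Type u} [AddCommGroup M] [Module R M] (i : ℕ)
    (hK : S.mem (E R (R ⧸ b) (LinearMap.ker (LinearMap.lsmul R M u)) (i + 1)))
    (hZ : S.mem (E R (R ⧸ b) (M ⧸ LinearMap.range (LinearMap.lsmul R M u)) i)) :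
    S.mem (E R (R ⧸ b) M (i + 1)) := by
  have h1 : IsSES (LinearMap.ker (LinearMap.lsmul R M u)).subtype
      (LinearMap.lsmul R M u).rangeRestrict :=
    IsSES.of_rangeRestrict _
  have h2 := IsSES.of_submodule (LinearMap.range (LinearMap.lsmul R M u))
  refine S.of_exact_comp (E.cov_exact₂ h1 (R ⧸ b) (i + 1)) (E.cov_exact₁ h2 (R ⧸ b) i)
    (fun v => ?_) hK hZ
  rw [E.cov_comp, lsmul_range_subtype_comp]
  exact E.cov_lsmul_eq_zero hu v

/-- If every `b`-torsion module `M` with `0 :_M b` in the Serre class `S` is, up to `b`-power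
torsion, divisible by some `u ∈ b`, then membership of `Hom(R/b, M)` controls all `Ext^i(R/b, M)`. -/
lemma SerreClass.ext_mem_of_hom_mem [IsNoetherianRing R] (S : SerreClass R) (b : Ideal R)
    (hchoice : ∀ (M : Type u) [AddCommGroup M] [Module R M], IsPowTorsion b M →
      S.mem (torsionByIdeal b M) → ∃ u ∈ b, ∃ k : ℕ, ∀ m : M, ∃ m' : M,
        m - u • m' ∈ torsionByIdeal (b ^ k) M)
    (M : Type u) [AddCommGroup M] [Module R M] (hM : IsPowTorsion b M)
    (h0 : S.mem (E R (R ⧸ b) M 0)) (i : ℕ) : S.mem (E R (R ⧸ b) M i) := by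
  have main : ∀ c : Ideal R, ∀ (M : Type u) [AddCommGroup M] [Module R M], IsPowTorsion b M →
      (∀ a ∈ c, ∀ m : M, a • m = 0) → S.mem (E R (R ⧸ b) M 0) →
      ∀ i, S.mem (E R (R ⧸ b) M i) := by
    intro c
    induction c using IsNoetherian.induction with
    | hgt c ih =>
    have red : ∀ (Q : Type u) [AddCommGroup Q] [Module R Q], IsPowTorsion b Q →
        (∀ a ∈ c, ∀ m : Q, a • m = 0) → S.mem (E R (R ⧸ b) Q 0) → ∀ u ∈ b,
        Function.Surjective (LinearMap.lsmul R Q u) → ∀ i, S.mem (E R (R ⧸ b) Q i) := by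
      intro Q _ _ hQ hc h0 u hu hdiv
      have hZ : Subsingleton (Q ⧸ LinearMap.range (LinearMap.lsmul R Q u)) := by
        rw [LinearMap.range_eq_top.2 hdiv]; infer_instance
      have hK : ∀ i, S.mem (E R (R ⧸ b) (LinearMap.ker (LinearMap.lsmul R Q u)) i) := by
        by_cases huc : u ∈ c
        · have : Subsingleton (LinearMap.ker (LinearMap.lsmul R Q u)) := by
            have : Subsingleton Q := subsingleton_of_forall_eq 0 fun q => by
              obtain ⟨q, rfl⟩ := hdiv q
              exact hc u huc q
            infer_instance
          exact fun i => S.ext_mem S.of_subsingleton i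
        · have hinj := (LinearMap.ker (LinearMap.lsmul R Q u)).injective_subtype
          refine ih (c ⊔ Ideal.span {u}) (lt_of_le_of_ne le_sup_left fun h => huc ?_) _
            (hQ.of_injective _ hinj) ?_ (SerreClass.cov_mem_zero hinj h0)
          · rw [h]; exact Ideal.mem_sup_right (Ideal.mem_span_singleton_self u)
          · intro a ha m
            obtain ⟨x, hx, y, hy, rfl⟩ := Submodule.mem_sup.1 ha
            obtain ⟨y, rfl⟩ := Ideal.mem_span_singleton.1 hy
            refine Subtype.ext ?_
            have hm : u • (m : Q) = 0 := m.2
            rw [Submodule.coe_smul, add_smul, hc x hx, mul_comm, mul_smul, hm]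
            simp
      intro i
      cases i with
      | zero => exact h0
      | succ i => exact S.ext_succ_mem_of_lsmul hu i (hK _) (S.ext_mem S.of_subsingleton i)
    intro M _ _ hM hc h0 i
    obtain ⟨u, hu, k, hk⟩ := hchoice M hM ((S.ext_zero_iff b).1 h0)
    have hMk : ∀ i, S.mem (E R (R ⧸ b) (torsionByIdeal (b ^ k) M) i) := fun i =>
      S.ext_mem (S.torsionByIdeal_pow_mem b ((S.ext_zero_iff b).1 h0) k) i
    have hses := IsSES.of_submodule (torsionByIdeal (b ^ k) M)
    have hQ0 := SerreClass.cov_mem₃ hses h0 (hMk 1)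
    refine SerreClass.cov_mem₂ hses (hMk i) (red _ (hM.of_surjective _ hses.surj)
      (fun a ha q => ?_) hQ0 u hu (fun q => ?_) i)
    · obtain ⟨m, rfl⟩ := hses.surj q
      rw [← map_smul, hc a ha, map_zero]
    · obtain ⟨m, rfl⟩ := hses.surj q
      obtain ⟨m', hm'⟩ := hk m
      refine ⟨Submodule.mkQ _ m', ?_⟩
      rw [LinearMap.lsmul_apply, ← map_smul, eq_comm, ← sub_eq_zero, ← map_sub]
      exact (Submodule.Quotient.mk_eq_zero _).2 hm'
  exact main ⊥ M hM (by simp) h0 i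

/-- If every `b`-torsion module `M` with `0 :_M b` in the Serre class `S` is, up to `b`-power
torsion and `T`-torsion, divisible by some `u ∈ b`, and `Hom(R/b, Z)` controls all `Ext^i(R/b, Z)`
for `T`-torsion modules `Z`, then `Ext^0` and `Ext^1` control all `Ext^i(R/b, M)`. -/
lemma SerreClass.ext_mem_of_ext_one_mem [IsNoetherianRing R] (S : SerreClass R) (b : Ideal R)
    (T : Submonoid R)
    (hchoice : ∀ (M : Type u) [AddCommGroup M] [Module R M], IsPowTorsion b M →
      S.mem (torsionByIdeal b M) → ∃ u ∈ b, ∃ k : ℕ, ∀ m : M, ∃ t ∈ T, ∃ m' : M,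
        t • m - u • m' ∈ torsionByIdeal (b ^ k) M)
    (htors : ∀ (Z : Type u) [AddCommGroup Z] [Module R Z], IsPowTorsion b Z →
      (∀ z : Z, ∃ t ∈ T, t • z = 0) → S.mem (torsionByIdeal b Z) →
      ∀ i, S.mem (E R (R ⧸ b) Z i))
    (M : Type u) [AddCommGroup M] [Module R M] (hM : IsPowTorsion b M)
    (h0 : S.mem (E R (R ⧸ b) M 0)) (h1 : S.mem (E R (R ⧸ b) M 1)) (i : ℕ) :
    S.mem (E R (R ⧸ b) M i) := by
  have main : ∀ c : Ideal R, ∀ (M : Type u) [AddCommGroup M] [Module R M], IsPowTorsion b M →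
      (∀ a ∈ c, ∀ m : M, a • m = 0) → S.mem (E R (R ⧸ b) M 0) → S.mem (E R (R ⧸ b) M 1) →
      ∀ i, S.mem (E R (R ⧸ b) M i) := by
    intro c
    induction c using IsNoetherian.induction with
    | hgt c ih =>
    have red : ∀ (Q : Type u) [AddCommGroup Q] [Module R Q], IsPowTorsion b Q →
        (∀ a ∈ c, ∀ m : Q, a • m = 0) → S.mem (E R (R ⧸ b) Q 0) → S.mem (E R (R ⧸ b) Q 1) →
        ∀ u ∈ b, (∀ q : Q, ∃ t ∈ T, ∃ q' : Q, t • q = u • q') →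
        ∀ i, S.mem (E R (R ⧸ b) Q i) := by
      intro Q _ _ hQ hc h0 h1 u hu hdiv
      by_cases huc : u ∈ c
      · refine htors Q hQ (fun z => ?_) ((S.ext_zero_iff b).1 h0)
        obtain ⟨t, ht, q', hq'⟩ := hdiv z
        exact ⟨t, ht, hq'.trans (hc u huc q')⟩
      set L := LinearMap.lsmul R Q u with hL
      have hinj := (LinearMap.ker L).injective_subtype
      have hr : IsSES (LinearMap.ker L).subtype L.rangeRestrict :=
        IsSES.of_rangeRestrict L
      have hq := IsSES.of_submodule (LinearMap.range L)
      have hK : ∀ i, S.mem (E R (R ⧸ b) (LinearMap.ker L) i) := by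
        refine ih (c ⊔ Ideal.span {u}) (lt_of_le_of_ne le_sup_left fun h => huc ?_) _
          (hQ.of_injective _ hinj) ?_ (SerreClass.cov_mem_zero hinj h0)
          (SerreClass.cov_mem₁ hr (SerreClass.cov_mem_zero hq.inj h0) h1)
        · rw [h]; exact Ideal.mem_sup_right (Ideal.mem_span_singleton_self u)
        · intro a ha m
          obtain ⟨x, hx, y, hy, rfl⟩ := Submodule.mem_sup.1 ha
          obtain ⟨y, rfl⟩ := Ideal.mem_span_singleton.1 hy
          refine Subtype.ext ?_
          have hm : u • (m : Q) = 0 := m.2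
          rw [Submodule.coe_smul, add_smul, hc x hx, mul_comm, mul_smul, hm]
          simp
      have hZ : ∀ i, S.mem (E R (R ⧸ b) (Q ⧸ LinearMap.range L) i) := by
        refine htors _ (hQ.of_surjective _ hq.surj) (fun z => ?_) ((S.ext_zero_iff b).1
          (SerreClass.cov_mem₃ hq h0 (SerreClass.cov_mem₃ hr h1 (hK 2))))
        obtain ⟨q, rfl⟩ := hq.surj z
        obtain ⟨t, ht, q', hq'⟩ := hdiv q
        refine ⟨t, ht, ?_⟩
        rw [← map_smul, hq']
        exact (Submodule.Quotient.mk_eq_zero _).2 ⟨q', rfl⟩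
      intro i
      cases i with
      | zero => exact h0
      | succ i => exact S.ext_succ_mem_of_lsmul hu i (hK _) (hZ i)
    intro M _ _ hM hc h0 h1 i
    obtain ⟨u, hu, k, hk⟩ := hchoice M hM ((S.ext_zero_iff b).1 h0)
    have hMk : ∀ i, S.mem (E R (R ⧸ b) (torsionByIdeal (b ^ k) M) i) := fun i =>
      S.ext_mem (S.torsionByIdeal_pow_mem b ((S.ext_zero_iff b).1 h0) k) i
    have hses := IsSES.of_submodule (torsionByIdeal (b ^ k) M)
    refine SerreClass.cov_mem₂ hses (hMk i) (red _ (hM.of_surjective _ hses.surj)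
      (fun a ha q => ?_) (SerreClass.cov_mem₃ hses h0 (hMk 1))
      (SerreClass.cov_mem₃ hses h1 (hMk 2)) u hu (fun q => ?_) i)
    · obtain ⟨m, rfl⟩ := hses.surj q
      rw [← map_smul, hc a ha, map_zero]
    · obtain ⟨m, rfl⟩ := hses.surj q
      obtain ⟨t, ht, m', hm'⟩ := hk m
      refine ⟨t, ht, Submodule.mkQ _ m', ?_⟩
      rw [← map_smul, ← map_smul, ← sub_eq_zero, ← map_sub]
      exact (Submodule.Quotient.mk_eq_zero _).2 hm'
  exact main ⊥ M hM (by simp) h0 h1 i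

end

end ExtCofinite

namespace ExtCofinite

section

variable {R : Type u} [CommRing R]

/-- The Serre class of Noetherian modules. -/
def fgClass (R : Type u) [CommRing R] : SerreClass R where
  mem V _ _ := IsNoetherian R V
  zero := inferInstance
  of_exact f g h _ _ := isNoetherian_of_range_eq_ker f g (LinearMap.exact_iff.1 h).symm

/-- The Serre class of modules of finite length. -/
def finLengthClass (R : Type u) [CommRing R] : SerreClass R where
  mem V _ _ := IsNoetherian R V ∧ IsArtinian R V
  zero := ⟨inferInstance, inferInstance⟩
  of_exact f g h hU hW :=
    ⟨have := hU.1; have := hW.1; isNoetherian_of_range_eq_ker f g (LinearMap.exact_iff.1 h).symm,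
      have := hU.2; have := hW.2; isArtinian_of_range_eq_ker f g (LinearMap.exact_iff.1 h).symm⟩

/-- The Serre class of modules all of whose elements are killed by a power of `s`. -/
def torsionClass (s : R) : SerreClass R where
  mem V _ _ := ∀ v : V, ∃ k : ℕ, s ^ k • v = 0
  zero := fun v => ⟨0, Subsingleton.elim _ _⟩
  of_exact f g h hU hW v := by
    obtain ⟨k, hk⟩ := hW (g v)
    rw [← map_smul] at hk
    obtain ⟨w, hw⟩ := (h _).1 hk
    obtain ⟨l, hl⟩ := hU w
    exact ⟨l + k, by rw [pow_add, mul_smul, ← hw, ← map_smul, hl, map_zero]⟩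

lemma exists_fg_map_eq {V W : Type u} [AddCommGroup V] [Module R V] [AddCommGroup W] [Module R W]
    (g : V →ₗ[R] W) {L : Submodule R W} (hL : L.FG) (h : L ≤ LinearMap.range g) :
    ∃ P : Submodule R V, P.FG ∧ P.map g = L := by
  classical
  obtain ⟨G, rfl⟩ := hL
  have hG : ∀ x : G, ∃ v, g v = x := fun x => h (Submodule.subset_span x.2)
  choose v hv using hG
  refine ⟨Submodule.span R (Set.range v), Submodule.fg_span (Set.finite_range v), ?_⟩
  rw [Submodule.map_span]
  congr 1
  ext x
  constructor
  · rintro ⟨_, ⟨y, rfl⟩, rfl⟩; rw [hv]; exact y.2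
  · intro hx; exact ⟨_, ⟨⟨x, hx⟩, rfl⟩, hv _⟩

/-- The Serre class of modules which are finitely generated up to `s`-power torsion, for some
`s ∈ T`. -/
def genClass [IsNoetherianRing R] (T : Submonoid R) : SerreClass R where
  mem V _ _ := ∃ s ∈ T, ∃ L : Submodule R V, L.FG ∧ ∀ v : V, ∃ k : ℕ, s ^ k • v ∈ L
  zero := ⟨1, T.one_mem, ⊥, Submodule.fg_bot, fun v => ⟨0, Subsingleton.elim _ _⟩⟩
  of_exact {U V W} _ _ _ _ _ _ f g h hU hW := by
    obtain ⟨s, hs, L, hL, hsL⟩ := hU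
    obtain ⟨t, ht, L', hL', htL'⟩ := hW
    classical
    have : Module.Finite R L' := Module.Finite.iff_fg.2 hL'
    have hn : IsNoetherian R L' := isNoetherian_of_isNoetherianRing_of_finite R L'
    have hfg : (L' ⊓ LinearMap.range g).FG := isNoetherian_submodule.1 hn _ inf_le_left
    obtain ⟨P, hP, hPg⟩ := exists_fg_map_eq g hfg inf_le_right
    refine ⟨s * t, T.mul_mem hs ht, P ⊔ L.map f, hP.sup (hL.map f), fun v => ?_⟩
    obtain ⟨k, hk⟩ := htL' (g v)
    have hk' : g (t ^ k • v) ∈ P.map g := by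
      rw [hPg, map_smul]
      exact ⟨hk, ⟨t ^ k • v, map_smul _ _ _⟩⟩
    obtain ⟨p, hp, hpv⟩ := hk'
    obtain ⟨w, hw⟩ := (h (t ^ k • v - p)).1 (by rw [map_sub, hpv, sub_self])
    obtain ⟨l, hl⟩ := hsL w
    refine ⟨k + l, ?_⟩
    have e : (s * t) ^ (k + l) • v = (s ^ (k + l) * t ^ l) • p + (s ^ k * t ^ l) • f (s ^ l • w) := by
      rw [map_smul, hw]
      module
    rw [e]
    exact add_mem (Submodule.mem_sup_left (P.smul_mem _ hp))
      (Submodule.smul_mem _ _ (Submodule.mem_sup_right ⟨_, hl, rfl⟩))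

lemma isArtinian_of_annihilated {b : Ideal R} [IsArtinianRing (R ⧸ b)] {N : Type u}
    [AddCommGroup N] [Module R N] [Module.Finite R N] (hN : ∀ a ∈ b, ∀ x : N, a • x = 0) :
    IsArtinian R N := by
  obtain ⟨n, p, hp⟩ := exists_surjective_of_annihilated b hN
  have : IsArtinian R (Fin n → R ⧸ b) :=
    isArtinian_of_surjective_algebraMap (R := R ⧸ b) (S := R) Ideal.Quotient.mk_surjective
  exact isArtinian_of_surjective _ p hp

lemma exists_smul_of_localizedModule_mk_eq_zero {T : Submonoid R} {M : Type u} [AddCommGroup M]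
    [Module R M] {c : Ideal R} (hc : c.FG) {x : M}
    (h : ∀ a ∈ c, LocalizedModule.mk (a • x) (1 : T) = 0) :
    ∃ t ∈ T, ∀ a ∈ c, a • t • x = 0 := by
  classical
  obtain ⟨G, rfl⟩ := hc
  have h' : ∀ a : R, ∃ t ∈ T, a ∈ G → t • a • x = 0 := fun a => by
    by_cases ha : a ∈ G
    · have := h a (Ideal.subset_span ha)
      rw [← LocalizedModule.zero_mk (1 : T), LocalizedModule.mk_eq] at this
      obtain ⟨u, hu⟩ := this
      exact ⟨u, u.2, fun _ => by simpa [Submonoid.smul_def] using hu⟩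
    · exact ⟨1, T.one_mem, fun h => absurd h ha⟩
  choose t ht htx using h'
  refine ⟨∏ a ∈ G, t a, T.prod_mem fun a _ => ht a, fun a ha => ?_⟩
  suffices Ideal.span (G : Set R) ≤ LinearMap.ker (LinearMap.toSpanSingleton R M
      ((∏ a ∈ G, t a) • x)) from this ha
  rw [Ideal.span_le]
  intro a ha
  change a • (∏ a ∈ G, t a) • x = 0
  rw [← Finset.prod_erase_mul _ _ ha, mul_smul, smul_comm, smul_comm a, htx a ha, smul_zero]

lemma isArtinianRing_quotient_localization [IsNoetherianRing R] (T : Submonoid R) (b : Ideal R)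
    (hT : ∀ P : Ideal R, P.IsPrime → b ≤ P → Disjoint (T : Set R) P → P ∈ b.minimalPrimes) :
    IsArtinianRing (Localization T ⧸ b.map (algebraMap R (Localization T))) := by
  rw [isArtinianRing_iff_isNoetherianRing_krullDimLE_zero]
  have := IsLocalization.isNoetherianRing T (Localization T) inferInstance
  refine ⟨inferInstance, Ring.KrullDimLE.mk₀ fun P hP => ?_⟩
  obtain ⟨Q, hQ, hPQ⟩ := Ideal.exists_le_maximal P hP.ne_top
  suffices P = Q by rwa [this]
  refine le_antisymm hPQ ?_
  have hQp := hQ.isPrime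
  let π := Ideal.Quotient.mk (b.map (algebraMap R (Localization T)))
  have hπ : Function.Surjective π := Ideal.Quotient.mk_surjective
  have key : ∀ I : Ideal (Localization T ⧸ b.map (algebraMap R (Localization T))), I.IsPrime →
      ((I.comap π).under R) ∈ b.minimalPrimes := fun I hI => by
    have h1 := (IsLocalization.isPrime_iff_isPrime_disjoint T (Localization T) (I.comap π)).1
      (Ideal.comap_isPrime π I)
    refine hT _ h1.1 ?_ h1.2
    rw [Ideal.under_def, ← Ideal.map_le_iff_le_comap]
    intro x hx
    rw [Ideal.mem_comap, Ideal.Quotient.eq_zero_iff_mem.2 hx]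
    exact zero_mem _
  have hle : (Q.comap π).under R ≤ (P.comap π).under R :=
    (key Q hQp).2 ⟨(key P hP).1.1, (key P hP).1.2⟩ (Ideal.comap_mono (Ideal.comap_mono hPQ))
  have h2 : Q.comap π ≤ P.comap π := by
    rw [← IsLocalization.map_under T (Localization T) (Q.comap π),
      ← IsLocalization.map_under T (Localization T) (P.comap π)]
    exact Ideal.map_mono hle
  exact (Ideal.comap_le_comap_iff_of_surjective π hπ Q P).1 h2

/-- If `R/b` becomes Artinian at `T` and `0 :_M b` is finitely generated at `T`, then `M` is
divisible by an element of `b` up to `T`-torsion and `b`-power torsion. -/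
lemma exists_choice_of_genClass_mem [IsNoetherianRing R] (T : Submonoid R) (b : Ideal R)
    (hT : ∀ P : Ideal R, P.IsPrime → b ≤ P → Disjoint (T : Set R) P → P ∈ b.minimalPrimes)
    (M : Type u) [AddCommGroup M] [Module R M] (hM : IsPowTorsion b M)
    (h : (genClass T).mem (torsionByIdeal b M)) :
    ∃ u ∈ b, ∃ k : ℕ, ∀ m : M, ∃ t ∈ T, ∃ m' : M,
      t • m - u • m' ∈ torsionByIdeal (b ^ k) M := by
  classical
  have := isArtinianRing_quotient_localization T b hT
  have := IsLocalization.isNoetherianRing T (Localization T) inferInstance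
  set b' := b.map (algebraMap R (Localization T)) with hb'
  have hbFG : b.FG := (isNoetherianRing_iff_ideal_fg R).1 inferInstance b
  have hb'FG : b'.FG := hbFG.map _
  obtain ⟨s, hs, L, ⟨G, hG⟩, hsL⟩ := h
  -- the localized module
  have hM' : IsPowTorsion b' (LocalizedModule T M) := by
    intro x
    induction x using LocalizedModule.induction_on with
    | h m t =>
    obtain ⟨n, hn⟩ := hM m
    refine ⟨n, fun a ha => ?_⟩
    rw [hb', ← Ideal.map_pow] at ha
    suffices (b ^ n).map (algebraMap R (Localization T)) ≤ LinearMap.ker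
      (LinearMap.toSpanSingleton (Localization T) _ (LocalizedModule.mk m t)) from this ha
    rw [Ideal.map_le_iff_le_comap]
    intro a ha
    change algebraMap R (Localization T) a • LocalizedModule.mk m t = 0
    rw [algebraMap_smul, LocalizedModule.smul'_mk, hn a ha, LocalizedModule.zero_mk]
  have hart : IsArtinian (Localization T) (torsionByIdeal b' (LocalizedModule T M)) := by
    let L' : Submodule (Localization T) (LocalizedModule T M) :=
      Submodule.span _ ((fun g : torsionByIdeal b M => LocalizedModule.mk (g : M) (1 : T)) '' G)
    have hL'fin : Module.Finite (Localization T) L' := by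
      rw [Module.Finite.iff_fg]
      exact Submodule.fg_span (G.finite_toSet.image _)
    have hL'b : L' ≤ torsionByIdeal b' (LocalizedModule T M) := by
      rw [Submodule.span_le]
      rintro _ ⟨g, -, rfl⟩
      rw [SetLike.mem_coe, mem_torsionByIdeal]
      intro a ha
      suffices b.map (algebraMap R (Localization T)) ≤ LinearMap.ker
        (LinearMap.toSpanSingleton (Localization T) _ (LocalizedModule.mk (g : M) (1 : T))) from
        this ha
      rw [Ideal.map_le_iff_le_comap]
      intro a ha
      change algebraMap R (Localization T) a • LocalizedModule.mk (g : M) (1 : T) = 0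
      rw [algebraMap_smul, LocalizedModule.smul'_mk, mem_torsionByIdeal.1 g.2 a ha,
        LocalizedModule.zero_mk]
    have hL'art : IsArtinian (Localization T) L' :=
      isArtinian_of_annihilated (b := b') fun a ha x =>
        Subtype.ext (mem_torsionByIdeal.1 (hL'b x.2) a ha)
    have hmemL : ∀ g : torsionByIdeal b M, g ∈ L →
        LocalizedModule.mk (g : M) (1 : T) ∈ L' := by
      intro g hg
      rw [← hG] at hg
      induction hg using Submodule.span_induction with
      | mem g hg => exact Submodule.subset_span ⟨g, hg, rfl⟩
      | zero =>
        rw [Submodule.coe_zero, LocalizedModule.zero_mk]; exact zero_mem _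
      | add x y _ _ hx hy =>
        have : LocalizedModule.mk ((x + y : torsionByIdeal b M) : M) (1 : T) =
            LocalizedModule.mk (x : M) 1 + LocalizedModule.mk (y : M) 1 :=
          map_add (LocalizedModule.mkLinearMap T M) (x : M) y
        rw [this]; exact add_mem hx hy
      | smul r x _ hx =>
        have : LocalizedModule.mk ((r • x : torsionByIdeal b M) : M) (1 : T) =
            algebraMap R (Localization T) r • LocalizedModule.mk (x : M) 1 := by
          rw [algebraMap_smul, LocalizedModule.smul'_mk]; rfl
        rw [this]; exact L'.smul_mem _ hx
    have hle : torsionByIdeal b' (LocalizedModule T M) ≤ L' := by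
      intro x hx
      induction x using LocalizedModule.induction_on with
      | h m t =>
      obtain ⟨t', ht', hm⟩ := exists_smul_of_localizedModule_mk_eq_zero (T := T) (x := m) hbFG
        (fun a ha => by
          have h1 := mem_torsionByIdeal.1 hx _ (Ideal.mem_map_of_mem _ ha)
          rw [algebraMap_smul, LocalizedModule.smul'_mk] at h1
          have h2 := congrArg (fun z => (t : R) • z) h1
          simp only [smul_zero] at h2
          rwa [LocalizedModule.smul'_mk, ← Submonoid.smul_def, LocalizedModule.mk_cancel] at h2)
      obtain ⟨k, hk⟩ := hsL ⟨t' • m, mem_torsionByIdeal.2 hm⟩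
      have h3 := hmemL _ hk
      have h4 : LocalizedModule.mk m t = Localization.mk 1 (t * (⟨s, hs⟩ ^ k * ⟨t', ht'⟩)) •
          LocalizedModule.mk (s ^ k • t' • m) (1 : T) := by
        rw [LocalizedModule.mk_smul_mk, one_smul, mul_one, smul_smul]
        exact (LocalizedModule.mk_cancel_common_right t (⟨s, hs⟩ ^ k * ⟨t', ht'⟩) m).symm
      rw [h4]
      exact L'.smul_mem _ h3
    exact isArtinian_of_le hle
  have hArt := isArtinian_of_torsionByIdeal hb'FG hM' hart
  obtain ⟨u', hu', k, hk⟩ := exists_smul_sup_torsion_eq_top (M := LocalizedModule T M) hb'FG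
  obtain ⟨⟨⟨u, hu⟩, tu⟩, hut⟩ := (IsLocalization.mem_map_algebraMap_iff T (Localization T)).1 hu'
  refine ⟨u, hu, k, fun m => ?_⟩
  obtain ⟨x, hx⟩ := hk (LocalizedModule.mk m 1)
  induction x using LocalizedModule.induction_on with
  | h m' t' =>
  have hbk : (b ^ k).FG := (isNoetherianRing_iff_ideal_fg R).1 inferInstance _
  obtain ⟨t'', ht'', hz⟩ := exists_smul_of_localizedModule_mk_eq_zero (T := T)
    (x := ((tu : R) * t') • m - u • m') hbk (fun a ha => by
      have h1 : a • (LocalizedModule.mk m (1 : T) - u' • LocalizedModule.mk m' t') = 0 := by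
        rw [← algebraMap_smul (Localization T) a]
        refine mem_torsionByIdeal.1 hx _ ?_
        rw [hb', ← Ideal.map_pow]
        exact Ideal.mem_map_of_mem _ ha
      have h2 : (t' : R) • LocalizedModule.mk m' t' = LocalizedModule.mk m' (1 : T) := by
        rw [LocalizedModule.smul'_mk, ← Submonoid.smul_def, LocalizedModule.mk_cancel]
      have h3 : (tu : R) • u' • (t' : R) • LocalizedModule.mk m' t' =
          u • LocalizedModule.mk m' (1 : T) := by
        rw [h2, ← algebraMap_smul (Localization T) (tu : R), smul_smul, mul_comm, hut,
          algebraMap_smul]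
      have h4 : LocalizedModule.mk (a • (((tu : R) * t') • m - u • m')) (1 : T) =
          ((tu : R) * t') • a • (LocalizedModule.mk m (1 : T) - u' • LocalizedModule.mk m' t') := by
        rw [smul_comm ((tu : R) * t') a, smul_sub ((tu : R) * t'),
          mul_smul (tu : R) (t' : R) (u' • _), smul_comm (t' : R) u', h3]
        change LocalizedModule.mkLinearMap T M _ =
          a • (_ • LocalizedModule.mkLinearMap T M _ - _ • LocalizedModule.mkLinearMap T M _)
        rw [map_smul, map_sub, map_smul, map_smul]
      rw [h4, h1, smul_zero])
  refine ⟨t'' * (tu * t'), T.mul_mem ht'' (T.mul_mem tu.2 t'.2), t'' • m',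
    mem_torsionByIdeal.2 fun a ha => ?_⟩
  have := hz a ha
  rwa [smul_sub, smul_smul, smul_comm t'' u m'] at this

end

end ExtCofinite

namespace ExtCofinite

section

variable {R : Type u} [CommRing R]

lemma ringKrullDim_quotient_le_iff {I : Ideal R} {n : ℕ} :
    ringKrullDim (R ⧸ I) ≤ n ↔
      ∀ l : LTSeries (PrimeSpectrum R), I ≤ l.head.asIdeal → l.length ≤ n := by
  rw [ringKrullDim_quotient]
  constructor
  · intro h l hl
    let l' : LTSeries (PrimeSpectrum.zeroLocus (R := R) I) :=
      { length := l.length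
        toFun := fun i => ⟨l i, fun x hx => l.head_le i (hl hx)⟩
        step := fun i => l.step i }
    have := (Order.LTSeries.length_le_krullDim l').trans h
    exact_mod_cast this
  · intro h
    refine iSup_le fun l => ?_
    have := h (l.map Subtype.val fun a b hab => hab) (fun x hx => l.head.2 hx)
    exact_mod_cast this

lemma ringKrullDim_quotient_anti {I J : Ideal R} (h : I ≤ J) :
    ringKrullDim (R ⧸ J) ≤ ringKrullDim (R ⧸ I) :=
  ringKrullDim_le_of_surjective (Ideal.Quotient.factor h) (Ideal.Quotient.factor_surjective h)

lemma exists_mem_smul_eq_zero {T : Submonoid R} {L : Type u} [AddCommGroup L] [Module R L]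
    [Module.Finite R L] (h : ∀ x : L, ∃ t ∈ T, t • x = 0) : ∃ t ∈ T, ∀ x : L, t • x = 0 := by
  classical
  obtain ⟨G, hG⟩ := (Module.finite_def (R := R) (M := L)).1 inferInstance
  choose t ht htx using h
  refine ⟨∏ g ∈ G, t g, T.prod_mem fun g _ => ht g, fun x => ?_⟩
  have hx : x ∈ Submodule.span R (G : Set L) := hG ▸ Submodule.mem_top
  suffices Submodule.span R (G : Set L) ≤
    LinearMap.ker (LinearMap.lsmul R L (∏ g ∈ G, t g)) from this hx
  rw [Submodule.span_le]
  intro g hg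
  change (∏ g ∈ G, t g) • g = 0
  rw [← Finset.prod_erase_mul _ _ hg, mul_smul, htx g, smul_zero]

/-- The elements lying outside all minimal primes `p` of `b` with `dim R/p > e`. -/
def avoiding (e : ℕ) (b : Ideal R) : Submonoid R where
  carrier := {z | ∀ p ∈ b.minimalPrimes, z ∈ p → ringKrullDim (R ⧸ p) ≤ e}
  one_mem' _ hp h := absurd ((Ideal.eq_top_iff_one _).2 h) hp.1.1.ne_top
  mul_mem' hx hy p hp h := (hp.1.1.mem_or_mem h).elim (hx p hp) (hy p hp)

lemma mem_avoiding {e : ℕ} {b : Ideal R} {z : R} :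
    z ∈ avoiding e b ↔ ∀ p ∈ b.minimalPrimes, z ∈ p → ringKrullDim (R ⧸ p) ≤ e := Iff.rfl

lemma ringKrullDim_quotient_sup_le {e : ℕ} {b : Ideal R} (hb : ringKrullDim (R ⧸ b) ≤ (e + 1 : ℕ))
    {z : R} (hz : z ∈ avoiding e b) : ringKrullDim (R ⧸ (b ⊔ Ideal.span {z})) ≤ e := by
  rw [ringKrullDim_quotient_le_iff] at hb ⊢
  intro l hl
  obtain ⟨p, hp, hpl⟩ := Ideal.exists_minimalPrimes_le (le_sup_left.trans hl)
  by_cases hzp : z ∈ p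
  · exact ringKrullDim_quotient_le_iff.1 (hz p hp hzp) l hpl
  · have hlt : (⟨p, hp.1.1⟩ : PrimeSpectrum R) < l.head :=
      lt_of_le_of_ne hpl fun h => hzp (by
        have : p = l.head.asIdeal := congrArg PrimeSpectrum.asIdeal h
        rw [this]
        exact hl (Ideal.mem_sup_right (Ideal.mem_span_singleton_self z)))
    have := hb (l.cons _ hlt) (by rw [RelSeries.head_cons]; exact hp.1.2)
    simpa using this

variable [IsNoetherianRing R]

lemma exists_mem_avoiding {e : ℕ} {b P : Ideal R}
    (h : ∀ p ∈ b.minimalPrimes, P ≤ p → ringKrullDim (R ⧸ p) ≤ e) :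
    ∃ z ∈ P, z ∈ avoiding e b := by
  by_contra! hcon
  have hfin : {p ∈ b.minimalPrimes | ¬ ringKrullDim (R ⧸ p) ≤ e}.Finite :=
    (Ideal.finite_minimalPrimes_of_isNoetherianRing R b).subset fun p hp => hp.1
  have hsub : (P : Set R) ⊆ ⋃ p ∈ (hfin.toFinset : Set (Ideal R)), (p : Set R) := by
    intro z hz
    have := hcon z hz
    rw [mem_avoiding] at this
    push Not at this
    obtain ⟨p, hp, hzp, hd⟩ := this
    exact Set.mem_biUnion (by simpa using ⟨hp, hd⟩) hzp
  obtain ⟨p, hp, hPp⟩ := (Ideal.subset_union_prime (f := fun p : Ideal R => p) ⊥ ⊥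
    (fun p hp _ _ => ((hfin.mem_toFinset).1 hp).1.1.1)).1 hsub
  have := (hfin.mem_toFinset).1 hp
  exact this.2 (h p this.1 hPp)

lemma mem_minimalPrimes_of_disjoint_avoiding {e : ℕ} {b P : Ideal R} (hP : P.IsPrime) (hb : b ≤ P)
    (hd : Disjoint (avoiding e b : Set R) P) : P ∈ b.minimalPrimes := by
  by_contra hcon
  obtain ⟨z, hz, hz'⟩ := exists_mem_avoiding (e := e) (b := b) (P := P) fun p hp hPp =>
    absurd (le_antisymm hPp (hp.2 ⟨hP, hb⟩ hPp) ▸ hp) hcon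
  exact Set.disjoint_left.1 hd hz' hz

lemma isArtinianRing_of_ringKrullDim_le_zero {b : Ideal R} (h : ringKrullDim (R ⧸ b) ≤ (0 : ℕ)) :
    IsArtinianRing (R ⧸ b) :=
  isArtinianRing_iff_isNoetherianRing_krullDimLE_zero.2
    ⟨inferInstance, (Order.krullDimLE_iff 0 _).2 h⟩

lemma ext_finLength {b : Ideal R} {M : Type u} [AddCommGroup M] [Module R M]
    (hM : IsPowTorsion b M) (h : (finLengthClass R).mem (torsionByIdeal b M)) (i : ℕ) :
    (finLengthClass R).mem (E R (R ⧸ b) M i) := by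
  refine SerreClass.ext_mem_of_hom_mem _ b (fun M _ _ hM h => ?_) M hM
    ((SerreClass.ext_zero_iff _ b).2 h) i
  have hb : b.FG := (isNoetherianRing_iff_ideal_fg R).1 inferInstance b
  have := isArtinian_of_torsionByIdeal hb hM h.2
  exact exists_smul_sup_torsion_eq_top hb

lemma finLength_of_ringKrullDim_le_zero {b : Ideal R} (h : ringKrullDim (R ⧸ b) ≤ (0 : ℕ))
    {N : Type u} [AddCommGroup N] [Module R N] (hN : IsNoetherian R N)
    (hb : ∀ a ∈ b, ∀ x : N, a • x = 0) : (finLengthClass R).mem N := by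
  have := isArtinianRing_of_ringKrullDim_le_zero h
  exact ⟨hN, isArtinian_of_annihilated hb⟩

/-- In dimension one, `Ext^0` and `Ext^1` control all `Ext^i`. -/
lemma ext_fg_of_ringKrullDim_le_one {b : Ideal R} (hb : ringKrullDim (R ⧸ b) ≤ (1 : ℕ))
    {M : Type u} [AddCommGroup M] [Module R M] (hM : IsPowTorsion b M)
    (h0 : (fgClass R).mem (E R (R ⧸ b) M 0)) (h1 : (fgClass R).mem (E R (R ⧸ b) M 1)) (i : ℕ) :
    (fgClass R).mem (E R (R ⧸ b) M i) := by
  refine SerreClass.ext_mem_of_ext_one_mem _ b (avoiding 0 b) (fun M _ _ hM h => ?_)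
    (fun Z _ _ hZ hT h i => ?_) M hM h0 h1 i
  · refine exists_choice_of_genClass_mem _ b
      (fun P hP hbP hd => mem_minimalPrimes_of_disjoint_avoiding hP hbP hd) M hM ?_
    have : IsNoetherian R (torsionByIdeal b M) := h
    exact ⟨1, Submonoid.one_mem _, ⊤, IsNoetherian.noetherian _, fun v => ⟨0, trivial⟩⟩
  · have : IsNoetherian R (torsionByIdeal b Z) := h
    obtain ⟨s, hs, hsZ⟩ := exists_mem_smul_eq_zero (T := avoiding 0 b) (L := torsionByIdeal b Z)
      fun x => (hT x).imp fun t ht => ⟨ht.1, Subtype.ext ht.2⟩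
    refine (ext_finLength hZ (finLength_of_ringKrullDim_le_zero
      (ringKrullDim_quotient_sup_le (z := s) hb hs) h fun a ha x => ?_) i).1
    obtain ⟨c, hc, y, hy, rfl⟩ := Submodule.mem_sup.1 ha
    obtain ⟨y, rfl⟩ := Ideal.mem_span_singleton.1 hy
    have hcx : c • x = 0 := Subtype.ext (mem_torsionByIdeal.1 x.2 c hc)
    rw [add_smul, mul_comm, mul_smul, hsZ, smul_zero, hcx, add_zero]

/-- `Ext^0` and `Ext^1` control all `Ext^i` generically. -/
lemma ext_genClass_mem (T : Submonoid R) (b : Ideal R)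
    (hT : ∀ P : Ideal R, P.IsPrime → b ≤ P → Disjoint (T : Set R) P → P ∈ b.minimalPrimes)
    {M : Type u} [AddCommGroup M] [Module R M] (hM : IsPowTorsion b M)
    (h0 : (genClass T).mem (E R (R ⧸ b) M 0)) (h1 : (genClass T).mem (E R (R ⧸ b) M 1)) (i : ℕ) :
    (genClass T).mem (E R (R ⧸ b) M i) := by
  refine SerreClass.ext_mem_of_ext_one_mem _ b T
    (fun M _ _ hM h => exists_choice_of_genClass_mem T b hT M hM h)
    (fun Z _ _ hZ hTZ h i => ?_) M hM h0 h1 i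
  obtain ⟨s, hs, L, hL, hsL⟩ := h
  have : Module.Finite R L := Module.Finite.iff_fg.2 hL
  obtain ⟨t, ht, htL⟩ := exists_mem_smul_eq_zero (T := T) (L := L)
    fun x => (hTZ x.1).imp fun t ht => ⟨ht.1, Subtype.ext (Subtype.ext ht.2)⟩
  have hZst : (torsionClass (s * t)).mem Z := by
    have h1 : (torsionClass (s * t)).mem (torsionByIdeal b Z) := fun v => by
      obtain ⟨k, hk⟩ := hsL v
      refine ⟨k + 1, ?_⟩
      have := congrArg Subtype.val (htL ⟨_, hk⟩)
      have h2 : t • s ^ k • v = 0 := this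
      rw [show (s * t) ^ (k + 1) = (s * t ^ k) * (t * s ^ k) by ring, mul_smul, mul_smul t, h2,
        smul_zero]
    intro z
    obtain ⟨n, hn⟩ := hZ z
    obtain ⟨k, hk⟩ := (torsionClass (s * t)).torsionByIdeal_pow_mem b h1 n
      ⟨z, mem_torsionByIdeal.2 hn⟩
    exact ⟨k, congrArg Subtype.val hk⟩
  refine ⟨s * t, T.mul_mem hs ht, ⊥, Submodule.fg_bot, fun v => ?_⟩
  obtain ⟨k, hk⟩ := (torsionClass (s * t)).ext_mem (N := R ⧸ b) hZst i v
  exact ⟨k, (Submodule.mem_bot R).2 hk⟩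

end

end ExtCofinite

namespace ExtCofinite

/-- A complex assembled from finitely many copies of `M` by successive mapping cones of the
multiplications by elements of `l`, together with the contracting homotopies for the
elements of `l`. The retract of `M` lives in degree `r - l.length`. -/
structure KoszulData {R : Type u} [CommRing R] (S : SerreClass R) (b : Ideal R)
    (a : Ideal R) (M : Type u) [AddCommGroup M] [Module R M] (r k : ℕ) (l : List R) where
  X : ℕ → Type u
  [grp : ∀ i, AddCommGroup (X i)]
  [mod : ∀ i, Module R (X i)]
  d : ∀ i, X i →ₗ[R] X (i + 1)
  d_d : ∀ i x, d (i + 1) (d i x) = 0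
  subsingleton_low : ∀ i, i + k < r → Subsingleton (X i)
  subsingleton_high : ∀ i, r < i → Subsingleton (X i)
  ext_mem : ∀ j, S.mem (E R (R ⧸ b) M j) → ∀ i, S.mem (E R (R ⧸ b) (X i) j)
  torsion : ∀ i, IsPowTorsion a (X i)
  ext_d : ∀ i j x, E.cov (R ⧸ b) (d i) j x = 0
  of_mem : ∀ i j, i + k = r → S.mem (E R (R ⧸ b) (X i) j) → S.mem (E R (R ⧸ b) M j)
  homotopy : ∀ y ∈ l, ∃ h : ∀ i, X (i + 1) →ₗ[R] X i, (∀ x, h 0 (d 0 x) = y • x) ∧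
    ∀ i x, d i (h i x) + h (i + 1) (d (i + 1) x) = y • x

attribute [instance] KoszulData.grp KoszulData.mod

variable {R : Type u} [CommRing R] {S : SerreClass R} {a b : Ideal R}
  {M : Type u} [AddCommGroup M] [Module R M]

lemma IsPowTorsion.prod {N : Type u} [AddCommGroup N] [Module R N] (hM : IsPowTorsion a M)
    (hN : IsPowTorsion a N) : IsPowTorsion a (M × N) := by
  rintro ⟨m, n⟩
  obtain ⟨i, hi⟩ := hM m
  obtain ⟨j, hj⟩ := hN n
  refine ⟨i + j, fun x hx => ?_⟩
  rw [Prod.smul_mk, hi x (Ideal.pow_le_pow_right (Nat.le_add_right _ _) hx),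
    hj x (Ideal.pow_le_pow_right (Nat.le_add_left _ _) hx)]
  rfl

lemma IsPowTorsion.of_subsingleton [Subsingleton M] : IsPowTorsion a M :=
  fun _ => ⟨0, fun _ _ => Subsingleton.elim _ _⟩

lemma SerreClass.ext_mem_prod {A B N : Type u} [AddCommGroup A] [Module R A] [AddCommGroup B]
    [Module R B] [AddCommGroup N] [Module R N] {i : ℕ} (hA : S.mem (E R N A i))
    (hB : S.mem (E R N B i)) : S.mem (E R N (A × B) i) :=
  SerreClass.cov_mem₂ (f := LinearMap.inl R A B) (g := LinearMap.snd R A B)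
    ⟨LinearMap.inl_injective, LinearMap.snd_surjective, Function.Exact.inl_snd⟩ hA hB

lemma SerreClass.ext_mem_of_subsingleton {A N : Type u} [AddCommGroup A] [Module R A]
    [AddCommGroup N] [Module R N] [Subsingleton A] (i : ℕ) : S.mem (E R N A i) := by
  have : Subsingleton (E R N A i) := by
    refine subsingleton_of_forall_eq 0 fun x => ?_
    rw [← E.cov_id i x, Subsingleton.elim (LinearMap.id : A →ₗ[R] A) 0, E.cov_zero]
  exact S.of_subsingleton

/-- The trivial complex with `M` in degree `r`. -/
noncomputable def KoszulData.start (hM : IsPowTorsion a M) (r : ℕ) :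
    KoszulData S b a M r 0 [] where
  X i := PLift (i = r) → M
  d _ := 0
  d_d _ _ := rfl
  subsingleton_low i hi := by
    have : IsEmpty (PLift (i = r)) := ⟨fun h => by have := h.down; omega⟩
    infer_instance
  subsingleton_high i hi := by
    have : IsEmpty (PLift (i = r)) := ⟨fun h => by have := h.down; omega⟩
    infer_instance
  ext_mem j hj i := by
    by_cases h : i = r
    · have : Unique (PLift (i = r)) := ⟨⟨⟨h⟩⟩, fun _ => rfl⟩
      exact SerreClass.cov_equiv (LinearEquiv.funUnique (PLift (i = r)) R M).symm hj
    · have : IsEmpty (PLift (i = r)) := ⟨fun h' => h h'.down⟩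
      exact SerreClass.ext_mem_of_subsingleton j
  torsion i := by
    by_cases h : i = r
    · have : Unique (PLift (i = r)) := ⟨⟨⟨h⟩⟩, fun _ => rfl⟩
      exact hM.of_injective _ (LinearEquiv.funUnique (PLift (i = r)) R M).injective
    · have : IsEmpty (PLift (i = r)) := ⟨fun h' => h h'.down⟩
      exact IsPowTorsion.of_subsingleton
  ext_d i j x := E.cov_zero _ _
  of_mem i j h hj := by
    have : Unique (PLift (i = r)) := ⟨⟨⟨h⟩⟩, fun _ => rfl⟩
    exact SerreClass.cov_equiv (LinearEquiv.funUnique (PLift (i = r)) R M) hj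
  homotopy y hy := by simp at hy

/-- The mapping cone of the multiplication by `z`. -/
noncomputable def KoszulData.cone {r k : ℕ} {l : List R} (K : KoszulData S b a M r k l)
    (hk : k < r) {z : R} (hz : z ∈ b) : KoszulData S b a M r (k + 1) (z :: l) where
  X i := K.X i × K.X (i + 1)
  d i := LinearMap.inl R _ _ ∘ₗ K.d i ∘ₗ LinearMap.fst R _ _ +
    (LinearMap.inl R _ _ ∘ₗ LinearMap.lsmul R _ z ∘ₗ LinearMap.snd R _ _ +
      (-1 : R) • LinearMap.inr R _ _ ∘ₗ K.d (i + 1) ∘ₗ LinearMap.snd R _ _)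
  d_d i x := by
    ext <;> simp [K.d_d]
  subsingleton_low i hi := by
    have := K.subsingleton_low i (by omega)
    have := K.subsingleton_low (i + 1) (by omega)
    infer_instance
  subsingleton_high i hi := by
    have := K.subsingleton_high i hi
    have := K.subsingleton_high (i + 1) (by omega)
    infer_instance
  ext_mem j hj i := SerreClass.ext_mem_prod (K.ext_mem j hj i) (K.ext_mem j hj (i + 1))
  torsion i := (K.torsion i).prod (K.torsion (i + 1))
  ext_d i j x := by
    rw [E.cov_add, E.cov_add, E.cov_smul, ← E.cov_comp, ← E.cov_comp, ← E.cov_comp,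
      ← E.cov_comp, ← E.cov_comp, ← E.cov_comp, K.ext_d, K.ext_d, E.cov_lsmul_eq_zero hz]
    simp
  of_mem i j h hj := by
    refine K.of_mem (i + 1) j (by omega) ?_
    have := K.subsingleton_low i (by omega)
    refine SerreClass.cov_equiv (LinearEquiv.ofBijective (LinearMap.snd R _ _)
      ⟨fun x y hxy => Prod.ext (Subsingleton.elim _ _) hxy, LinearMap.snd_surjective⟩) hj
  homotopy y hy := by
    rcases List.mem_cons.1 hy with rfl | hy
    · refine ⟨fun i => LinearMap.inr R _ _ ∘ₗ LinearMap.fst R _ _, fun x => ?_, fun i x => ?_⟩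
      · have := K.subsingleton_low 0 (by omega)
        ext
        · exact Subsingleton.elim _ _
        · simp [Subsingleton.elim x.1 0]
      · ext <;> simp
    · obtain ⟨h, h0, h1⟩ := K.homotopy y hy
      refine ⟨fun i => LinearMap.prodMap (h i) (-h (i + 1)), fun x => ?_, fun i x => ?_⟩
      · have := K.subsingleton_low 0 (by omega)
        ext
        · exact Subsingleton.elim _ _
        · have := h1 0 x.2
          rw [Subsingleton.elim (h 0 x.2) 0] at this
          simpa using this
      · ext
        · change (K.d i (h i x.1) + (z • (-h (i + 1) x.2) + (-1 : R) • 0)) +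
            h (i + 1) (K.d (i + 1) x.1 + (z • x.2 + (-1 : R) • 0)) = y • x.1
          rw [map_add, map_add, map_smul, ← h1 i x.1]
          simp only [smul_zero, map_zero, smul_neg]
          abel
        · change (0 + (0 + (-1 : R) • K.d (i + 1) (-h (i + 1) x.2))) +
            -h (i + 1 + 1) (0 + (0 + (-1 : R) • K.d (i + 1 + 1) x.2)) = y • x.2
          rw [← h1 (i + 1) x.2]
          simp

lemma exists_koszulData (hM : IsPowTorsion a M) (r : ℕ) (l : List R) (hl : l.length ≤ r)
    (hlb : ∀ y ∈ l, y ∈ b) : Nonempty (KoszulData S b a M r l.length l) := by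
  induction l with
  | nil => exact ⟨KoszulData.start hM r⟩
  | cons z l ih =>
    obtain ⟨K⟩ := ih (by simp at hl; omega) fun y hy => hlb y (List.mem_cons_of_mem _ hy)
    exact ⟨K.cone (by simpa using hl) (hlb z List.mem_cons_self)⟩

end ExtCofinite

namespace ExtCofinite

variable {R : Type u} [CommRing R] {S : SerreClass R} {a b : Ideal R}
  {M : Type u} [AddCommGroup M] [Module R M]

lemma sup_pow_le (a c : Ideal R) (n : ℕ) : (a ⊔ c) ^ n ≤ a ^ n ⊔ c := by
  induction n with
  | zero => simp
  | succ n ih =>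
    rw [pow_succ, pow_succ]
    refine (Ideal.mul_mono_left ih).trans ?_
    rw [Ideal.sup_mul, Ideal.mul_sup]
    exact sup_le (sup_le le_sup_left (le_sup_of_le_right Ideal.mul_le_right))
      (le_sup_of_le_right Ideal.mul_le_left)

lemma IsPowTorsion.sup (hM : IsPowTorsion a M) {c : Ideal R} (hc : ∀ x ∈ c, ∀ m : M, x • m = 0) :
    IsPowTorsion (a ⊔ c) M := by
  intro m
  obtain ⟨n, hn⟩ := hM m
  refine ⟨n, fun x hx => ?_⟩
  obtain ⟨y, hy, z, hz, rfl⟩ := Submodule.mem_sup.1 (sup_pow_le a c n hx)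
  rw [add_smul, hn y hy, hc z hz, add_zero]

lemma smul_eq_zero_of_mem_span {s : Set R} (h : ∀ x ∈ s, ∀ m : M, x • m = 0) :
    ∀ x ∈ Ideal.span s, ∀ m : M, x • m = 0 := by
  intro x hx m
  have : Ideal.span s ≤ Module.annihilator R M :=
    Ideal.span_le.2 fun y hy => Module.mem_annihilator.2 (h y hy)
  exact Module.mem_annihilator.1 (this hx) m

namespace KoszulData

variable {r k : ℕ} {l : List R} (K : KoszulData S b a M r k l)

/-- The coboundaries. -/
def bd : ∀ i, Submodule R (K.X i)
  | 0 => ⊥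
  | i + 1 => LinearMap.range (K.d i)

lemma bd_le (i : ℕ) : K.bd i ≤ LinearMap.ker (K.d i) := by
  cases i with
  | zero => exact bot_le
  | succ i =>
    rintro _ ⟨x, rfl⟩
    exact K.d_d i x

/-- The cohomology. -/
abbrev H (i : ℕ) : Type u :=
  LinearMap.ker (K.d i) ⧸ (K.bd i).submoduleOf (LinearMap.ker (K.d i))

lemma ses_H (i : ℕ) : IsSES (Submodule.inclusion (K.bd_le i))
    ((K.bd i).submoduleOf (LinearMap.ker (K.d i))).mkQ where
  inj := Submodule.inclusion_injective _
  surj := Submodule.mkQ_surjective _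
  exact := by
    rw [LinearMap.exact_iff, Submodule.ker_mkQ, Submodule.range_inclusion]
    rfl

/-- The differential, as a map onto the coboundaries. -/
def toBd (i : ℕ) : K.X i →ₗ[R] K.bd (i + 1) := (K.d i).rangeRestrict

lemma ses_Z (i : ℕ) : IsSES (LinearMap.ker (K.d i)).subtype (K.toBd i) :=
  IsSES.of_rangeRestrict (K.d i)

lemma cov_bd_subtype (N : Type u) [AddCommGroup N] [Module R N] (i n : ℕ) :
    E.cov N (K.bd i).subtype n = E.cov N (LinearMap.ker (K.d i)).subtype n ∘ₗ
      E.cov N (Submodule.inclusion (K.bd_le i)) n := by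
  ext1 x
  rw [LinearMap.comp_apply, E.cov_comp]
  rfl

lemma smul_H (i : ℕ) : ∀ y ∈ l, ∀ x : K.H i, y • x = 0 := by
  intro y hy x
  obtain ⟨x, rfl⟩ := Submodule.mkQ_surjective _ x
  obtain ⟨h, h0, h1⟩ := K.homotopy y hy
  rw [← map_smul, Submodule.mkQ_apply, Submodule.Quotient.mk_eq_zero]
  change y • (x : K.X i) ∈ K.bd i
  have hx : K.d i x = 0 := x.2
  obtain ⟨x, hx'⟩ := x
  cases i with
  | zero => 
    have := h0 x
    rw [hx, map_zero] at this
    simp [← this]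
  | succ i =>
    have := h1 i x
    rw [hx, map_zero, add_zero] at this
    exact ⟨_, this⟩

lemma torsion_H (i : ℕ) : IsPowTorsion (a ⊔ Ideal.span {x | x ∈ l}) (K.H i) := by
  refine IsPowTorsion.sup ?_ (smul_eq_zero_of_mem_span fun x hx => K.smul_H i x hx)
  exact ((K.torsion i).of_injective _ (Submodule.injective_subtype _)).of_surjective _
    (Submodule.mkQ_surjective _)

end KoszulData

section

variable {U V W : Type u} [AddCommGroup U] [Module R U] [AddCommGroup V] [Module R V]
  [AddCommGroup W] [Module R W]

lemma SerreClass.ker_mem_of_exact (S : SerreClass R) {f : U →ₗ[R] V} {g : V →ₗ[R] W}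
    (h : Function.Exact f g) (hU : S.mem U) : S.mem (LinearMap.ker g) := by
  rw [h.linearMap_ker_eq]
  exact S.of_surjective f.rangeRestrict f.surjective_rangeRestrict hU

lemma SerreClass.of_ker_comp (S : SerreClass R) {f : U →ₗ[R] V} {g : V →ₗ[R] W}
    (hf : S.mem (LinearMap.ker f)) (hg : S.mem (LinearMap.ker g)) (h : ∀ x, g (f x) = 0) :
    S.mem U :=
  S.of_exact_comp (LinearMap.exact_subtype_ker_map f) (LinearMap.exact_subtype_ker_map g) h hf hg

lemma SerreClass.ker_comp_mem (S : SerreClass R) {f : U →ₗ[R] V} {g : V →ₗ[R] W}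
    (hf : S.mem (LinearMap.ker f)) (hg : S.mem (LinearMap.ker g)) :
    S.mem (LinearMap.ker (g ∘ₗ f)) := by
  refine S.of_exact (Submodule.inclusion (LinearMap.ker_le_ker_comp f g))
    (f.restrict (p := LinearMap.ker (g ∘ₗ f)) (q := LinearMap.ker g) fun x hx => hx)
    (fun x => ?_) hf hg
  refine ⟨fun h => ⟨⟨x, congrArg Subtype.val h⟩, rfl⟩, ?_⟩
  rintro ⟨y, rfl⟩
  exact Subtype.ext y.2

end

/-- A reduction from `a`-torsion modules to `b`-torsion modules, where `b` is generated by `a`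
and `r` further elements. -/
lemma SerreClass.ext_mem_of_ext_mem_le [IsNoetherianRing R] (S : SerreClass R) (l : List R)
    (hb : b = a ⊔ Ideal.span {x | x ∈ l})
    (H : ∀ (N : Type u) [AddCommGroup N] [Module R N], IsPowTorsion b N →
      S.mem (E R (R ⧸ b) N 0) → S.mem (E R (R ⧸ b) N 1) → ∀ i, S.mem (E R (R ⧸ b) N i))
    (hM : IsPowTorsion a M) (h : ∀ i ≤ l.length + 1, S.mem (E R (R ⧸ b) M i)) (i : ℕ) :
    S.mem (E R (R ⧸ b) M i) := by
  set r := l.length with hr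
  obtain ⟨K⟩ := exists_koszulData (S := S) (b := b) hM r l le_rfl
    (fun y hy => hb ▸ Ideal.mem_sup_right (Ideal.subset_span hy))
  have hX : ∀ j i, i ≤ r + 1 → S.mem (E R (R ⧸ b) (K.X j) i) := fun j i hi => K.ext_mem i (h i hi) j
  have hX0 : ∀ j i, r < j → S.mem (E R (R ⧸ b) (K.X j) i) := fun j i hj => by
    have := K.subsingleton_high j hj
    exact SerreClass.ext_mem_of_subsingleton i
  have hB0 : ∀ j i, S.mem (E R (R ⧸ b) (K.X j) i) → i = 0 →
      S.mem (E R (R ⧸ b) (K.bd j) i) := by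
    rintro j _ h rfl
    exact SerreClass.cov_mem_zero (K.bd j).injective_subtype h
  have hH' : ∀ j ≤ r, (∀ i, i + j ≤ r + 2 → S.mem (E R (R ⧸ b) (K.bd j) i)) →
      ∀ i, S.mem (E R (R ⧸ b) (K.H j) i) := by
    intro j hj hB
    refine H _ (hb ▸ K.torsion_H j) ?_ ?_
    · exact SerreClass.cov_mem₃ (K.ses_H j)
        (SerreClass.cov_mem_zero (Submodule.injective_subtype _) (hX j 0 (by omega)))
        (hB 1 (by omega))
    · exact SerreClass.cov_mem₃ (K.ses_H j)
        (SerreClass.cov_mem₁ (K.ses_Z j) (hB0 (j + 1) 0 (hX (j + 1) 0 (by omega)) rfl)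
          (hX j 1 (by omega)))
        (hB 2 (by omega))
  have key : ∀ j ≤ r + 1, (∀ i, i + j ≤ r + 2 → S.mem (E R (R ⧸ b) (K.bd j) i)) := by
    intro j
    induction j with
    | zero =>
      intro _ i _
      have : Subsingleton (K.bd 0) := inferInstanceAs (Subsingleton (⊥ : Submodule R (K.X 0)))
      exact SerreClass.ext_mem_of_subsingleton i
    | succ j ih =>
      intro hj i hi
      have hB := ih (by omega)
      refine SerreClass.cov_mem₃ (K.ses_Z j) (hX j i (by omega)) ?_
      exact SerreClass.cov_mem₂ (K.ses_H j) (hB (i + 1) (by omega)) (hH' j (by omega) hB (i + 1))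
  have hH : ∀ j i, S.mem (E R (R ⧸ b) (K.H j) i) := by
    intro j i
    rcases le_or_gt j r with hj | hj
    · exact hH' j hj (key j (by omega)) i
    · have := K.subsingleton_high j hj
      exact SerreClass.ext_mem_of_subsingleton i
  have main : ∀ n, (∀ m ≤ n, S.mem (E R (R ⧸ b) M m)) → S.mem (E R (R ⧸ b) M (n + 1)) := by
    intro n hn
    have hX' : ∀ j, ∀ m ≤ n, S.mem (E R (R ⧸ b) (K.X j) m) := fun j m hm =>
      K.ext_mem m (hn m hm) j
    have hB : ∀ t j, r + 1 ≤ j + t → ∀ m ≤ n, S.mem (E R (R ⧸ b) (K.bd j) m) := by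
      intro t
      induction t with
      | zero =>
        intro j hj m _
        have := K.subsingleton_high j (by omega)
        exact SerreClass.ext_mem_of_subsingleton m
      | succ t ih =>
        intro j hj m hm
        cases m with
        | zero => exact hB0 j 0 (hX' j 0 hm) rfl
        | succ m =>
          refine SerreClass.cov_mem₁ (K.ses_H j) (hH j m) ?_
          exact SerreClass.cov_mem₁ (K.ses_Z j) (ih (j + 1) (by omega) m (by omega))
            (hX' j (m + 1) hm)
    have hZ0 : S.mem (E R (R ⧸ b) (LinearMap.ker (K.d 0)) (n + 1)) := by
      have : Subsingleton (K.bd 0) := inferInstanceAs (Subsingleton (⊥ : Submodule R (K.X 0)))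
      exact SerreClass.cov_mem₂ (K.ses_H 0) (SerreClass.ext_mem_of_subsingleton _) (hH 0 _)
    refine K.of_mem 0 (n + 1) (by simp [r]) ?_
    refine S.of_ker_comp (f := E.cov (R ⧸ b) (K.toBd 0) (n + 1))
      (g := E.cov (R ⧸ b) (K.bd 1).subtype (n + 1)) ?_ ?_ fun x => ?_
    · exact S.ker_mem_of_exact (E.cov_exact₂ (K.ses_Z 0) (R ⧸ b) (n + 1)) hZ0
    · have h1 := S.ker_mem_of_exact (E.cov_exact₁ (K.ses_H 1) (R ⧸ b) n) (hH 1 n)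
      have h2 := S.ker_mem_of_exact (E.cov_exact₁ (K.ses_Z 1) (R ⧸ b) n)
        (hB (r + 1) 2 (by omega) n le_rfl)
      have h3 := K.cov_bd_subtype (R ⧸ b) 1 (n + 1)
      rw [h3]
      exact S.ker_comp_mem h1 h2
    · rw [E.cov_comp]
      exact K.ext_d 0 (n + 1) x
  induction i using Nat.strong_induction_on with
  | _ i ih =>
    rcases i with - | i
    · exact h 0 (by omega)
    · exact main i fun m hm => ih m (by omega)

end ExtCofinite

namespace ExtCofinite

section

variable {R : Type u} [CommRing R] {M : Type u} [AddCommGroup M] [Module R M]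

lemma mem_span_singleton_pow_smul_top {s : R} {n : ℕ} {x : M} :
    x ∈ (Ideal.span {s} ^ n • ⊤ : Submodule R M) ↔ ∃ y, x = s ^ n • y := by
  rw [Ideal.span_singleton_pow, Submodule.ideal_span_singleton_smul,
    Submodule.mem_smul_pointwise_iff_exists]
  simp [eq_comm]

lemma isPrecomplete_pi (s : R) [IsPrecomplete (Ideal.span {s}) R] (n : ℕ) :
    IsPrecomplete (Ideal.span {s}) (Fin n → R) where
  prec' f hf := by
    have h : ∀ j : Fin n, ∃ L : R, ∀ k, f k j ≡ L [SMOD (Ideal.span {s} ^ k • ⊤ : Ideal R)] := by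
      intro j
      refine IsPrecomplete.prec inferInstance fun {k m} hkm => ?_
      have := hf hkm
      rw [SModEq.sub_mem, mem_span_singleton_pow_smul_top] at this ⊢
      obtain ⟨y, hy⟩ := this
      exact ⟨y j, congrFun hy j⟩
    choose L hL using h
    refine ⟨L, fun k => ?_⟩
    rw [SModEq.sub_mem, mem_span_singleton_pow_smul_top]
    have h : ∀ j, ∃ y, f k j - L j = s ^ k • y := fun j => by
      rw [← mem_span_singleton_pow_smul_top, ← SModEq.sub_mem]
      exact hL j k
    choose y hy using h
    exact ⟨y, funext hy⟩

/-- A separated module over a complete ring is finite when it is finite modulo `s`. -/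
lemma finite_of_complete (s : R) [IsPrecomplete (Ideal.span {s}) R]
    (hsep : ∀ x : M, (∀ k, ∃ y, x = s ^ k • y) → x = 0) {n : ℕ} (w : Fin n → M)
    (hw : ∀ x, ∃ c : Fin n → R, ∃ y, x = ∑ i, c i • w i + s • y) : Module.Finite R M := by
  have := isPrecomplete_pi s n
  have : IsHausdorff (Ideal.span {s}) M := ⟨fun x hx => hsep x fun k => by
    rw [← mem_span_singleton_pow_smul_top, ← SModEq.zero]
    exact hx k⟩
  refine Module.Finite.of_surjective (Fintype.linearCombination R w)
    (surjective_of_mkQ_comp_surjective (I := Ideal.span {s}) fun x => ?_)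
  obtain ⟨x, rfl⟩ := Submodule.mkQ_surjective _ x
  obtain ⟨c, y, rfl⟩ := hw x
  refine ⟨c, ?_⟩
  rw [LinearMap.comp_apply, ← sub_eq_zero, ← map_sub, Submodule.mkQ_apply,
    Submodule.Quotient.mk_eq_zero, ← pow_one (Ideal.span {s}), mem_span_singleton_pow_smul_top]
  refine ⟨-y, ?_⟩
  rw [Fintype.linearCombination_apply]
  module

lemma isNoetherianRing_of_complete (s : R) [IsAdicComplete (Ideal.span {s}) R]
    [IsNoetherianRing (R ⧸ Ideal.span {s})] : IsNoetherianRing R := by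
  refine IsNoetherianRing.of_prime fun P hP => ?_
  have hfg : (P.map (Ideal.Quotient.mk (Ideal.span {s}))).FG := IsNoetherian.noetherian _
  by_cases hs : s ∈ P
  · refine Ideal.fg_of_fg_map_of_fg_inf_ker_of_surjective hfg ?_ Ideal.Quotient.mk_surjective
    rw [Ideal.mk_ker, inf_eq_right.2 ((Ideal.span_singleton_le_iff_mem _).2 hs)]
    exact Submodule.fg_span_singleton s
  · refine Module.Finite.iff_fg.1 ?_
    obtain ⟨n, g, hg⟩ := Submodule.fg_iff_exists_fin_generating_family.1 hfg
    have hgP : ∀ i, ∃ w ∈ P, Ideal.Quotient.mk (Ideal.span {s}) w = g i := fun i =>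
      (Ideal.mem_map_iff_of_surjective _ Ideal.Quotient.mk_surjective).1
        (hg ▸ Submodule.subset_span ⟨i, rfl⟩)
    choose w hwP hw using hgP
    refine finite_of_complete s (M := P) (fun x hx => ?_) (fun i => ⟨w i, hwP i⟩) fun x => ?_
    · refine Subtype.ext (IsHausdorff.haus (I := Ideal.span {s}) inferInstance (x : R) fun k => ?_)
      rw [SModEq.zero, mem_span_singleton_pow_smul_top]
      obtain ⟨y, rfl⟩ := hx k
      exact ⟨y, rfl⟩
    · have hx := Ideal.mem_map_of_mem (Ideal.Quotient.mk (Ideal.span {s})) x.2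
      rw [← hg] at hx
      obtain ⟨c, hc⟩ := (Submodule.mem_span_range_iff_exists_fun _).1 hx
      choose c' hc' using fun i => Ideal.Quotient.mk_surjective (c i)
      have : (x : R) - ∑ i, c' i * w i ∈ Ideal.span {s} := by
        rw [← Ideal.Quotient.eq_zero_iff_mem, map_sub, map_sum, ← hc, sub_eq_zero]
        simp [hc', hw]
      obtain ⟨y, hy⟩ := Ideal.mem_span_singleton'.1 this
      have hyP : y ∈ P := by
        refine (hP.mem_or_mem (x := y) (y := s) ?_).resolve_right hs
        rw [hy]
        exact P.sub_mem x.2 (P.sum_mem fun i _ => P.mul_mem_left _ (hwP i))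
      refine ⟨c', ⟨y, hyP⟩, Subtype.ext ?_⟩
      simp only [Submodule.coe_add, Submodule.coe_sum, Submodule.coe_smul, smul_eq_mul]
      rw [mul_comm s y, hy]
      ring

variable [IsNoetherianRing R]

lemma ringKrullDim_quotient_le_succ {s : R} (hs : s ∈ (⊥ : Ideal R).jacobson) (I : Ideal R) :
    ringKrullDim (R ⧸ I) ≤ ringKrullDim (R ⧸ (I ⊔ Ideal.span {s})) + 1 := by
  rw [← Module.supportDim_quotient_eq_ringKrullDim, ← Module.supportDim_quotient_eq_ringKrullDim]
  refine (Module.supportDim_le_supportDim_quotSMulTop_succ_of_mem_jacobson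
    (Ideal.jacobson_mono bot_le hs)).trans ?_
  gcongr
  let f : R ⧸ (I ⊔ Ideal.span {s}) →ₗ[R] QuotSMulTop s (R ⧸ I) :=
    Submodule.liftQ _ ((Submodule.mkQ _) ∘ₗ (Submodule.mkQ I)) (by
      refine sup_le ?_ ?_
      · intro x hx
        have : I.mkQ x = 0 := (Submodule.Quotient.mk_eq_zero _).2 hx
        rw [LinearMap.mem_ker, LinearMap.comp_apply, this, map_zero]
      · rw [Ideal.span_le, Set.singleton_subset_iff]
        change s ∈ LinearMap.ker (Submodule.mkQ _ ∘ₗ I.mkQ)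
        rw [LinearMap.mem_ker, LinearMap.comp_apply, Submodule.mkQ_apply,
          Submodule.Quotient.mk_eq_zero, Submodule.mem_smul_pointwise_iff_exists]
        exact ⟨I.mkQ 1, trivial, by rw [← map_smul, smul_eq_mul, mul_one]⟩)
  refine Module.supportDim_le_of_surjective f ?_
  rw [← LinearMap.range_eq_top, Submodule.range_liftQ, LinearMap.range_eq_top]
  exact (Submodule.mkQ_surjective _).comp (Submodule.mkQ_surjective _)

end

end ExtCofinite

namespace ExtCofinite

section

variable {R : Type u} [CommRing R] (B : Type u) [AddCommGroup B] [Module R B] (s : R)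

/-- The module of `s`-power compatible sequences of elements of the `s`-power torsion of `B`. -/
def tateModule : Submodule R (ℕ → B) where
  carrier := {w | s • w 0 = 0 ∧ ∀ k, s • w (k + 1) = w k}
  add_mem' h h' := ⟨by simp [h.1, h'.1], fun k => by simp [h.2, h'.2]⟩
  zero_mem' := ⟨by simp, fun k => by simp⟩
  smul_mem' c w h := ⟨by simp [smul_comm s c, h.1], fun k => by simp [smul_comm s c, h.2]⟩

variable {B s}

lemma tateModule.pow_smul (w : tateModule B s) (m k : ℕ) : s ^ m • w.1 (k + m) = w.1 k := by
  induction m with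
  | zero => simp
  | succ m ih => rw [pow_succ, mul_smul, ← add_assoc, w.2.2, ih]

lemma tateModule.pow_smul_eq_zero (w : tateModule B s) (k : ℕ) : s ^ (k + 1) • w.1 k = 0 := by
  have h := tateModule.pow_smul w k 0
  rw [zero_add] at h
  rw [pow_succ', mul_smul, h, w.2.1]

lemma tateModule.eq_smul {w : tateModule B s} (h : w.1 0 = 0) : ∃ y : tateModule B s, w = s • y := by
  refine ⟨⟨fun k => w.1 (k + 1), by simpa [w.2.2] using h, fun k => w.2.2 _⟩, ?_⟩
  exact Subtype.ext (funext fun k => (w.2.2 k).symm)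

lemma tateModule.exists_apply_zero (hdiv : ∀ x : B, ∃ y, s • y = x) {x : B} (hx : s • x = 0) :
    ∃ w : tateModule B s, w.1 0 = x := by
  choose f hf using hdiv
  exact ⟨⟨fun k => f^[k] x, hx, fun k => by
    change s • f^[k + 1] x = f^[k] x
    rw [Function.iterate_succ_apply', hf]⟩, rfl⟩

lemma exists_ne_zero_smul_eq_zero [Nontrivial B] (htor : ∀ x : B, ∃ k : ℕ, s ^ k • x = 0) :
    ∃ x : B, x ≠ 0 ∧ s • x = 0 := by
  classical
  obtain ⟨x, hx⟩ := exists_ne (0 : B)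
  have hk := Nat.find_spec (htor x)
  have hmin := fun m => Nat.find_min (htor x) (m := m)
  cases hn : Nat.find (htor x) with
  | zero => rw [hn] at hk; exact absurd (by simpa using hk) hx
  | succ n =>
    refine ⟨s ^ n • x, hmin n (by omega), ?_⟩
    rw [hn] at hk
    rwa [← mul_smul, ← pow_succ']

lemma exists_mem_avoiding_not_isNoetherian [IsNoetherianRing R] [IsAdicComplete (Ideal.span {s}) R]
    [Nontrivial B] (hdiv : ∀ x : B, ∃ y, s • y = x) (htor : ∀ x : B, ∃ k : ℕ, s ^ k • x = 0)
    (hK : IsNoetherian R (LinearMap.ker (LinearMap.lsmul R B s))) {J : Ideal R}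
    (hJ : J.IsMaximal) {n : ℕ} (hJK : ∀ a ∈ J ^ n, ∀ x : B, s • x = 0 → a • x = 0)
    {e : ℕ} (he : 1 ≤ e) (b : Ideal R) :
    ∃ z ∈ avoiding e b, ¬ IsNoetherian R (LinearMap.ker (LinearMap.lsmul R B z)) := by
  have hsep : ∀ x : tateModule B s, (∀ k, ∃ y, x = s ^ k • y) → x = 0 := by
    intro x hx
    refine Subtype.ext (funext fun k => ?_)
    obtain ⟨y, rfl⟩ := hx (k + 1)
    exact tateModule.pow_smul_eq_zero y k
  let ev : tateModule B s →ₗ[R] LinearMap.ker (LinearMap.lsmul R B s) :=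
    LinearMap.codRestrict _ (LinearMap.proj (R := R) (φ := fun _ : ℕ => B) 0 ∘ₗ
      Submodule.subtype _) fun w => w.2.1
  have hfin : Module.Finite R (tateModule B s) := by
    obtain ⟨m, g, hg⟩ := Submodule.fg_iff_exists_fin_generating_family.1
      (IsNoetherian.noetherian (LinearMap.range ev))
    have hgw : ∀ i, ∃ w, ev w = g i := fun i =>
      (hg ▸ Submodule.subset_span ⟨i, rfl⟩ : g i ∈ LinearMap.range ev)
    choose w hw using hgw
    refine finite_of_complete s hsep w fun x => ?_
    obtain ⟨c, hc⟩ := (Submodule.mem_span_range_iff_exists_fun R).1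
      (hg ▸ LinearMap.mem_range_self ev x : ev x ∈ Submodule.span R (Set.range g))
    have h0 : ev (x - ∑ i, c i • w i) = 0 := by
      rw [map_sub, map_sum, ← hc, sub_eq_zero]
      simp [hw]
    obtain ⟨y, hy⟩ := tateModule.eq_smul (w := x - ∑ i, c i • w i) (congrArg Subtype.val h0)
    exact ⟨c, y, by rw [← hy]; abel⟩
  have hnt : Nontrivial (tateModule B s) := by
    obtain ⟨x, hx, hsx⟩ := exists_ne_zero_smul_eq_zero htor
    obtain ⟨w, rfl⟩ := tateModule.exists_apply_zero hdiv hsx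
    exact ⟨w, 0, fun h => hx (by rw [h]; rfl)⟩
  obtain ⟨P, hP⟩ := associatedPrimes.nonempty R (tateModule B s)
  have hPp := hP.isPrime
  obtain ⟨-, τ, hτ⟩ := isAssociatedPrime_iff.1 hP
  have hmem : ∀ {z : R}, z ∈ P ↔ z • τ = 0 := by
    intro z
    rw [hτ]
    simp
  have hτ0 : τ ≠ 0 := fun h => hPp.ne_top ((Ideal.eq_top_iff_one _).2 (hmem.2 (by simp [h])))
  have hle : ∀ Q : Ideal R, Q.IsPrime → P ⊔ Ideal.span {s} ≤ Q → Q = J := by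
    intro Q hQ hPQ
    let q : PrimeSpectrum R := ⟨Q, hQ⟩
    have h1 : q ∈ Module.support R (tateModule B s) := by
      refine Module.mem_support_iff_exists_annihilator.2 ⟨τ, fun z hz => ?_⟩
      exact hPQ (Ideal.mem_sup_left (hmem.2 ((Submodule.mem_annihilator_span_singleton _ _).1 hz)))
    have h2 : q ∈ Module.support R (tateModule B s ⧸ (Ideal.span {s} • ⊤ : Submodule R (tateModule B s))) := by
      rw [Module.support_quotient]
      exact ⟨h1, le_sup_right.trans hPQ⟩
    have h3 : J ^ n ≤ Q := by
      refine le_trans (fun a ha => ?_) (Module.annihilator_le_of_mem_support h2)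
      refine Module.mem_annihilator.2 fun x => ?_
      obtain ⟨x, rfl⟩ := Submodule.mkQ_surjective _ x
      rw [← map_smul, Submodule.mkQ_apply, Submodule.Quotient.mk_eq_zero,
        Submodule.ideal_span_singleton_smul, Submodule.mem_smul_pointwise_iff_exists]
      obtain ⟨y, hy⟩ := tateModule.eq_smul (w := a • x) (hJK a ha _ x.2.1)
      exact ⟨y, trivial, hy.symm⟩
    exact (hJ.eq_of_le hQ.ne_top (hQ.le_of_pow_le h3)).symm
  have hdim : ringKrullDim (R ⧸ P) ≤ (1 : ℕ) := by
    refine (ringKrullDim_quotient_le_succ (IsAdicComplete.le_jacobson_bot (Ideal.span {s})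
      (Ideal.mem_span_singleton_self s)) P).trans ?_
    have : ringKrullDim (R ⧸ (P ⊔ Ideal.span {s})) ≤ (0 : ℕ) := by
      refine ringKrullDim_quotient_le_iff.2 fun l hl => ?_
      by_contra hlen
      have hlt : l 0 < l ⟨1, by omega⟩ := l.strictMono (by simp [Fin.lt_def])
      have h0 := hle _ (l 0).2 hl
      have h1 := hle _ (l ⟨1, by omega⟩).2 (hl.trans hlt.le)
      exact hlt.ne (PrimeSpectrum.ext (h0.trans h1.symm))
    calc _ ≤ ((0 : ℕ) : WithBot ℕ∞) + 1 := by gcongr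
      _ = _ := by simp
  obtain ⟨z, hzP, hz⟩ := exists_mem_avoiding (e := e) (b := b) (P := P) fun p _ hPp =>
    (ringKrullDim_quotient_anti hPp).trans (hdim.trans (by exact_mod_cast he))
  refine ⟨z, hz, fun hN => hτ0 ?_⟩
  have hzτ : ∀ k, z • τ.1 k = 0 := fun k => congrFun (congrArg Subtype.val (hmem.1 hzP)) k
  obtain ⟨t, ht, htz⟩ := exists_mem_smul_eq_zero (T := Submonoid.powers s)
    (L := LinearMap.ker (LinearMap.lsmul R B z)) fun x => by
      obtain ⟨k, hk⟩ := htor x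
      exact ⟨s ^ k, ⟨k, rfl⟩, Subtype.ext hk⟩
  obtain ⟨m, rfl⟩ := ht
  refine Subtype.ext (funext fun k => ?_)
  rw [← tateModule.pow_smul τ m k]
  exact congrArg Subtype.val (htz ⟨τ.1 (k + m), hzτ _⟩)

end

end ExtCofinite

namespace ExtCofinite

section

variable {R : Type u} [CommRing R] [IsNoetherianRing R] {M : Type u} [AddCommGroup M] [Module R M]

lemma SerreClass.ker_lsmul_ext_mem (S : SerreClass R) (b : Ideal R) (z : R)
    (h : ∀ j, S.mem (E R (R ⧸ (b ⊔ Ideal.span {z})) M j)) (i : ℕ) :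
    S.mem (LinearMap.ker (LinearMap.lsmul R (E R (R ⧸ b) M i) z)) := by
  let f : (R ⧸ b) →ₗ[R] (R ⧸ b) := LinearMap.lsmul R (R ⧸ b) z
  have hf : LinearMap.lsmul R (E R (R ⧸ b) M i) z =
      E.con f.rangeRestrict M i ∘ₗ E.con (LinearMap.range f).subtype M i := by
    ext x : 1
    rw [LinearMap.comp_apply, E.con_comp, LinearMap.lsmul_apply]
    have : (LinearMap.range f).subtype ∘ₗ f.rangeRestrict = z • LinearMap.id := rfl
    rw [this, E.con_smul, E.con_id]
  have hQ : ∀ a ∈ b ⊔ Ideal.span {z}, ∀ x : (R ⧸ b) ⧸ LinearMap.range f, a • x = 0 := by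
    intro a ha x
    obtain ⟨x, rfl⟩ := Submodule.mkQ_surjective _ x
    obtain ⟨y, hy, w, hw, rfl⟩ := Submodule.mem_sup.1 ha
    obtain ⟨c, rfl⟩ := Ideal.mem_span_singleton'.1 hw
    rw [← map_smul, add_smul, smul_quotient_eq_zero hy, zero_add, mul_comm, mul_smul,
      Submodule.mkQ_apply, Submodule.Quotient.mk_eq_zero]
    exact ⟨c • x, rfl⟩
  have hK : ∀ a ∈ b ⊔ Ideal.span {z}, ∀ x : LinearMap.ker f, a • x = 0 := by
    intro a ha x
    obtain ⟨y, hy, w, hw, rfl⟩ := Submodule.mem_sup.1 ha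
    obtain ⟨c, rfl⟩ := Ideal.mem_span_singleton'.1 hw
    refine Subtype.ext ?_
    change (y + c * z) • x.1 = 0
    rw [add_smul, smul_quotient_eq_zero hy, zero_add, mul_smul,
      show z • x.1 = 0 from x.2, smul_zero]
  rw [hf]
  refine S.ker_comp_mem
    (S.ker_mem_of_exact (E.con_exact₂ (IsSES.of_submodule (LinearMap.range f)) M i)
      (S.ext_mem_of_annihilated _ i (fun j _ => h j) hQ i le_rfl)) ?_
  cases i with
  | zero =>
    have : Subsingleton (LinearMap.ker (E.con f.rangeRestrict M 0)) := by
      rw [LinearMap.ker_eq_bot.2 (E.con_zero_injective f.surjective_rangeRestrict)]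
      infer_instance
    exact S.of_subsingleton
  | succ i =>
    exact S.ker_mem_of_exact (E.con_exact₃ (IsSES.of_rangeRestrict f) M i)
      (S.ext_mem_of_annihilated _ i (fun j _ => h j) hK i le_rfl)

/-- Finiteness of all the modules `Ext^i(R/b, M)`, where `b` is generated over `a` by `l.length`
elements and `dim R/b ≤ e`, follows from finiteness in degrees at most `e + l.length`. -/
def FiniteExtBound (e : ℕ) : Prop :=
  ∀ (R : Type u) [CommRing R] [IsNoetherianRing R] (a b : Ideal R) (l : List R),
    b = a ⊔ Ideal.span {x | x ∈ l} → ringKrullDim (R ⧸ b) ≤ (e : ℕ) →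
    ∀ (M : Type u) [AddCommGroup M] [Module R M], IsPowTorsion a M →
    (∀ i ≤ e + l.length, (fgClass R).mem (E R (R ⧸ b) M i)) →
    ∀ i, (fgClass R).mem (E R (R ⧸ b) M i)

lemma finiteExtBound_one : FiniteExtBound.{u} 1 := by
  intro R _ _ a b l hb hdim M _ _ hM h i
  exact SerreClass.ext_mem_of_ext_mem_le (fgClass R) l hb
    (fun N _ _ hN h0 h1 => ext_fg_of_ringKrullDim_le_one hdim hN h0 h1) hM
    (fun i hi => h i (by omega)) i

lemma FiniteExtBound.ker_lsmul {e : ℕ} (H : FiniteExtBound.{u} e) {a b : Ideal R} {l : List R}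
    (hb : b = a ⊔ Ideal.span {x | x ∈ l}) (hdim : ringKrullDim (R ⧸ b) ≤ (e + 1 : ℕ))
    (hM : IsPowTorsion a M)
    (h : ∀ i ≤ e + 1 + l.length, (fgClass R).mem (E R (R ⧸ b) M i)) {z : R}
    (hz : z ∈ avoiding e b) (i : ℕ) :
    IsNoetherian R (LinearMap.ker (LinearMap.lsmul R (E R (R ⧸ b) M i) z)) := by
  refine (fgClass R).ker_lsmul_ext_mem b z (fun j => ?_) i
  refine H R a _ (z :: l) ?_ (ringKrullDim_quotient_sup_le hdim hz) M hM (fun j hj => ?_) j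
  · rw [hb, sup_assoc, ← Ideal.span_union]
    congr 2
    ext x
    simp
  · refine (fgClass R).ext_mem_of_annihilated b j (fun k hk => h k ?_) (fun x hx y => ?_) j le_rfl
    · simp only [List.length_cons] at hj
      omega
    · exact smul_quotient_eq_zero (Ideal.mem_sup_left hx) y

lemma ext_genClass_of_fg {e : ℕ} {a b : Ideal R} {l : List R}
    (hb : b = a ⊔ Ideal.span {x | x ∈ l})
    (hM : IsPowTorsion a M)
    (h : ∀ i ≤ e + 1 + l.length, (fgClass R).mem (E R (R ⧸ b) M i)) (i : ℕ) :
    (genClass (avoiding e b)).mem (E R (R ⧸ b) M i) := by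
  refine SerreClass.ext_mem_of_ext_mem_le _ l hb (fun N _ _ hN h0 h1 =>
    ext_genClass_mem _ b (fun P hP hbP hd => mem_minimalPrimes_of_disjoint_avoiding hP hbP hd)
      hN h0 h1) hM (fun i hi => ?_) i
  have : IsNoetherian R (E R (R ⧸ b) M i) := h i (by omega)
  exact ⟨1, Submonoid.one_mem _, ⊤, IsNoetherian.noetherian _, fun v => ⟨0, trivial⟩⟩

end

end ExtCofinite

namespace ExtCofinite

open TensorProduct

section

variable {A : Type u} [CommRing A] {A' : Type u} [CommRing A'] [Algebra A A']
  {s : A}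

lemma isNoetherianRing_of_forall_eq_add [IsNoetherianRing A]
    [IsAdicComplete (Ideal.span {algebraMap A A' s}) A']
    (h : ∀ x : A', ∃ (a : A) (y : A'), x = algebraMap A A' a + algebraMap A A' s * y) :
    IsNoetherianRing A' := by
  have : IsNoetherianRing (A' ⧸ Ideal.span {algebraMap A A' s}) := by
    refine isNoetherianRing_of_surjective A _
      ((Ideal.Quotient.mk (Ideal.span {algebraMap A A' s})).comp (algebraMap A A')) fun x => ?_
    obtain ⟨x, rfl⟩ := Ideal.Quotient.mk_surjective x
    obtain ⟨a, y, rfl⟩ := h x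
    refine ⟨a, (Ideal.Quotient.eq.2 ?_)⟩
    rw [sub_add_cancel_left, ← mul_neg]
    exact Ideal.mul_mem_right _ _ (Ideal.mem_span_singleton_self _)
  exact isNoetherianRing_of_complete (algebraMap A A' s)

lemma isMaximal_map_of_forall_eq_add {m : Ideal A} [hm : m.IsMaximal] (hs : s ∈ m)
    (h : ∀ x : A', ∃ (a : A) (y : A'), x = algebraMap A A' a + algebraMap A A' s * y)
    (h' : ∀ (a : A) (y : A'), algebraMap A A' a = algebraMap A A' s * y → ∃ c, a = s * c) :
    (m.map (algebraMap A A')).IsMaximal := by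
  have hone : ∀ y : A', algebraMap A A' s * y ∈ m.map (algebraMap A A') := fun y =>
    Ideal.mul_mem_right _ _ (Ideal.mem_map_of_mem _ hs)
  have hmem : ∀ x ∈ m.map (algebraMap A A'),
      ∃ a ∈ m, ∃ y, x = algebraMap A A' a + algebraMap A A' s * y := by
    intro x hx
    induction hx using Submodule.span_induction with
    | mem x hx =>
      obtain ⟨a, ha, rfl⟩ := hx
      exact ⟨a, ha, 0, by simp⟩
    | zero => exact ⟨0, m.zero_mem, 0, by simp⟩
    | add x y _ _ hx hy =>
      obtain ⟨a, ha, w, rfl⟩ := hx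
      obtain ⟨c, hc, w', rfl⟩ := hy
      exact ⟨a + c, m.add_mem ha hc, w + w', by rw [map_add]; ring⟩
    | smul c x _ hx =>
      obtain ⟨a, ha, w, rfl⟩ := hx
      obtain ⟨d, w', rfl⟩ := h c
      refine ⟨d * a, m.mul_mem_left _ ha, w' * algebraMap A A' a + algebraMap A A' d * w +
        w' * algebraMap A A' s * w, ?_⟩
      rw [smul_eq_mul, map_mul]
      ring
  refine Ideal.isMaximal_iff.2 ⟨fun h1 => ?_, fun J x hJ hx hxJ => ?_⟩
  · obtain ⟨a, ha, y, hy⟩ := hmem 1 h1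
    obtain ⟨c, hc⟩ := h' (1 - a) y (by rw [map_sub, map_one, hy]; ring)
    refine hm.ne_top ((Ideal.eq_top_iff_one _).2 ?_)
    rw [← sub_add_cancel 1 a, hc]
    exact m.add_mem (m.mul_mem_right _ hs) ha
  · obtain ⟨a, y, rfl⟩ := h x
    have ha : a ∉ m := fun ha => hx (Ideal.add_mem _ (Ideal.mem_map_of_mem _ ha) (hone y))
    obtain ⟨c, hc⟩ := hm.exists_inv ha
    have haJ : algebraMap A A' a ∈ J := by
      simpa using J.sub_mem hxJ (hJ (hone y))
    obtain ⟨d, hd, hcd⟩ := hc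
    rw [← map_one (algebraMap A A'), ← hcd, map_add, map_mul]
    exact J.add_mem (J.mul_mem_left _ haJ) (hJ (Ideal.mem_map_of_mem _ hd))

variable {B : Type u} [AddCommGroup B] [Module A B]

lemma nontrivial_tensorProduct_of_forall_eq_add [Nontrivial B] (hB : ∀ x : B, s • x = 0)
    (h : ∀ x : A', ∃ (a : A) (y : A'), x = algebraMap A A' a + algebraMap A A' s * y)
    (h' : ∀ (a : A) (y : A'), algebraMap A A' a = algebraMap A A' s * y → ∃ c, a = s * c) :
    Nontrivial (A' ⊗[A] B) := by
  choose f g hfg using h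
  have key : ∀ (a : A) (x : A') (y : A'), x = algebraMap A A' a + algebraMap A A' s * y →
      ∀ v : B, a • v = f x • v := by
    intro a x y hx v
    obtain ⟨c, hc⟩ := h' (a - f x) (g x - y) (by
      rw [map_sub, mul_sub]
      linear_combination hfg x - hx)
    rw [← sub_eq_zero, ← sub_smul, hc, mul_comm, mul_smul, hB, smul_zero]
  let φ : A' →ₗ[A] B →ₗ[A] B :=
    { toFun := fun x => LinearMap.lsmul A B (f x)
      map_add' := fun x y => LinearMap.ext fun v => by
        rw [LinearMap.add_apply, LinearMap.lsmul_apply, LinearMap.lsmul_apply,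
          LinearMap.lsmul_apply, ← add_smul]
        refine (key _ _ (g x + g y) ?_ v).symm
        rw [map_add]
        linear_combination hfg x + hfg y
      map_smul' := fun a x => LinearMap.ext fun v => by
        rw [LinearMap.smul_apply, LinearMap.lsmul_apply, LinearMap.lsmul_apply, ← mul_smul]
        refine (key _ _ (algebraMap A A' a * g x) ?_ v).symm
        rw [Algebra.smul_def, map_mul, RingHom.id_apply]
        linear_combination algebraMap A A' a * hfg x }
  obtain ⟨v, hv⟩ := exists_ne (0 : B)
  refine ⟨1 ⊗ₜ v, 0, fun h0 => hv ?_⟩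
  have h1 := congrArg (TensorProduct.lift φ) h0
  rw [map_zero, TensorProduct.lift.tmul] at h1
  have h2 := key 1 1 0 (by simp) v
  rw [one_smul] at h2
  exact h2.trans h1

lemma exists_avoiding_tensorProduct_not_isNoetherian [IsNoetherianRing A] [Module.Flat A A']
    [IsAdicComplete (Ideal.span {algebraMap A A' s}) A'] {m : Ideal A} [m.IsMaximal] (hs : s ∈ m)
    (h : ∀ x : A', ∃ (a : A) (y : A'), x = algebraMap A A' a + algebraMap A A' s * y)
    (h' : ∀ (a : A) (y : A'), algebraMap A A' a = algebraMap A A' s * y → ∃ c, a = s * c)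
    [Nontrivial B] (hdiv : ∀ x : B, ∃ y, s • y = x) (htor : ∀ x : B, ∃ k : ℕ, s ^ k • x = 0)
    (hK : IsNoetherian A (LinearMap.ker (LinearMap.lsmul A B s))) {n : ℕ}
    (hm : ∀ a ∈ m ^ n, ∀ x : B, s • x = 0 → a • x = 0) {e : ℕ} (he : 1 ≤ e) (b : Ideal A') :
    ∃ z ∈ avoiding e b, ¬ IsNoetherian A' (LinearMap.ker (LinearMap.lsmul A' (A' ⊗[A] B) z)) := by
  have := isNoetherianRing_of_forall_eq_add h
  have hmax := isMaximal_map_of_forall_eq_add hs h h'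
  set N := LinearMap.ker (LinearMap.lsmul A B s) with hN
  have hex : Function.Exact (N.subtype.baseChange A')
      (LinearMap.lsmul A' (A' ⊗[A] B) (algebraMap A A' s)) := by
    have := Module.Flat.lTensor_exact A' (LinearMap.exact_subtype_ker_map (LinearMap.lsmul A B s))
    intro x
    refine Iff.trans ?_ (this x)
    suffices (LinearMap.lsmul A B s).lTensor A' x = algebraMap A A' s • x by
      rw [this, LinearMap.lsmul_apply]
    rw [algebraMap_smul]
    induction x with
    | zero => simp
    | add x y hx hy => rw [map_add, smul_add, hx, hy]
    | tmul x y => rw [LinearMap.lTensor_tmul, LinearMap.lsmul_apply, TensorProduct.tmul_smul]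
  have hnt : Nontrivial (A' ⊗[A] B) := by
    obtain ⟨x, hx, hsx⟩ := exists_ne_zero_smul_eq_zero htor
    have : Nontrivial N := ⟨⟨x, hsx⟩, 0, fun h => hx (congrArg Subtype.val h)⟩
    have := nontrivial_tensorProduct_of_forall_eq_add (B := N) (s := s)
      (fun x => Subtype.ext (show s • x.1 = 0 from x.2)) h h'
    exact (Module.Flat.lTensor_preserves_injective_linearMap (M := A') N.subtype
      N.injective_subtype).nontrivial
  refine exists_mem_avoiding_not_isNoetherian (s := algebraMap A A' s) (J := m.map (algebraMap A A'))
    (n := n) (fun x => ?_) (fun x => ?_) ?_ hmax (fun a ha x hx => ?_) he b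
  · induction x with
    | zero => exact ⟨0, smul_zero _⟩
    | add x y hx hy =>
      obtain ⟨x, rfl⟩ := hx
      obtain ⟨y, rfl⟩ := hy
      exact ⟨x + y, smul_add _ _ _⟩
    | tmul x y =>
      obtain ⟨y, rfl⟩ := hdiv y
      exact ⟨x ⊗ₜ y, by rw [algebraMap_smul, TensorProduct.tmul_smul]⟩
  · induction x with
    | zero => exact ⟨0, smul_zero _⟩
    | add x y hx hy =>
      obtain ⟨k, hk⟩ := hx
      obtain ⟨j, hj⟩ := hy
      refine ⟨k + j, ?_⟩
      rw [smul_add, pow_add, mul_smul, mul_smul, hj, smul_comm, hk]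
      simp
    | tmul x y =>
      obtain ⟨k, hk⟩ := htor y
      exact ⟨k, by rw [← map_pow, algebraMap_smul, ← TensorProduct.tmul_smul, hk,
        TensorProduct.tmul_zero]⟩
  · rw [hex.linearMap_ker_eq]
    infer_instance
  · obtain ⟨x, rfl⟩ := (hex x).1 hx
    clear hx
    rw [← map_smul]
    convert map_zero (N.subtype.baseChange A')
    rw [← Ideal.map_pow] at ha
    induction ha using Submodule.span_induction with
    | mem a ha =>
      obtain ⟨a, ha, rfl⟩ := ha
      rw [algebraMap_smul]
      induction x with
      | zero => simp
      | add x y hx hy => rw [smul_add, hx, hy, add_zero]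
      | tmul x y =>
        have : a • y = 0 := Subtype.ext (hm a ha y y.2)
        rw [← TensorProduct.tmul_smul, this, TensorProduct.tmul_zero]
    | zero => simp
    | add x y _ _ hx hy => rw [add_smul, hx, hy, add_zero]
    | smul c x _ hx => rw [smul_assoc, hx, smul_zero]

end

end ExtCofinite

namespace ExtCofinite

open TensorProduct

section

variable {A : Type u} [CommRing A] (s : A)

lemma adicCompletion_eq_add (x : AdicCompletion (Ideal.span {s}) A) :
    ∃ (a : A) (y : AdicCompletion (Ideal.span {s}) A),
      x = algebraMap A _ a + algebraMap A _ s * y := by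
  obtain ⟨a, ha⟩ := Ideal.Quotient.mk_surjective (AdicCompletion.evalOneₐ (Ideal.span {s}) x)
  have hx : x - algebraMap A _ a ∈
      RingHom.ker (AdicCompletion.evalOneₐ (Ideal.span {s})).toRingHom := by
    rw [RingHom.mem_ker, map_sub, sub_eq_zero]
    refine ha.symm.trans ?_
    exact ((AdicCompletion.evalOneₐ (Ideal.span {s})).commutes a).symm
  rw [AdicCompletion.ker_evalOneₐ_eq_map _ (Submodule.fg_span_singleton s), Ideal.map_span,
    Set.image_singleton, Ideal.mem_span_singleton'] at hx
  obtain ⟨y, hy⟩ := hx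
  exact ⟨a, y, by rw [mul_comm, hy, add_sub_cancel]⟩

lemma exists_eq_mul_of_adicCompletion (a : A) (y : AdicCompletion (Ideal.span {s}) A)
    (h : algebraMap A _ a = algebraMap A _ s * y) : ∃ c, a = s * c := by
  have h1 := congrArg (AdicCompletion.evalOneₐ (Ideal.span {s})) h
  rw [map_mul, AlgHom.commutes, AlgHom.commutes] at h1
  have hs : algebraMap A (A ⧸ Ideal.span {s}) s = 0 :=
    Ideal.Quotient.eq_zero_iff_mem.2 (Ideal.mem_span_singleton_self s)
  rw [hs, zero_mul] at h1
  obtain ⟨c, hc⟩ := Ideal.mem_span_singleton'.1 (Ideal.Quotient.eq_zero_iff_mem.1 h1)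
  exact ⟨c, by rw [← hc, mul_comm]⟩

lemma isAdicComplete_adicCompletion :
    IsAdicComplete (Ideal.span {algebraMap A (AdicCompletion (Ideal.span {s}) A) s})
      (AdicCompletion (Ideal.span {s}) A) := by
  have := (IsAdicComplete.map_algebraMap_iff (S := AdicCompletion (Ideal.span {s}) A)
    (M := AdicCompletion (Ideal.span {s}) A) (Ideal.span {s})).2
    (AdicCompletion.isAdicComplete (Submodule.fg_span_singleton s))
  rwa [Ideal.map_span, Set.image_singleton] at this

end

section

variable {R : Type u} [CommRing R]

lemma ringKrullDim_quotient_map_le {R' : Type u} [CommRing R'] [Algebra R R'] [IsNoetherianRing R']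
    {s : R} (hs : algebraMap R R' s ∈ (⊥ : Ideal R').jacobson) {b : Ideal R} {e : ℕ}
    (h : ∀ x : R', ∃ (t r : R) (y : R'), IsUnit (algebraMap R R' t) ∧
      algebraMap R R' t * x = algebraMap R R' r + algebraMap R R' s * y)
    (hd : ringKrullDim (R ⧸ (b ⊔ Ideal.span {s})) ≤ (e : ℕ)) :
    ringKrullDim (R' ⧸ b.map (algebraMap R R')) ≤ (e + 1 : ℕ) := by
  refine (ringKrullDim_quotient_le_succ hs _).trans ?_
  suffices ringKrullDim (R' ⧸ (b.map (algebraMap R R') ⊔ Ideal.span {algebraMap R R' s})) ≤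
      (e : ℕ) by
    rw [Nat.cast_add, Nat.cast_one]
    gcongr
  refine ringKrullDim_quotient_le_iff.2 fun l hl => ?_
  have hmem : ∀ i, algebraMap R R' s ∈ (l i).asIdeal := fun i =>
    (show l.head ≤ l i from l.head_le i) (hl (Ideal.mem_sup_right (Ideal.mem_span_singleton_self _)))
  let l' : LTSeries (PrimeSpectrum R) :=
    { length := l.length
      toFun := fun i => PrimeSpectrum.comap (algebraMap R R') (l i)
      step := fun i => by
        have hlt : l i.castSucc < l i.succ := l.step i
        refine lt_of_le_not_ge (Ideal.comap_mono hlt.le) fun hle => hlt.not_ge fun x hx => ?_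
        obtain ⟨t, r, y, ht, hxy⟩ := h x
        have hr : r ∈ (PrimeSpectrum.comap (algebraMap R R') (l i.succ)).asIdeal := by
          change algebraMap R R' r ∈ (l i.succ).asIdeal
          have := Ideal.sub_mem _ (Ideal.mul_mem_left _ (algebraMap R R' t) hx)
            (Ideal.mul_mem_right y _ (hmem i.succ))
          rwa [hxy, add_sub_cancel_right] at this
        have hr' : algebraMap R R' r ∈ (l i.castSucc).asIdeal := hle hr
        have := Ideal.add_mem _ hr' (Ideal.mul_mem_right y _ (hmem i.castSucc))
        rw [← hxy] at this
        exact (Ideal.unit_mul_mem_iff_mem _ ht).1 this }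
  refine ringKrullDim_quotient_le_iff.1 hd l' ?_
  rw [sup_le_iff, Ideal.span_singleton_le_iff_mem]
  exact ⟨Ideal.map_le_iff_le_comap.1 (le_sup_left.trans hl), hmem 0⟩

lemma exists_smul_of_mem_range_of_isArtinian {V : Type u} [AddCommGroup V] [Module R V] {s : R}
    (htor : ∀ v : V, ∃ k : ℕ, s ^ k • v = 0) (k₀ : ℕ)
    (hart : IsArtinian R (LinearMap.ker (LinearMap.lsmul R V s) ⊓
      LinearMap.range (LinearMap.lsmul R V (s ^ k₀)) : Submodule R V)) :
    ∃ k ≥ k₀, ∀ v ∈ LinearMap.range (LinearMap.lsmul R V (s ^ k)),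
      ∃ y ∈ LinearMap.range (LinearMap.lsmul R V (s ^ k)), s • y = v := by
  let K : ℕ → Submodule R V := fun k => LinearMap.ker (LinearMap.lsmul R V s) ⊓
      LinearMap.range (LinearMap.lsmul R V (s ^ k))
  have hanti : Antitone K := by
    refine antitone_nat_of_succ_le fun k => inf_le_inf_left _ ?_
    rintro _ ⟨v, rfl⟩
    exact ⟨s • v, by simp [pow_succ', mul_smul]⟩
  have : IsArtinian R (K k₀) := hart
  obtain ⟨n, hn⟩ := IsArtinian.monotone_stabilizes (R := R) (M := K k₀)
    { toFun := fun j => OrderDual.toDual ((K (k₀ + j)).comap (K k₀).subtype)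
      monotone' := fun i j hij => Submodule.comap_mono (hanti (by omega)) }
  have hst : ∀ m, K (k₀ + n) ≤ K (k₀ + n + m) := by
    intro m x hx
    have h1 : (K (k₀ + n)).comap (K k₀).subtype = (K (k₀ + (n + m))).comap (K k₀).subtype :=
      hn (n + m) (by omega)
    have h2 : (⟨x, hanti (by omega) hx⟩ : K k₀) ∈ (K (k₀ + n)).comap (K k₀).subtype := hx
    rw [h1] at h2
    rw [add_assoc]
    exact h2
  refine ⟨k₀ + n, by omega, fun v hv => ?_⟩
  obtain ⟨j, hj⟩ := htor v
  induction j generalizing v with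
  | zero =>
    rw [pow_zero, one_smul] at hj
    exact ⟨0, Submodule.zero_mem _, by rw [hj, smul_zero]⟩
  | succ j ih =>
    have h1 : s ^ j • v ∈ K (k₀ + n) := by
      refine ⟨?_, Submodule.smul_mem _ _ hv⟩
      change s • s ^ j • v = 0
      rw [← mul_smul, ← pow_succ', hj]
    obtain ⟨-, y, hy⟩ := hst (j + 1) h1
    rw [LinearMap.lsmul_apply] at hy
    obtain ⟨y', hy', hsy⟩ := ih (v - s ^ (k₀ + n + 1) • y)
      (Submodule.sub_mem _ hv ⟨s • y, by simp [pow_succ', mul_smul]⟩) (by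
        rw [smul_sub, ← hy, ← mul_smul, ← pow_add, sub_eq_zero]
        congr 2
        omega)
    refine ⟨y' + s ^ (k₀ + n) • y, Submodule.add_mem _ hy' ⟨y, rfl⟩, ?_⟩
    rw [smul_add, hsy, ← mul_smul, ← pow_succ']
    abel

end

end ExtCofinite

namespace ExtCofinite

open TensorProduct

section

variable {R : Type u} [CommRing R] {W : Type u} [AddCommGroup W] [Module R W] {s : R}

lemma exists_mk_eq_of_mem {T : Submonoid R} {k : ℕ} {x : LocalizedModule T W}
    (hx : x ∈ LinearMap.ker (LinearMap.lsmul (Localization T) (LocalizedModule T W)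
      (algebraMap R _ s)) ⊓ LinearMap.range (LinearMap.lsmul (Localization T) (LocalizedModule T W)
      (algebraMap R _ s ^ k))) :
    ∃ d ∈ LinearMap.ker (LinearMap.lsmul R W s) ⊓ LinearMap.range (LinearMap.lsmul R W (s ^ k)),
      ∃ t : T, x = LocalizedModule.mk d t := by
  obtain ⟨h1, y, rfl⟩ := hx
  induction y using LocalizedModule.induction_on with
  | h y t =>
    rw [LinearMap.lsmul_apply, ← map_pow, algebraMap_smul, LocalizedModule.smul'_mk] at h1 ⊢
    rw [SetLike.mem_coe, LinearMap.mem_ker, LinearMap.lsmul_apply, algebraMap_smul,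
      LocalizedModule.smul'_mk, ← LocalizedModule.zero_mk 1, LocalizedModule.mk_eq] at h1
    obtain ⟨u, hu⟩ := h1
    refine ⟨u • s ^ k • y, ⟨?_, u • y, ?_⟩, u * t, ?_⟩
    · rw [SetLike.mem_coe, LinearMap.mem_ker, LinearMap.lsmul_apply, smul_comm]
      simpa using hu
    · rw [LinearMap.lsmul_apply, smul_comm]
    · rw [LocalizedModule.mk_cancel_common_left]

lemma mk_mem_of_mem {T : Submonoid R} {k : ℕ} {d : W}
    (hd : d ∈ LinearMap.ker (LinearMap.lsmul R W s) ⊓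
      LinearMap.range (LinearMap.lsmul R W (s ^ k))) (t : T) :
    LocalizedModule.mk d t ∈ LinearMap.ker (LinearMap.lsmul (Localization T) (LocalizedModule T W)
      (algebraMap R _ s)) ⊓ LinearMap.range (LinearMap.lsmul (Localization T) (LocalizedModule T W)
      (algebraMap R _ s ^ k)) := by
  obtain ⟨h1, y, rfl⟩ := hd
  refine ⟨?_, LocalizedModule.mk y t, ?_⟩
  · rw [SetLike.mem_coe, LinearMap.mem_ker, LinearMap.lsmul_apply, algebraMap_smul,
      LocalizedModule.smul'_mk, show s • _ = (0 : W) from h1, LocalizedModule.zero_mk]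
  · rw [LinearMap.lsmul_apply, ← map_pow, algebraMap_smul, LocalizedModule.smul'_mk,
      LinearMap.lsmul_apply]

lemma exists_pow_smul_eq_zero_localizedModule {T : Submonoid R}
    (htor : ∀ w : W, ∃ k : ℕ, s ^ k • w = 0) (v : LocalizedModule T W) :
    ∃ k : ℕ, algebraMap R (Localization T) s ^ k • v = 0 := by
  induction v using LocalizedModule.induction_on with
  | h w t =>
    obtain ⟨k, hk⟩ := htor w
    exact ⟨k, by rw [← map_pow, algebraMap_smul, LocalizedModule.smul'_mk, hk,
      LocalizedModule.zero_mk]⟩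

lemma isNoetherian_localized [IsNoetherianRing R] {T : Submonoid R} {k : ℕ}
    (h : IsNoetherian R (LinearMap.ker (LinearMap.lsmul R W s))) :
    IsNoetherian (Localization T) (LinearMap.ker (LinearMap.lsmul (Localization T)
      (LocalizedModule T W) (algebraMap R _ s)) ⊓ LinearMap.range (LinearMap.lsmul (Localization T)
        (LocalizedModule T W) (algebraMap R _ s ^ k)) : Submodule _ _) := by
  have := IsLocalization.isNoetherianRing T (Localization T) inferInstance
  let g := LinearMap.liftBaseChange (Localization T)
    (LocalizedModule.mkLinearMap T W ∘ₗ (LinearMap.ker (LinearMap.lsmul R W s)).subtype)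
  refine isNoetherian_of_le (t := LinearMap.range g) fun x hx => ?_
  obtain ⟨d, hd, t, rfl⟩ := exists_mk_eq_of_mem hx
  refine ⟨Localization.mk 1 t ⊗ₜ ⟨d, hd.1⟩, ?_⟩
  simp [g, LocalizedModule.mk_smul_mk]

lemma exists_divisible_localized [IsNoetherianRing R]
    (htor : ∀ w : W, ∃ k : ℕ, s ^ k • w = 0)
    (hK : IsNoetherian R (LinearMap.ker (LinearMap.lsmul R W s)))
    (hD : ∀ k, LinearMap.ker (LinearMap.lsmul R W s) ⊓
      LinearMap.range (LinearMap.lsmul R W (s ^ k)) ≠ ⊥) :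
    ∃ (q : Ideal R) (_ : q.IsPrime)
      (B : Submodule (Localization.AtPrime q) (LocalizedModule q.primeCompl W)),
      s ∈ q ∧ Nontrivial B ∧ (∀ x : B, ∃ y : B, algebraMap R (Localization.AtPrime q) s • y = x) ∧
      IsNoetherian (Localization.AtPrime q) (LinearMap.ker (LinearMap.lsmul
        (Localization.AtPrime q) B (algebraMap R (Localization.AtPrime q) s))) ∧
      ∃ n, ∀ a ∈ IsLocalRing.maximalIdeal (Localization.AtPrime q) ^ n, ∀ x : B,
        algebraMap R (Localization.AtPrime q) s • x = 0 → a • x = 0 := by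
  set D : ℕ → Submodule R W := fun k => LinearMap.ker (LinearMap.lsmul R W s) ⊓
      LinearMap.range (LinearMap.lsmul R W (s ^ k)) with hDdef
  have hanti : Antitone D := by
    refine antitone_nat_of_succ_le fun k => inf_le_inf_left _ ?_
    rintro _ ⟨v, rfl⟩
    exact ⟨s • v, by simp [pow_succ', mul_smul]⟩
  obtain ⟨k₀, hk₀⟩ := monotone_stabilizes_iff_noetherian.2
    (inferInstanceAs (IsNoetherian R R))
    { toFun := fun k => Module.annihilator R (D k)
      monotone' := fun i j hij => Submodule.annihilator_mono (hanti hij) }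
  set I := Module.annihilator R (D k₀) with hI
  have hk₀ : ∀ k ≥ k₀, I = Module.annihilator R (D k) := hk₀
  have hItop : I ≠ ⊤ := by
    intro h
    refine hD k₀ ((Submodule.eq_bot_iff _).2 fun x hx => ?_)
    have h1 : (1 : R) ∈ I := h ▸ trivial
    have := Module.mem_annihilator.1 h1 ⟨x, hx⟩
    rw [one_smul] at this
    exact congrArg Subtype.val this
  obtain ⟨q, hq⟩ := Ideal.nonempty_minimalPrimes hItop
  have hqp : q.IsPrime := hq.1.1
  have hIq : I ≤ q := hq.1.2
  set A := Localization.AtPrime q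
  have := IsLocalization.isNoetherianRing q.primeCompl A inferInstance
  set V := LocalizedModule q.primeCompl W
  set s' := algebraMap R A s with hs'
  let K : ℕ → Submodule A V := fun k => LinearMap.ker (LinearMap.lsmul A V s') ⊓
      LinearMap.range (LinearMap.lsmul A V (s' ^ k))
  have hKann : ∀ k ≥ k₀, ∀ a ∈ I.map (algebraMap R A), ∀ x : K k, a • x = 0 := by
    intro k hk a ha x
    induction ha using Submodule.span_induction with
    | mem a ha =>
      obtain ⟨a, ha, rfl⟩ := ha
      obtain ⟨d, hd, t, hx⟩ := exists_mk_eq_of_mem x.2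
      refine Subtype.ext ?_
      change algebraMap R A a • x.1 = 0
      have : a • d = 0 := by
        rw [SetLike.mem_coe, hk₀ k hk] at ha
        exact congrArg Subtype.val (Module.mem_annihilator.1 ha ⟨d, hd⟩)
      rw [hx, algebraMap_smul, LocalizedModule.smul'_mk, this, LocalizedModule.zero_mk]
    | zero => exact zero_smul _ _
    | add x y _ _ hx hy => rw [add_smul, hx, hy, add_zero]
    | smul c x _ hx => rw [smul_assoc, hx, smul_zero]
  have hmin : ∀ P : Ideal R, P.IsPrime → I ≤ P → Disjoint (q.primeCompl : Set R) P →
      P ∈ I.minimalPrimes := by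
    intro P hP hIP hd
    have hPq : P ≤ q := fun x hx => by
      by_contra hxq
      exact Set.disjoint_left.1 hd hxq hx
    have : P = q := le_antisymm hPq (hq.2 ⟨hP, hIP⟩ hPq)
    rwa [this]
  have hKnoeth : ∀ k, IsNoetherian A (K k) := fun k => isNoetherian_localized hK
  have hart := isArtinianRing_quotient_localization q.primeCompl I hmin
  have hKart : IsArtinian A (K k₀) := by
    have := hKnoeth k₀
    exact isArtinian_of_annihilated (b := I.map (algebraMap R A)) (hKann k₀ le_rfl)
  obtain ⟨k, hk, hdiv⟩ := exists_smul_of_mem_range_of_isArtinian (s := s')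
    (exists_pow_smul_eq_zero_localizedModule htor) k₀ hKart
  refine ⟨q, hqp, LinearMap.range (LinearMap.lsmul A V (s' ^ k)), ?_, ?_, ?_, ?_, ?_⟩
  · exact hIq (Module.mem_annihilator.2 fun x => Subtype.ext x.2.1)
  · by_contra hnt
    rw [not_nontrivial_iff_subsingleton] at hnt
    have : Module.Finite R (D k) := by
      have : IsNoetherian R (D k) := isNoetherian_of_le (inf_le_left (a := LinearMap.ker _))
      infer_instance
    obtain ⟨t, ht, hann⟩ := exists_mem_smul_eq_zero (T := q.primeCompl) (L := D k) fun x => by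
      have h1 := (mk_mem_of_mem (T := q.primeCompl) x.2 1).2
      have h2 : (LocalizedModule.mk x.1 1 : V) = 0 :=
        congrArg Subtype.val (Subsingleton.elim (⟨_, h1⟩ : LinearMap.range _) 0)
      rw [← LocalizedModule.zero_mk 1, LocalizedModule.mk_eq] at h2
      obtain ⟨u, hu⟩ := h2
      exact ⟨u, u.2, Subtype.ext (by simpa [Submonoid.smul_def] using hu)⟩
    exact ht (hIq (by rw [hk₀ k hk]; exact Module.mem_annihilator.2 hann))
  · intro x
    obtain ⟨y, hy, h⟩ := hdiv x.1 x.2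
    exact ⟨⟨y, hy⟩, Subtype.ext h⟩
  · have := hKnoeth k
    refine isNoetherian_of_injective
      (LinearMap.codRestrict (K k)
        ((LinearMap.range (LinearMap.lsmul A V (s' ^ k))).subtype ∘ₗ
          (LinearMap.ker (LinearMap.lsmul A _ s')).subtype)
        fun x => ⟨congrArg Subtype.val (show s' • x.1 = 0 from x.2), x.1.2⟩) fun x y h => ?_
    exact Subtype.ext (Subtype.ext (congrArg (fun z : K k => z.1) h))
  · have hrad : IsLocalRing.maximalIdeal A ≤ (I.map (algebraMap R A)).radical := by
      rw [Ideal.radical_eq_sInf]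
      refine le_sInf fun P ⟨hP1, hP2⟩ => ?_
      have h1 : I ≤ P.comap (algebraMap R A) := Ideal.map_le_iff_le_comap.1 hP1
      have h2 : P.comap (algebraMap R A) ≤ q := fun x hx => by
        by_contra hxq
        exact hP2.ne_top (Ideal.eq_top_of_isUnit_mem _ hx
          (IsLocalization.map_units A (⟨x, hxq⟩ : q.primeCompl)))
      have h3 : q ≤ P.comap (algebraMap R A) := hq.2 ⟨Ideal.comap_isPrime _ _, h1⟩ h2
      rw [← Localization.AtPrime.map_eq_maximalIdeal]
      exact Ideal.map_le_iff_le_comap.2 h3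
    obtain ⟨n, hn⟩ := Ideal.exists_pow_le_of_le_radical_of_fg hrad
      ((isNoetherianRing_iff_ideal_fg A).1 inferInstance _)
    refine ⟨n, fun a ha x hx => ?_⟩
    have h1 := hKann k hk a (hn ha) ⟨x.1, congrArg Subtype.val hx, x.2⟩
    exact Subtype.ext (congrArg (fun z : K k => z.1) h1)

end

end ExtCofinite

namespace ExtCofinite

open TensorProduct

section

variable {R : Type u} [CommRing R] {W : Type u} [AddCommGroup W] [Module R W]

lemma isNoetherian_ker_of_injective {A B : Type u} [AddCommGroup A] [Module R A] [AddCommGroup B]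
    [Module R B] (f : A →ₗ[R] B) (hf : Function.Injective f) (z : R)
    (h : IsNoetherian R (LinearMap.ker (LinearMap.lsmul R B z))) :
    IsNoetherian R (LinearMap.ker (LinearMap.lsmul R A z)) := by
  refine isNoetherian_of_injective (LinearMap.codRestrict (LinearMap.ker (LinearMap.lsmul R B z))
    (f ∘ₗ (LinearMap.ker (LinearMap.lsmul R A z)).subtype) fun x => ?_) fun x y hxy => ?_
  · change z • f x = 0
    rw [← map_smul, show z • x.1 = 0 from x.2, map_zero]
  · exact Subtype.ext (hf (congrArg Subtype.val hxy))

lemma SerreClass.ker_lsmul_mem_of_ses (S : SerreClass R) {A B C : Type u} [AddCommGroup A]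
    [Module R A] [AddCommGroup B] [Module R B] [AddCommGroup C] [Module R C] {f : A →ₗ[R] B}
    {g : B →ₗ[R] C} (h : IsSES f g) (z : R) (hA : S.mem A)
    (hB : S.mem (LinearMap.ker (LinearMap.lsmul R B z))) :
    S.mem (LinearMap.ker (LinearMap.lsmul R C z)) := by
  let X := (LinearMap.range f).comap (LinearMap.lsmul R B z)
  have hX : S.mem X := by
    have hle : LinearMap.ker (LinearMap.lsmul R B z) ≤ X := fun x hx => by
      change LinearMap.lsmul R B z x ∈ LinearMap.range f
      rw [show LinearMap.lsmul R B z x = 0 from hx]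
      exact Submodule.zero_mem _
    refine S.of_exact (V := X) (Submodule.inclusion hle)
      ((LinearMap.lsmul R B z).restrict (p := X) (q := LinearMap.range f) fun x hx => hx)
      (fun x => ?_) hB (S.of_surjective f.rangeRestrict f.surjective_rangeRestrict hA)
    refine ⟨fun hx => ⟨⟨x.1, congrArg Subtype.val hx⟩, rfl⟩, ?_⟩
    rintro ⟨y, rfl⟩
    exact Subtype.ext y.2
  refine S.of_surjective (g.restrict (p := X) (q := LinearMap.ker (LinearMap.lsmul R C z))
    fun x hx => ?_) (fun y => ?_) hX
  · change z • g x = 0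
    rw [← map_smul]
    exact (h.exact _).2 hx
  · obtain ⟨x, hx⟩ := h.surj y.1
    refine ⟨⟨x, (h.exact _).1 ?_⟩, Subtype.ext hx⟩
    change g (z • x) = 0
    rw [map_smul, hx]
    exact y.2

variable [IsNoetherianRing R] {s : R}

lemma exists_avoiding_not_isNoetherian_of_localized {q : Ideal R} [q.IsPrime] {A' : Type u}
    [CommRing A'] [Algebra (Localization.AtPrime q) A'] [Algebra R A']
    [IsScalarTower R (Localization.AtPrime q) A'] [Module.Flat (Localization.AtPrime q) A']
    [IsAdicComplete (Ideal.span {algebraMap R A' s}) A']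
    (h : ∀ x : A', ∃ (a : Localization.AtPrime q) (y : A'),
      x = algebraMap _ A' a + algebraMap R A' s * y)
    (h' : ∀ (a : Localization.AtPrime q) (y : A'), algebraMap _ A' a = algebraMap R A' s * y →
      ∃ c, a = algebraMap R _ s * c)
    (htor : ∀ w : W, ∃ k : ℕ, s ^ k • w = 0)
    {B : Submodule (Localization.AtPrime q) (LocalizedModule q.primeCompl W)} (hsq : s ∈ q)
    [Nontrivial B] (hdiv : ∀ x : B, ∃ y : B, algebraMap R (Localization.AtPrime q) s • y = x)
    (hK : IsNoetherian (Localization.AtPrime q) (LinearMap.ker (LinearMap.lsmul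
        (Localization.AtPrime q) B (algebraMap R (Localization.AtPrime q) s)))) {n : ℕ}
    (hn : ∀ a ∈ IsLocalRing.maximalIdeal (Localization.AtPrime q) ^ n, ∀ x : B,
        algebraMap R (Localization.AtPrime q) s • x = 0 → a • x = 0)
    {e : ℕ} (he : 1 ≤ e) {b : Ideal R} (hb : ringKrullDim (R ⧸ b) ≤ (e + 1 : ℕ))
    (hs : s ∈ avoiding e b) :
    IsNoetherianRing A' ∧ Module.Flat R A' ∧
    ringKrullDim (A' ⧸ b.map (algebraMap R A')) ≤ (e + 1 : ℕ) ∧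
    ∃ z ∈ avoiding e (b.map (algebraMap R A')),
      ¬ IsNoetherian A' (LinearMap.ker (LinearMap.lsmul A' (A' ⊗[R] W) z)) := by
  set A := Localization.AtPrime q
  have hA := IsLocalization.isNoetherianRing q.primeCompl A inferInstance
  have hflat : Module.Flat R A := IsLocalization.flat A q.primeCompl
  have hss : algebraMap R A' s = algebraMap A A' (algebraMap R A s) :=
    IsScalarTower.algebraMap_apply R A A' s
  have hcomp : IsAdicComplete (Ideal.span {algebraMap A A' (algebraMap R A s)}) A' := by
    rw [← hss]; infer_instance
  have hnoeth : IsNoetherianRing A' :=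
    isNoetherianRing_of_forall_eq_add (s := algebraMap R A s) (by rwa [← hss])
  refine ⟨hnoeth, Module.Flat.trans R A A', ?_, ?_⟩
  · refine ringKrullDim_quotient_map_le (IsAdicComplete.le_jacobson_bot
      (Ideal.span {algebraMap R A' s}) (Ideal.mem_span_singleton_self _)) (fun x => ?_)
      (ringKrullDim_quotient_sup_le hb hs)
    obtain ⟨a, y, rfl⟩ := h x
    obtain ⟨⟨r, t⟩, hrt⟩ := IsLocalization.surj q.primeCompl a
    refine ⟨t, r, algebraMap R A' t * y, ?_, ?_⟩
    · rw [IsScalarTower.algebraMap_apply R A A']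
      exact (IsLocalization.map_units A t).map _
    · have h1 := congrArg (algebraMap A A') hrt
      rw [map_mul, ← IsScalarTower.algebraMap_apply, ← IsScalarTower.algebraMap_apply] at h1
      linear_combination h1
  · have hsm : algebraMap R A s ∈ IsLocalRing.maximalIdeal A := by
      rw [← Localization.AtPrime.map_eq_maximalIdeal]
      exact Ideal.mem_map_of_mem _ hsq
    obtain ⟨z, hz, hnot⟩ := exists_avoiding_tensorProduct_not_isNoetherian (A' := A') (B := B) hsm
      (by rwa [← hss]) (by rwa [← hss]) hdiv (fun x => by
        obtain ⟨k, hk⟩ := exists_pow_smul_eq_zero_localizedModule htor x.1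
        exact ⟨k, Subtype.ext hk⟩) hK hn he (b.map (algebraMap R A'))
    refine ⟨z, hz, fun hN => hnot ?_⟩
    let e₁ : LocalizedModule q.primeCompl W ≃ₗ[A] A ⊗[R] W :=
      (LocalizedModule.isBaseChange q.primeCompl W).equiv.symm
    let e₂ : A' ⊗[A] (A ⊗[R] W) ≃ₗ[A'] A' ⊗[R] W :=
      TensorProduct.AlgebraTensorModule.cancelBaseChange R A A' A' W
    refine isNoetherian_ker_of_injective
      (e₂.toLinearMap ∘ₗ (e₁.toLinearMap ∘ₗ B.subtype).baseChange A') ?_ z hN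
    rw [LinearMap.coe_comp]
    refine e₂.injective.comp ?_
    exact Module.Flat.lTensor_preserves_injective_linearMap (M := A') (e₁.toLinearMap ∘ₗ B.subtype)
      (e₁.injective.comp B.injective_subtype)

lemma isNoetherian_of_torsion {e : ℕ} (he : 1 ≤ e) {b : Ideal R}
    (hb : ringKrullDim (R ⧸ b) ≤ (e + 1 : ℕ)) (hs : s ∈ avoiding e b)
    (htor : ∀ w : W, ∃ k : ℕ, s ^ k • w = 0)
    (hK : IsNoetherian R (LinearMap.ker (LinearMap.lsmul R W s)))
    (H : ∀ (R' : Type u) [CommRing R'] [Algebra R R'] [IsNoetherianRing R'] [Module.Flat R R'],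
      ringKrullDim (R' ⧸ b.map (algebraMap R R')) ≤ (e + 1 : ℕ) →
      ∀ z ∈ avoiding e (b.map (algebraMap R R')),
        IsNoetherian R' (LinearMap.ker (LinearMap.lsmul R' (R' ⊗[R] W) z))) :
    IsNoetherian R W := by
  by_cases hD : ∀ k, LinearMap.ker (LinearMap.lsmul R W s) ⊓
      LinearMap.range (LinearMap.lsmul R W (s ^ k)) ≠ ⊥
  · exfalso
    obtain ⟨q, hq, B, hsq, hnt, hdiv, hKB, n, hn⟩ := exists_divisible_localized htor hK hD
    have hA := IsLocalization.isNoetherianRing q.primeCompl (Localization.AtPrime q) inferInstance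
    set s' := algebraMap R (Localization.AtPrime q) s with hs'
    have hT : IsScalarTower R (Localization.AtPrime q)
      (AdicCompletion (Ideal.span {s'}) (Localization.AtPrime q)) := inferInstance
    have hss : algebraMap R (AdicCompletion (Ideal.span {s'}) (Localization.AtPrime q)) s =
      algebraMap _ _ s' := IsScalarTower.algebraMap_apply R (Localization.AtPrime q) _ s
    have hcomp := isAdicComplete_adicCompletion s'
    have h1 := adicCompletion_eq_add s'
    have h2 := exists_eq_mul_of_adicCompletion s'
    rw [← hss] at hcomp h1 h2
    have hflat : Module.Flat (Localization.AtPrime q)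
      (AdicCompletion (Ideal.span {s'}) (Localization.AtPrime q)) :=
      AdicCompletion.flat_of_isNoetherian _
    obtain ⟨hN, hF, hdim, z, hz, hnot⟩ := exists_avoiding_not_isNoetherian_of_localized
      h1 h2 htor hsq hdiv hKB hn he hb hs
    exact hnot (H _ hdim z hz)
  · push Not at hD
    obtain ⟨k, hk⟩ := hD
    have hpow : ∀ j : ℕ, IsNoetherian R (LinearMap.ker (LinearMap.lsmul R W (s ^ j))) := by
      intro j
      induction j with
      | zero =>
        have : Subsingleton (LinearMap.ker (LinearMap.lsmul R W (s ^ 0))) :=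
          have h0 : ∀ w : W, s ^ 0 • w = 0 → w = 0 := fun w hw => by simpa using hw
          ⟨fun x y => Subtype.ext ((h0 x.1 x.2).trans (h0 y.1 y.2).symm)⟩
        infer_instance
      | succ j ih =>
        have : LinearMap.lsmul R W (s ^ (j + 1)) =
            LinearMap.lsmul R W s ∘ₗ LinearMap.lsmul R W (s ^ j) :=
          LinearMap.ext fun x => by
            simp only [LinearMap.lsmul_apply, LinearMap.comp_apply, pow_succ', mul_smul]
        rw [this]
        exact (fgClass R).ker_comp_mem ih hK
    have h0 : ∀ x : W, s ^ k • x = 0 := by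
      intro x
      by_contra hx
      have hnt : Nontrivial (LinearMap.range (LinearMap.lsmul R W (s ^ k))) :=
        ⟨⟨s ^ k • x, x, rfl⟩, 0, fun h => hx (congrArg Subtype.val h)⟩
      obtain ⟨y, hy, hsy⟩ := exists_ne_zero_smul_eq_zero
        (B := LinearMap.range (LinearMap.lsmul R W (s ^ k))) (s := s) fun x => by
          obtain ⟨j, hj⟩ := htor x.1
          exact ⟨j, Subtype.ext hj⟩
      have : y.1 ∈ (⊥ : Submodule R W) := hk ▸ ⟨congrArg Subtype.val hsy, y.2⟩
      exact hy (Subtype.ext this)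
    have htop : LinearMap.ker (LinearMap.lsmul R W (s ^ k)) = ⊤ := eq_top_iff.2 fun x _ => h0 x
    have h1 := hpow k
    rw [htop] at h1
    exact isNoetherian_of_linearEquiv Submodule.topEquiv

lemma isNoetherian_of_genClass_mem {e : ℕ} (he : 1 ≤ e) {b : Ideal R}
    (hb : ringKrullDim (R ⧸ b) ≤ (e + 1 : ℕ)) (hW : (genClass (avoiding e b)).mem W)
    (hK : ∀ z ∈ avoiding e b, IsNoetherian R (LinearMap.ker (LinearMap.lsmul R W z)))
    (H : ∀ (R' : Type u) [CommRing R'] [Algebra R R'] [IsNoetherianRing R'] [Module.Flat R R'],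
      ringKrullDim (R' ⧸ b.map (algebraMap R R')) ≤ (e + 1 : ℕ) →
      ∀ z ∈ avoiding e (b.map (algebraMap R R')),
        IsNoetherian R' (LinearMap.ker (LinearMap.lsmul R' (R' ⊗[R] W) z))) :
    IsNoetherian R W := by
  obtain ⟨s, hs, L, hL, hsL⟩ := hW
  have : Module.Finite R L := Module.Finite.iff_fg.2 hL
  have hLn : IsNoetherian R L := inferInstance
  refine (fgClass R).of_ses (IsSES.of_submodule L) hLn (isNoetherian_of_torsion he hb hs
    (fun w => ?_) ?_ fun R' _ _ _ _ hdim z hz => ?_)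
  · obtain ⟨w, rfl⟩ := L.mkQ_surjective w
    obtain ⟨k, hk⟩ := hsL w
    exact ⟨k, by rwa [← map_smul, Submodule.mkQ_apply, Submodule.Quotient.mk_eq_zero]⟩
  · exact (fgClass R).ker_lsmul_mem_of_ses (IsSES.of_submodule L) s hLn (hK s hs)
  · have hses : IsSES (L.subtype.baseChange R') (L.mkQ.baseChange R') :=
      ⟨Module.Flat.lTensor_preserves_injective_linearMap (M := R') L.subtype L.injective_subtype,
        LinearMap.lTensor_surjective R' L.mkQ_surjective,
        Module.Flat.lTensor_exact R' (LinearMap.exact_subtype_mkQ L)⟩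
    have hL' : IsNoetherian R' (R' ⊗[R] L) := inferInstance
    exact (fgClass R').ker_lsmul_mem_of_ses hses z hL' (H R' hdim z hz)

end

end ExtCofinite

namespace ExtCofinite

section

variable {R : Type u} [CommRing R] {X Y : ModuleCat.{u} R} (P : ProjectiveResolution X)

lemma smul_extMk {n : ℕ} (r : R) (f : P.complex.X n ⟶ Y) (m : ℕ) (hm : n + 1 = m)
    (hf : P.complex.d m n ≫ f = 0) :
    r • P.extMk f m hm hf = P.extMk (r • f) m hm (by rw [Linear.comp_smul, hf, smul_zero]) := by
  rw [← Abelian.Ext.comp_mk₀_id (r • P.extMk f m hm hf), Abelian.Ext.smul_comp,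
    ← Abelian.Ext.comp_smul, ← Abelian.Ext.mk₀_smul, P.extMk_comp_mk₀]
  simp only [Linear.comp_smul, Category.comp_id]

lemma extMk_zero_eq_zero_iff (f : P.complex.X 0 ⟶ Y) (m : ℕ) (hm : 0 + 1 = m)
    (hf : P.complex.d m 0 ≫ f = 0) : P.extMk f m hm hf = 0 ↔ f = 0 := by
  refine ⟨fun h => ?_, fun h => by subst h; simp⟩
  rw [← P.extEquivCohomologyClass.apply_eq_iff_eq, P.extEquivCohomologyClass_extMk,
    P.extEquivCohomologyClass_zero, CochainComplex.HomComplex.CohomologyClass.mk_eq_zero_iff,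
    CochainComplex.HomComplex.Cocycle.toSingleMk_mem_coboundaries_iff _ _ _ _ _ 1 (by lia)] at h
  obtain ⟨g, hg⟩ := h
  rw [(P.cochainComplex.isZero_of_isStrictlyLE 0 1).eq_of_tgt (P.cochainComplex.d _ 1) 0,
    Limits.zero_comp] at hg
  exact (Preadditive.IsIso.comp_left_eq_zero _ _).1 hg.symm

/-- Cocycles of a projective resolution map to `Ext`. -/
noncomputable def cocycleToExt (n : ℕ) :
    LinearMap.ker ((P.complex.linearYonedaObj R Y).sc n).g.hom →ₗ[R] Abelian.Ext X Y n where
  toFun z := P.extMk z.1 ((ComplexShape.up ℕ).next n) (by simp) z.2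
  map_add' x y := (P.add_extMk ..).symm
  map_smul' r x := (smul_extMk P ..).symm

lemma ker_cocycleToExt (n : ℕ) : LinearMap.ker (cocycleToExt (Y := Y) P n) =
    LinearMap.range ((P.complex.linearYonedaObj R Y).sc n).moduleCatToCycles := by
  ext z
  cases n with
  | zero =>
    refine (extMk_zero_eq_zero_iff P _ _ (by simp) z.2).trans ?_
    refine ⟨fun h => ⟨0, Subtype.ext ?_⟩, fun ⟨g, hg⟩ => ?_⟩
    · rw [map_zero]
      exact h.symm
    · rw [← congrArg Subtype.val hg]
      change P.complex.d 0 ((ComplexShape.up ℕ).prev 0) ≫ g = 0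
      rw [P.complex.shape _ _ (by simp)]
      exact Limits.zero_comp (f := (show P.complex.X _ ⟶ Y from g))
  | succ n =>
    refine (P.extMk_eq_zero_iff _ _ (by simp) z.2 ((ComplexShape.up ℕ).prev (n + 1)) (by simp)).trans ?_
    exact ⟨fun ⟨g, hg⟩ => ⟨g, Subtype.ext hg⟩, fun ⟨g, hg⟩ => ⟨g, congrArg Subtype.val hg⟩⟩

lemma finite_extObj_iff (N M : ModuleCat.{u} R) (n : ℕ) :
    Module.Finite R (extObj N M n) ↔ Module.Finite R (Abelian.Ext N M n) := by
  let P := projectiveResolution N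
  let e₁ : extObj N M n ≃ₗ[R] _ :=
    (P.isoExt n M ≪≫ ((P.complex.linearYonedaObj R M).sc n).moduleCatHomologyIso).toLinearEquiv
  have hsurj : Function.Surjective (cocycleToExt (Y := M) P n) := fun α => by
    obtain ⟨f, hf, h⟩ := P.extMk_surjective α ((ComplexShape.up ℕ).next n) (by simp)
    exact ⟨⟨f, hf⟩, h⟩
  let e₂ := (Submodule.quotEquivOfEq _ _ (ker_cocycleToExt (Y := M) P n)).symm.trans
    ((cocycleToExt (Y := M) P n).quotKerEquivOfSurjective hsurj)
  exact Module.Finite.equiv_iff (e₁.trans e₂)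

end

end ExtCofinite

namespace ExtCofinite

open TensorProduct

section

variable {R : Type u} [CommRing R] {A B C A' B' C' : Type u} [AddCommGroup A] [Module R A]
  [AddCommGroup B] [Module R B] [AddCommGroup C] [Module R C] [AddCommGroup A'] [Module R A']
  [AddCommGroup B'] [Module R B'] [AddCommGroup C'] [Module R C']

lemma nonempty_equiv_of_right_exact {f : A →ₗ[R] B} {g : B →ₗ[R] C} {f' : A' →ₗ[R] B'}
    {g' : B' →ₗ[R] C'} (h : Function.Exact f g) (hg : Function.Surjective g)
    (h' : Function.Exact f' g') (hg' : Function.Surjective g') (eA : A ≃ₗ[R] A') (eB : B ≃ₗ[R] B')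
    (hc : ∀ a, eB (f a) = f' (eA a)) : Nonempty (C ≃ₗ[R] C') := by
  have hk : (LinearMap.ker g).map (eB : B →ₗ[R] B') = LinearMap.ker g' := by
    rw [h.linearMap_ker_eq, h'.linearMap_ker_eq, ← LinearMap.range_comp,
      show (eB : B →ₗ[R] B') ∘ₗ f = f' ∘ₗ eA from LinearMap.ext hc, LinearMap.range_comp,
      LinearEquiv.range, Submodule.map_top]
  exact ⟨(g.quotKerEquivOfSurjective hg).symm ≪≫ₗ
    Submodule.Quotient.equiv _ _ eB hk ≪≫ₗ g'.quotKerEquivOfSurjective hg'⟩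

lemma E.conδ_bijective_of_projective {f : A →ₗ[R] B} {g : B →ₗ[R] C} (h : IsSES f g)
    [Module.Projective R B] (M : Type u) [AddCommGroup M] [Module R M] (i : ℕ) :
    Function.Bijective (E.conδ h M (i + 1)) := by
  have h1 : Subsingleton (E R B M (i + 1)) := E.subsingleton_of_projective i
  have h2 : Subsingleton (E R B M (i + 1 + 1)) := E.subsingleton_of_projective (i + 1)
  refine ⟨?_, fun y => ((E.con_exact₃ h M (i + 1)) y).1 (Subsingleton.elim _ _)⟩
  rw [injective_iff_map_eq_zero]
  intro x hx
  obtain ⟨y, rfl⟩ := ((E.con_exact₁ h M (i + 1)) x).1 hx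
  rw [Subsingleton.elim y 0, map_zero]

lemma E.conδ_surjective_of_projective {f : A →ₗ[R] B} {g : B →ₗ[R] C} (h : IsSES f g)
    [Module.Projective R B] (M : Type u) [AddCommGroup M] [Module R M] :
    Function.Surjective (E.conδ h M 0) := by
  have h1 : Subsingleton (E R B M (0 + 1)) := E.subsingleton_of_projective 0
  exact fun y => ((E.con_exact₃ h M 0) y).1 (Subsingleton.elim _ _)

end

section

variable {R : Type u} [CommRing R] (R' : Type u) [CommRing R'] [Algebra R R']
  [Module.Flat R R']

lemma IsSES.baseChange {A B C : Type u} [AddCommGroup A] [Module R A]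
    [AddCommGroup B] [Module R B] [AddCommGroup C] [Module R C] {f : A →ₗ[R] B} {g : B →ₗ[R] C}
    (h : IsSES f g) : IsSES (f.baseChange R') (g.baseChange R') :=
  ⟨Module.Flat.lTensor_preserves_injective_linearMap (M := R') f h.inj,
    LinearMap.lTensor_surjective R' h.surj, Module.Flat.lTensor_exact R' h.exact⟩

variable (M : Type u) [AddCommGroup M] [Module R M]

/-- Flat base change for `Ext^0`. -/
noncomputable def E.zeroBaseChange (N : Type u) [AddCommGroup N] [Module R N]
    [Module.FinitePresentation R N] :
    R' ⊗[R] E R N M 0 ≃ₗ[R'] E R' (R' ⊗[R] N) (R' ⊗[R] M) 0 :=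
  (E.zeroEquiv N M).baseChange R R' _ _ ≪≫ₗ
    (Module.FinitePresentation.isBaseChange_map R N M R').equiv ≪≫ₗ
    (E.zeroEquiv (R' ⊗[R] N) (R' ⊗[R] M)).symm

lemma E.zeroBaseChange_con {A B : Type u} [AddCommGroup A] [Module R A]
    [AddCommGroup B] [Module R B] [Module.FinitePresentation R A] [Module.FinitePresentation R B]
    (f : A →ₗ[R] B) (x : R' ⊗[R] E R B M 0) :
    E.zeroBaseChange R' M A ((E.con f M 0).baseChange R' x) =
      E.con (f.baseChange R') (R' ⊗[R] M) 0 (E.zeroBaseChange R' M B x) := by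
  induction x with
  | zero => simp only [map_zero]
  | add x y hx hy => simp only [map_add, hx, hy]
  | tmul r x =>
    apply (E.zeroEquiv _ _).injective
    rw [E.zeroEquiv_con]
    simp only [E.zeroBaseChange, LinearEquiv.trans_apply, LinearEquiv.apply_symm_apply,
      LinearMap.baseChange_tmul, LinearEquiv.baseChange_tmul, IsBaseChange.equiv_tmul,
      E.zeroEquiv_con]
    ext a
    simp [LinearMap.baseChangeHom]

lemma E.nonempty_baseChange_equiv [IsNoetherianRing R] (i : ℕ) : ∀ (N : Type u) [AddCommGroup N] [Module R N]
    [Module.Finite R N],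
    Nonempty (R' ⊗[R] E R N M i ≃ₗ[R'] E R' (R' ⊗[R] N) (R' ⊗[R] M) i) := by
  induction i with
  | zero =>
    intro N _ _ _
    have : Module.FinitePresentation R N := Module.finitePresentation_of_finite R N
    exact ⟨E.zeroBaseChange R' M N⟩
  | succ i ih =>
    intro N _ _ _
    obtain ⟨n, p, hp⟩ := Module.Finite.exists_fin' R N
    have h := IsSES.of_surjective hp
    have hproj : Module.Projective R' (R' ⊗[R] (Fin n → R)) := inferInstance
    have : Module.FinitePresentation R (LinearMap.ker p) :=
      Module.finitePresentation_of_finite R _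
    cases i with
    | zero =>
      exact nonempty_equiv_of_right_exact (f := (E.con (LinearMap.ker p).subtype M 0).baseChange R')
        (g := (E.conδ h M 0).baseChange R')
        (lTensor_exact R' (E.con_exact₁ h M 0) (E.conδ_surjective_of_projective h M))
        (LinearMap.lTensor_surjective R' (E.conδ_surjective_of_projective h M))
        (E.con_exact₁ (h.baseChange R') (R' ⊗[R] M) 0)
        (E.conδ_surjective_of_projective (h.baseChange R') (R' ⊗[R] M))
        (E.zeroBaseChange R' M _) (E.zeroBaseChange R' M _) (E.zeroBaseChange_con R' M _)
    | succ i =>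
      obtain ⟨e⟩ := ih (LinearMap.ker p)
      exact ⟨((LinearEquiv.ofBijective _ (E.conδ_bijective_of_projective h M i)).symm.baseChange
        R R' _ _) ≪≫ₗ e ≪≫ₗ LinearEquiv.ofBijective _
          (E.conδ_bijective_of_projective (h.baseChange R') (R' ⊗[R] M) i)⟩

end

end ExtCofinite

namespace ExtCofinite

open TensorProduct

section

variable {R : Type u} [CommRing R]

/-- `Ext` in the first variable along an isomorphism. -/
noncomputable def E.conEquiv {A B : Type u} [AddCommGroup A] [Module R A] [AddCommGroup B]
    [Module R B] (e : A ≃ₗ[R] B) (M : Type u) [AddCommGroup M] [Module R M] (i : ℕ) :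
    E R B M i ≃ₗ[R] E R A M i :=
  LinearEquiv.ofLinearMap (E.con e.toLinearMap M i) (E.con e.symm.toLinearMap M i)
    (LinearMap.ext fun x => by
      rw [LinearMap.comp_apply, E.con_comp, LinearEquiv.comp_coe, LinearEquiv.self_trans_symm]
      exact E.con_id i x)
    (LinearMap.ext fun x => by
      rw [LinearMap.comp_apply, E.con_comp, LinearEquiv.comp_coe, LinearEquiv.symm_trans_self]
      exact E.con_id i x)

lemma E.nonempty_quotient_baseChange_equiv [IsNoetherianRing R] (R' : Type u) [CommRing R'] [Algebra R R']
    [Module.Flat R R'] (M : Type u) [AddCommGroup M] [Module R M] (b : Ideal R) (i : ℕ) :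
    Nonempty (R' ⊗[R] E R (R ⧸ b) M i ≃ₗ[R']
      E R' (R' ⧸ b.map (algebraMap R R')) (R' ⊗[R] M) i) := by
  obtain ⟨e⟩ := E.nonempty_baseChange_equiv (R := R) R' M i (R ⧸ b)
  exact ⟨e ≪≫ₗ E.conEquiv (Ideal.qoutMapEquivTensorQout R' (I := b)) (R' ⊗[R] M) i⟩

lemma IsPowTorsion.baseChange {a : Ideal R} {M : Type u} [AddCommGroup M] [Module R M]
    (h : IsPowTorsion a M) (R' : Type u) [CommRing R'] [Algebra R R'] :
    IsPowTorsion (a.map (algebraMap R R')) (R' ⊗[R] M) := by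
  intro x
  induction x with
  | zero => exact ⟨0, fun _ _ => smul_zero _⟩
  | add x y hx hy =>
    obtain ⟨n, hn⟩ := hx
    obtain ⟨m, hm⟩ := hy
    refine ⟨max n m, fun c hc => ?_⟩
    rw [smul_add, hn c (Ideal.pow_le_pow_right (le_max_left n m) hc),
      hm c (Ideal.pow_le_pow_right (le_max_right n m) hc), add_zero]
  | tmul r x =>
    obtain ⟨n, hn⟩ := h x
    refine ⟨n, fun c hc => ?_⟩
    rw [← Ideal.map_pow] at hc
    have hle : (a ^ n).map (algebraMap R R') ≤
        LinearMap.ker (LinearMap.toSpanSingleton R' (R' ⊗[R] M) (r ⊗ₜ[R] x)) := by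
      refine Ideal.map_le_iff_le_comap.2 fun y hy => ?_
      change algebraMap R R' y • (r ⊗ₜ[R] x) = 0
      rw [algebraMap_smul, ← TensorProduct.tmul_smul, hn y hy, TensorProduct.tmul_zero]
    exact hle hc

end

lemma FiniteExtBound.succ {e : ℕ} (he : 1 ≤ e) (H : FiniteExtBound.{u} e) :
    FiniteExtBound.{u} (e + 1) := by
  intro R _ _ a b l hb hdim M _ _ hM h i
  refine isNoetherian_of_genClass_mem he hdim (ext_genClass_of_fg hb hM h i)
    (fun z hz => H.ker_lsmul hb hdim hM h hz i) fun R' _ _ _ _ hdim' z hz => ?_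
  obtain ⟨eq⟩ := E.nonempty_quotient_baseChange_equiv R' M b i
  refine isNoetherian_ker_of_injective eq.toLinearMap eq.injective z
    (H.ker_lsmul (a := a.map (algebraMap R R')) (l := l.map (algebraMap R R')) ?_ hdim'
      (hM.baseChange R') (fun j hj => ?_) hz i)
  · rw [hb, Ideal.map_sup, Ideal.map_span]
    congr 2
    ext x
    simp
  · obtain ⟨ej⟩ := E.nonempty_quotient_baseChange_equiv R' M b j
    have hj' : IsNoetherian R (E R (R ⧸ b) M j) := h j (by simpa using hj)
    have : IsNoetherian R' (R' ⊗[R] E R (R ⧸ b) M j) := inferInstance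
    exact isNoetherian_of_linearEquiv ej

lemma finiteExtBound {e : ℕ} (he : 1 ≤ e) : FiniteExtBound.{u} e := by
  induction e, he using Nat.le_induction with
  | base => exact finiteExtBound_one
  | succ e he ih => exact ih.succ he

lemma ext_isNoetherian_of_le {R : Type u} [CommRing R] [IsNoetherianRing R] {b : Ideal R} {d : ℕ}
    (hdim : ringKrullDim (R ⧸ b) ≤ (d : ℕ)) {M : Type u} [AddCommGroup M] [Module R M]
    (hM : IsPowTorsion b M) (h : ∀ i ≤ d, IsNoetherian R (E R (R ⧸ b) M i)) (i : ℕ) :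
    IsNoetherian R (E R (R ⧸ b) M i) := by
  rcases Nat.eq_zero_or_pos d with rfl | hd
  · have h0 := ((fgClass R).ext_zero_iff b).1 (h 0 le_rfl)
    exact (ext_finLength hM (finLength_of_ringKrullDim_le_zero hdim h0 fun a ha x =>
      Subtype.ext (mem_torsionByIdeal.1 x.2 a ha)) i).1
  · exact finiteExtBound hd R b b [] (by simp) hdim M hM h i

lemma support_subset_zeroLocus {R : Type u} [CommRing R] {b : Ideal R} {M : Type u}
    [AddCommGroup M] [Module R M] (hM : IsPowTorsion b M) :
    Module.support R M ⊆ PrimeSpectrum.zeroLocus (b : Set R) := by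
  intro p hp a ha
  obtain ⟨m, hm⟩ := Module.mem_support_iff_exists_annihilator.1 hp
  obtain ⟨n, hn⟩ := hM m
  refine p.2.mem_of_pow_mem n (hm ?_)
  rw [Submodule.mem_annihilator_span_singleton]
  exact hn _ (Ideal.pow_mem_pow ha n)

end ExtCofinite

/-- Yang–Shen, Lemma 3.6: let `𝔞` be a proper ideal of a commutative noetherian ring `R` with
`dim R/𝔞 = d ≥ 0`. An `𝔞`-torsion `R`-module `M` is `𝔞`-cofinite if and only if
`Ext^i_R(R/𝔞, M)` is finitely generated for all `i ≤ d`. -/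
theorem isCofinite_iff_of_dim_quotient
    {R : Type u} [CommRing R] [IsNoetherianRing R]
    (𝔞 : Ideal R) (ha : 𝔞 ≠ ⊤) (d : ℕ) (hdim : ringKrullDim (R ⧸ 𝔞) = d)
    (M : ModuleCat.{u} R) (htor : IsTorsionIdeal 𝔞 M) :
    IsCofinite 𝔞 M ↔ ∀ i : ℕ, i ≤ d → Module.Finite R (extIdeal 𝔞 i M) := by
  refine ⟨fun h i _ => h.2 i, fun h => ⟨ExtCofinite.support_subset_zeroLocus htor, fun i => ?_⟩⟩
  have hiff (i : ℕ) : Module.Finite R (extIdeal 𝔞 i M) ↔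
      IsNoetherian R (ExtCofinite.E R (R ⧸ 𝔞) M i) :=
    (ExtCofinite.finite_extObj_iff _ _ _).trans
      ⟨fun _ => isNoetherian_of_isNoetherianRing_of_finite R _, fun _ => inferInstance⟩
  exact (hiff i).2 (ExtCofinite.ext_isNoetherian_of_le hdim.le htor
    (fun j hj => (hiff j).1 (h j hj)) i)
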